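/- Let 𝓜 be a regular sequence and Ω ⊆ ℝ^d × ℝ^n an open neighborhood of the origin. Let u ∈ C²(Ω,ℂ) be a solution of ∂u/∂t_j = f_j(x,t,u,u_x) for 1 ≤ j ≤ n, where u_x = (∂u/∂x_1,…,∂u/∂x_d), and each f_j : Ω × ℂ × ℂ^d → ℂ is holomorphic in (ζ_0,ζ) ∈ ℂ × ℂ^d for each fixed (x,t), and of class C^𝓜 with respect to (x,t): for every compact K ⊆ Ω × ℂ × ℂ^d there is C > 0 with |∂_{(x,t)}^α f_j| ≤ C^{|α|+1} M_{|α|} on K for every α ∈ ℕ^{d+n}. Let (p_0,(ξ_0,τ_0)) with p_0 = (x_0,t_0) ∈ Ω and (ξ_0,τ_0) ∈ (ℝ^d × ℝ^n) ∖ {0}, and suppose there exists j ∈ {1,…,n} with τ_{0,j} ≠ Σ_{k=1}^d (∂f_j/∂ζ_k)(x_0,t_0,u(p_0),u_x(p_0))·ξ_{0,k} (as complex numbers, i.e. (p_0,(ξ_0,τ_0)) is not characteristic for the linearized operators L_j^u = ∂/∂t_j − Σ_k (∂f_j/∂ζ_k)(x,t,u,u_x) ∂/∂x_k). Then u is 𝓜-microlocally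 regular at (p_0,(ξ_0,τ_0)): there exist χ ∈ C_c^∞(Ω) with χ ≡ 1 on a neighborhood of p_0, an open neighborhood U ⋐ Ω of p_0, an open cone Γ ⊆ ℝ^{d+n} ∖ {0} containing (ξ_0,τ_0), and A > 0 such that |ℱ[χu]((x,t),(ξ,τ))| ≤ A^{k+1} M_k / ‖(ξ,τ)‖^k for all (x,t) ∈ U, (ξ,τ) ∈ Γ and k ∈ ℕ. -/

import Mathlib

open scoped BigOperators

/-- `m_k = M_k / k!` -/
noncomputable def DCm (M : ℕ → ℝ) (k : ℕ) : ℝ := M k / (Nat.factorial k)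

/-- A sequence `M` of non-negative reals is regular if, with `m_k = M_k/k!`:
(a) `m_0 = m_1 = 1`; (b) `m_k² ≤ m_{k-1} m_{k+1}` for `k ≥ 1`;
(c) `sup_{k≥1} (m_{k+1}/m_k)^{1/k} < ∞`; (d) `m_k^{1/k} → ∞`. -/
def DCRegular (M : ℕ → ℝ) : Prop :=
  (∀ k, 0 ≤ M k) ∧
  DCm M 0 = 1 ∧ DCm M 1 = 1 ∧
  (∀ k : ℕ, 1 ≤ k → (DCm M k) ^ 2 ≤ DCm M (k - 1) * DCm M (k + 1)) ∧
  (∃ B : ℝ, ∀ k : ℕ, 1 ≤ k → (DCm M (k + 1) / DCm M k) ^ ((1 : ℝ) / k) ≤ B) ∧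
  Filter.Tendsto (fun k : ℕ => (DCm M k) ^ ((1 : ℝ) / k)) Filter.atTop Filter.atTop

/-- The space `ℝ^d × ℝ^n` of variables `(x,t)`. -/
abbrev PSp (d n : ℕ) := (Fin d → ℝ) × (Fin n → ℝ)

/-- The Euclidean dot product on `ℝ^d × ℝ^n ≅ ℝ^{d+n}`. -/
noncomputable def dotP {d n : ℕ} (p q : PSp d n) : ℝ :=
  (∑ i, p.1 i * q.1 i) + ∑ j, p.2 j * q.2 j

/-- The Euclidean norm on `ℝ^d × ℝ^n ≅ ℝ^{d+n}`. -/
noncomputable def enP {d n : ℕ} (p : PSp d n) : ℝ :=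
  Real.sqrt ((∑ i, (p.1 i) ^ 2) + ∑ j, (p.2 j) ^ 2)

/-- The F.B.I. transform on `ℝ^{d+n}`. -/
noncomputable def FBIP {d n : ℕ} (g : PSp d n → ℂ) (p w : PSp d n) : ℂ :=
  ∫ q : PSp d n,
    Complex.exp (Complex.I * ((dotP (p - q) w : ℝ) : ℂ) -
      ((enP w * (enP (p - q)) ^ 2 : ℝ) : ℂ)) * g q

/-- Iterated partial derivatives `∂_{(x,t)}^{(α,β)} g` of functions on `ℝ^d × ℝ^n`. -/
noncomputable def PDxt {d n : ℕ} (α : Fin d → ℕ) (β : Fin n → ℕ)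
    (g : PSp d n → ℂ) : PSp d n → ℂ :=
  (((List.ofFn (fun i : Fin d =>
      (fun (h : PSp d n → ℂ) (p : PSp d n) =>
        fderiv ℝ h p ((Pi.single i (1 : ℝ), 0) : PSp d n))^[α i])) ++
    (List.ofFn (fun j : Fin n =>
      (fun (h : PSp d n → ℂ) (p : PSp d n) =>
        fderiv ℝ h p ((0, Pi.single j (1 : ℝ)) : PSp d n))^[β j]))).foldr (· ∘ ·) id) g

/-!
Since `u` is only `C²`, the coefficients of the linearized operator `L` are only `C¹`, so `L` and
its transpose cannot be iterated on functions of `(x, t)`. They can be lifted instead: with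
`v = (u, u_x)`, the equation provides a vector field `X` on the space of first jets `(x, t, ζ)`,
with coefficients in the Denjoy-Carleman class, such that `L [F (q, v q)] = (X F) (q, v q)`.

The F.B.I. transform of `χ u` is an integral of `e ^ Φ` against `χ` times a form
`∑ F_J(q, v) dy_J`, where the `dy_J` are Jacobian determinants of the coordinate functions of the
graph of `v`. Since `L` is tangent to this graph, the Lie derivative along `X` maps such forms to
such forms, and for `C¹` functions the integration by parts is the null Lagrangian identity
`∫ det (∂ h_i / ∂ e_j) = 0`, proved by mollification. As `L Φ = |w| ψ` with `ψ ≠ 0` at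
noncharacteristic points, `k` integrations by parts gain `|w| ^ (-k)`, at the price of `k`
derivatives, hence of `A ^ (k + 1) * M k`. The terms in which `L` hits the cutoff `χ` live away
from the base point, where `e ^ Φ` is exponentially small.
-/

open scoped ContDiff Topology

open MeasureTheory

/-- A weight sequence, normalized by `M 0 = M 1 = 1`: the quotients `M k / k!` are log-superadditive
and `M` is stable under a shift of the index (derivation closedness). These are the only properties
of a Denjoy-Carleman weight that enter the estimates. -/
structure IsWeightSequence (M : ℕ → ℝ) : Prop where
  zero : M 0 = 1
  one : M 1 = 1
  choose_mul_le : ∀ i j, ((i + j).choose i : ℝ) * (M i * M j) ≤ M (i + j)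
  exists_succ_le : ∃ H : ℝ, 1 ≤ H ∧ ∀ k, M (k + 1) ≤ H ^ k * M k

theorem eq_factorial_mul_DCm (M : ℕ → ℝ) (k : ℕ) : M k = k.factorial * DCm M k := by
  rw [DCm, mul_div_cancel₀ _ (by positivity)]

namespace DCRegular

variable {M : ℕ → ℝ}

theorem one_le_and_le_succ (h : DCRegular M) (k : ℕ) : 1 ≤ DCm M k ∧ DCm M k ≤ DCm M (k + 1) := by
  obtain ⟨-, h0, h1, hlog, -⟩ := h
  induction k with
  | zero => simp [h0, h1]
  | succ k ih =>
    have hone : 1 ≤ DCm M (k + 1) := ih.1.trans ih.2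
    have hsq : DCm M (k + 1) ^ 2 ≤ DCm M k * DCm M (k + 1 + 1) := hlog (k + 1) (by omega)
    refine ⟨hone, ?_⟩
    by_contra! hlt
    nlinarith [mul_lt_mul_of_pos_left hlt (show 0 < DCm M k by linarith)]

theorem pos (h : DCRegular M) (k : ℕ) : 0 < DCm M k :=
  one_pos.trans_le (h.one_le_and_le_succ k).1

theorem succ_mul_le (h : DCRegular M) (i j : ℕ) :
    DCm M (j + 1) * DCm M (i + j) ≤ DCm M j * DCm M (i + j + 1) := by
  obtain ⟨-, -, -, hlog, -⟩ := id h
  induction i with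
  | zero => simp [mul_comm]
  | succ i ih =>
    have hsq : DCm M (i + j + 1) ^ 2 ≤ DCm M (i + j) * DCm M (i + j + 1 + 1) :=
      hlog (i + j + 1) (by omega)
    rw [show i + 1 + j = i + j + 1 by ring]
    refine le_of_mul_le_mul_left ?_ (h.pos (i + j))
    calc DCm M (i + j) * (DCm M (j + 1) * DCm M (i + j + 1))
        = DCm M (j + 1) * DCm M (i + j) * DCm M (i + j + 1) := by ring
      _ ≤ DCm M j * DCm M (i + j + 1) * DCm M (i + j + 1) :=
        mul_le_mul_of_nonneg_right ih (h.pos _).le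
      _ = DCm M j * DCm M (i + j + 1) ^ 2 := by ring
      _ ≤ DCm M j * (DCm M (i + j) * DCm M (i + j + 1 + 1)) :=
        mul_le_mul_of_nonneg_left hsq (h.pos _).le
      _ = DCm M (i + j) * (DCm M j * DCm M (i + j + 1 + 1)) := by ring

theorem mul_le_add (h : DCRegular M) (i j : ℕ) : DCm M i * DCm M j ≤ DCm M (i + j) := by
  induction j with
  | zero => simp [h.2.1]
  | succ j ih =>
    refine le_of_mul_le_mul_left ?_ (h.pos j)
    calc DCm M j * (DCm M i * DCm M (j + 1))
        = DCm M (j + 1) * (DCm M i * DCm M j) := by ring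
      _ ≤ DCm M (j + 1) * DCm M (i + j) := mul_le_mul_of_nonneg_left ih (h.pos _).le
      _ ≤ DCm M j * DCm M (i + j + 1) := h.succ_mul_le i j

theorem exists_DCm_succ_le (h : DCRegular M) :
    ∃ B : ℝ, 1 ≤ B ∧ ∀ k, DCm M (k + 1) ≤ B ^ k * DCm M k := by
  obtain ⟨-, h0, h1, -, ⟨B, hB⟩, -⟩ := id h
  refine ⟨max B 1, le_max_right _ _, fun k => ?_⟩
  rcases Nat.eq_zero_or_pos k with rfl | hk
  · simp [h0, h1]
  have hratio : 0 ≤ DCm M (k + 1) / DCm M k := (div_pos (h.pos _) (h.pos _)).le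
  rw [← div_le_iff₀ (h.pos k)]
  calc DCm M (k + 1) / DCm M k = ((DCm M (k + 1) / DCm M k) ^ ((1 : ℝ) / k)) ^ k := by
        rw [one_div, Real.rpow_inv_natCast_pow hratio hk.ne']
    _ ≤ max B 1 ^ k := by
        gcongr
        exact (hB k hk).trans (le_max_left _ _)

theorem isWeightSequence (h : DCRegular M) : IsWeightSequence M where
  zero := by rw [eq_factorial_mul_DCm M, h.2.1]; simp
  one := by rw [eq_factorial_mul_DCm M, h.2.2.1]; simp
  choose_mul_le i j := by
    have hfact : ((i + j).choose i : ℝ) * i.factorial * j.factorial = (i + j).factorial := by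
      have h := Nat.choose_mul_factorial_mul_factorial (Nat.le_add_right i j)
      rw [Nat.add_sub_cancel_left] at h
      exact_mod_cast h
    rw [eq_factorial_mul_DCm M i, eq_factorial_mul_DCm M j, eq_factorial_mul_DCm M (i + j)]
    calc ((i + j).choose i : ℝ) * (i.factorial * DCm M i * (j.factorial * DCm M j))
        = ((i + j).choose i : ℝ) * i.factorial * j.factorial * (DCm M i * DCm M j) := by ring
      _ = (i + j).factorial * (DCm M i * DCm M j) := by rw [hfact]
      _ ≤ (i + j).factorial * DCm M (i + j) := by gcongr; exact h.mul_le_add i j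
  exists_succ_le := by
    obtain ⟨B, hB, hsucc⟩ := h.exists_DCm_succ_le
    refine ⟨2 * B, by linarith, fun k => ?_⟩
    have hk : (k : ℝ) + 1 ≤ 2 ^ k := by exact_mod_cast Nat.lt_two_pow_self
    have hpos := (h.pos k).le
    rw [eq_factorial_mul_DCm M (k + 1), eq_factorial_mul_DCm M k]
    calc ((k + 1).factorial : ℝ) * DCm M (k + 1)
        ≤ ((k + 1).factorial : ℝ) * (B ^ k * DCm M k) := by gcongr; exact hsucc k
      _ = ((k : ℝ) + 1) * (B ^ k * (k.factorial * DCm M k)) := by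
        rw [Nat.factorial_succ]; push_cast; ring
      _ ≤ 2 ^ k * (B ^ k * (k.factorial * DCm M k)) := by gcongr
      _ = (2 * B) ^ k * (k.factorial * DCm M k) := by rw [mul_pow]; ring

end DCRegular

namespace IsWeightSequence

variable {M : ℕ → ℝ}

theorem factorial_le (hM : IsWeightSequence M) (k : ℕ) : (k.factorial : ℝ) ≤ M k := by
  induction k with
  | zero => simp [hM.zero]
  | succ k ih =>
    have h := hM.choose_mul_le k 1
    rw [hM.one, Nat.choose_symm_add, Nat.choose_one_right, mul_one] at h
    rw [Nat.factorial_succ, Nat.cast_mul]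
    exact (mul_le_mul_of_nonneg_left ih (by positivity)).trans h

theorem one_le (hM : IsWeightSequence M) (k : ℕ) : 1 ≤ M k :=
  (Nat.one_le_cast.2 k.factorial_pos).trans (hM.factorial_le k)

theorem pos (hM : IsWeightSequence M) (k : ℕ) : 0 < M k :=
  one_pos.trans_le (hM.one_le k)

theorem mul_le_add (hM : IsWeightSequence M) (i j : ℕ) : M i * M j ≤ M (i + j) := by
  refine le_trans ?_ (hM.choose_mul_le i j)
  refine le_mul_of_one_le_left (mul_pos (hM.pos i) (hM.pos j)).le ?_
  exact_mod_cast Nat.choose_pos (Nat.le_add_right i j)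

theorem mul_factorial_le (hM : IsWeightSequence M) (i j : ℕ) : M i * j.factorial ≤ M (i + j) :=
  (mul_le_mul_of_nonneg_left (hM.factorial_le j) (hM.pos i).le).trans (hM.mul_le_add i j)

theorem monotone (hM : IsWeightSequence M) : Monotone M := by
  refine monotone_nat_of_le_succ fun k => ?_
  simpa [hM.one] using hM.mul_le_add k 1

theorem choose_mul_shift_le (hM : IsWeightSequence M) (i j k : ℕ) :
    ((i + j).choose i : ℝ) * (M i * M (j + k)) ≤ M (i + j + k) := by
  rw [add_assoc]
  refine le_trans ?_ (hM.choose_mul_le i (j + k))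
  have hpos := mul_pos (hM.pos i) (hM.pos (j + k))
  gcongr
  omega

end IsWeightSequence

section WordDerivatives

variable {E G : Type*} [NormedAddCommGroup E] [NormedSpace ℝ E]
  [NormedAddCommGroup G] [NormedSpace ℝ G] {Y : Type*} {e : Y → E} {O : Set E}

/-- The function `y ↦ ∂F/∂v (y)`, as an operator on functions, so that it can be iterated. -/
noncomputable def dirDeriv (v : E) (F : E → G) : E → G := fun y => fderiv ℝ F y v

/-- The iterated derivative of `F` along the directions `e m`, `m` running through the word `w`;
the last letter of `w` acts first. -/
noncomputable def wordDeriv (e : Y → E) (w : List Y) (F : E → G) : E → G :=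
  w.foldr (fun m => dirDeriv (e m)) F

@[simp]
theorem wordDeriv_nil (e : Y → E) (F : E → G) : wordDeriv e [] F = F := rfl

@[simp]
theorem wordDeriv_cons (e : Y → E) (m : Y) (w : List Y) (F : E → G) :
    wordDeriv e (m :: w) F = dirDeriv (e m) (wordDeriv e w F) := rfl

theorem wordDeriv_append (e : Y → E) (w w' : List Y) (F : E → G) :
    wordDeriv e (w ++ w') F = wordDeriv e w (wordDeriv e w' F) :=
  List.foldr_append

theorem wordDeriv_concat (e : Y → E) (w : List Y) (m : Y) (F : E → G) :
    wordDeriv e (w ++ [m]) F = wordDeriv e w (dirDeriv (e m) F) :=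
  wordDeriv_append e w [m] F

theorem dirDeriv_eqOn (hO : IsOpen O) {F F' : E → G} (h : Set.EqOn F F' O) (v : E) :
    Set.EqOn (dirDeriv v F) (dirDeriv v F') O := fun y hy => by
  rw [dirDeriv, dirDeriv, (Filter.eventuallyEq_of_mem (hO.mem_nhds hy) h).fderiv_eq]

theorem wordDeriv_eqOn (hO : IsOpen O) {F F' : E → G} (h : Set.EqOn F F' O) (w : List Y) :
    Set.EqOn (wordDeriv e w F) (wordDeriv e w F') O := by
  induction w with
  | nil => exact h
  | cons m w ih => exact dirDeriv_eqOn hO ih (e m)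

theorem wordDeriv_const {w : List Y} (hw : w ≠ []) (c : G) :
    wordDeriv e w (fun _ => c) = fun _ => 0 := by
  induction w with
  | nil => exact absurd rfl hw
  | cons m w ih =>
    rw [wordDeriv_cons]
    rcases eq_or_ne w [] with rfl | hw'
    · funext y; simp [dirDeriv]
    · rw [ih hw']; funext y; simp [dirDeriv]

theorem contDiffOn_dirDeriv (hO : IsOpen O) {F : E → G} (hF : ContDiffOn ℝ ∞ F O) (v : E) :
    ContDiffOn ℝ ∞ (dirDeriv v F) O :=
  (hF.fderiv_of_isOpen (m := ∞) hO (by simp)).clm_apply contDiffOn_const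

theorem contDiffOn_wordDeriv (hO : IsOpen O) {F : E → G} (hF : ContDiffOn ℝ ∞ F O)
    (w : List Y) : ContDiffOn ℝ ∞ (wordDeriv e w F) O := by
  induction w with
  | nil => exact hF
  | cons m w ih => exact contDiffOn_dirDeriv hO ih (e m)

theorem differentiableAt_of_contDiffOn {k : WithTop ℕ∞} (hO : IsOpen O) (hk : k ≠ 0) {F : E → G}
    (hF : ContDiffOn ℝ k F O) {y : E} (hy : y ∈ O) : DifferentiableAt ℝ F y :=
  (hF.contDiffAt (hO.mem_nhds hy)).differentiableAt hk

theorem dirDeriv_add (hO : IsOpen O) {F F' : E → G} (hF : ContDiffOn ℝ ∞ F O)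
    (hF' : ContDiffOn ℝ ∞ F' O) (v : E) :
    Set.EqOn (dirDeriv v (fun y => F y + F' y)) (fun y => dirDeriv v F y + dirDeriv v F' y) O :=
  fun y hy => by
    simp only [dirDeriv]
    rw [fderiv_fun_add (differentiableAt_of_contDiffOn hO (by simp) hF hy)
      (differentiableAt_of_contDiffOn hO (by simp) hF' hy), add_apply]

theorem wordDeriv_add (hO : IsOpen O) {F F' : E → G} (hF : ContDiffOn ℝ ∞ F O)
    (hF' : ContDiffOn ℝ ∞ F' O) (w : List Y) :
    Set.EqOn (wordDeriv e w (fun y => F y + F' y))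
      (fun y => wordDeriv e w F y + wordDeriv e w F' y) O := by
  induction w with
  | nil => exact fun y _ => rfl
  | cons m w ih =>
    exact (dirDeriv_eqOn hO ih (e m)).trans
      (dirDeriv_add hO (contDiffOn_wordDeriv hO hF w) (contDiffOn_wordDeriv hO hF' w) (e m))

theorem fderiv_fderiv_apply {F : E → G} {y : E} (hF : ContDiffAt ℝ 2 F y) (v w : E) :
    fderiv ℝ (fun x => fderiv ℝ F x v) y w = fderiv ℝ (fderiv ℝ F) y w v := by
  have hd : DifferentiableAt ℝ (fderiv ℝ F) y :=
    (hF.fderiv_right (m := 1) (by norm_num)).differentiableAt (by simp)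
  rw [fderiv_clm_apply hd (differentiableAt_const v)]
  simp

theorem fderiv_fderiv_apply_comm {F : E → G} {y : E} (hF : ContDiffAt ℝ 2 F y) (v w : E) :
    fderiv ℝ (fun x => fderiv ℝ F x v) y w = fderiv ℝ (fun x => fderiv ℝ F x w) y v := by
  have hsymm : IsSymmSndFDerivAt ℝ F y := hF.isSymmSndFDerivAt (by simp)
  rw [fderiv_fderiv_apply hF, fderiv_fderiv_apply hF, hsymm w v]

theorem dirDeriv_comm (hO : IsOpen O) {F : E → G} (hF : ContDiffOn ℝ 2 F O) (v w : E) :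
    Set.EqOn (dirDeriv v (dirDeriv w F)) (dirDeriv w (dirDeriv v F)) O := fun _ hy =>
  fderiv_fderiv_apply_comm (hF.contDiffAt (hO.mem_nhds hy)) w v

theorem wordDeriv_perm (hO : IsOpen O) {F : E → G} (hF : ContDiffOn ℝ ∞ F O) {w w' : List Y}
    (h : w.Perm w') : Set.EqOn (wordDeriv e w F) (wordDeriv e w' F) O := by
  induction h with
  | nil => exact fun _ _ => rfl
  | cons m _ ih => exact dirDeriv_eqOn hO ih (e m)
  | swap m m' w =>
    exact dirDeriv_comm hO ((contDiffOn_wordDeriv hO hF w).of_le (WithTop.coe_le_coe.2 le_top)) _ _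
  | trans _ _ ih ih' => exact ih.trans ih'

end WordDerivatives

section Leibniz

open Finset.HasAntidiagonal (antidiagonal mem_antidiagonal)

variable {E 𝔸 : Type*} [NormedAddCommGroup E] [NormedSpace ℝ E]
  [NormedCommRing 𝔸] [NormedAlgebra ℝ 𝔸] {Y : Type*} {e : Y → E} {O : Set E}

theorem dirDeriv_mul (hO : IsOpen O) {F G : E → 𝔸} (hF : ContDiffOn ℝ ∞ F O)
    (hG : ContDiffOn ℝ ∞ G O) (v : E) :
    Set.EqOn (dirDeriv v (fun y => F y * G y))
      (fun y => dirDeriv v F y * G y + F y * dirDeriv v G y) O := fun y hy => by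
  simp only [dirDeriv]
  rw [fderiv_fun_mul (differentiableAt_of_contDiffOn hO (by simp) hF hy)
    (differentiableAt_of_contDiffOn hO (by simp) hG hy)]
  simp only [add_apply, smul_apply, smul_eq_mul]
  ring

theorem wordDeriv_concat_mul (hO : IsOpen O) {F G : E → 𝔸} (hF : ContDiffOn ℝ ∞ F O)
    (hG : ContDiffOn ℝ ∞ G O) (w : List Y) (m : Y) :
    Set.EqOn (wordDeriv e (w ++ [m]) (fun y => F y * G y))
      (fun y => wordDeriv e w (fun x => dirDeriv (e m) F x * G x) y +
        wordDeriv e w (fun x => F x * dirDeriv (e m) G x) y) O := by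
  rw [wordDeriv_concat]
  exact (wordDeriv_eqOn hO (dirDeriv_mul hO hF hG (e m)) w).trans
    (wordDeriv_add hO ((contDiffOn_dirDeriv hO hF _).mul hG)
      (hF.mul (contDiffOn_dirDeriv hO hG _)) w)

/-- The binomial convolution of two sequences, which governs the Leibniz rule for bounds on
iterated derivatives. -/
def binomConv (a b : ℕ → ℝ) (n : ℕ) : ℝ :=
  ∑ ij ∈ antidiagonal n, (n.choose ij.1 : ℝ) * (a ij.1 * b ij.2)

theorem binomConv_succ (a b : ℕ → ℝ) (n : ℕ) :
    binomConv a b (n + 1) =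
      binomConv (fun i => a (i + 1)) b n + binomConv a (fun i => b (i + 1)) n := by
  unfold binomConv
  rw [Finset.sum_antidiagonal_choose_succ_mul (fun i j => a i * b j) n, add_comm]
  congr 1
  refine Finset.sum_congr rfl fun ij hij => ?_
  rw [← Nat.choose_symm_of_eq_add (mem_antidiagonal.1 hij).symm]

theorem norm_wordDeriv_mul_le (hO : IsOpen O) (w : List Y) {F G : E → 𝔸} {a b : ℕ → ℝ}
    (hF : ContDiffOn ℝ ∞ F O) (hG : ContDiffOn ℝ ∞ G O)
    (ha : ∀ v : List Y, v.length ≤ w.length → ∀ y ∈ O, ‖wordDeriv e v F y‖ ≤ a v.length)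
    (hb : ∀ v : List Y, v.length ≤ w.length → ∀ y ∈ O, ‖wordDeriv e v G y‖ ≤ b v.length)
    {y : E} (hy : y ∈ O) :
    ‖wordDeriv e w (fun y => F y * G y) y‖ ≤ binomConv a b w.length := by
  induction w using List.reverseRecOn generalizing F G a b with
  | nil =>
    have hFy : ‖F y‖ ≤ a 0 := ha [] le_rfl y hy
    have hGy : ‖G y‖ ≤ b 0 := hb [] le_rfl y hy
    simpa [binomConv] using (norm_mul_le _ _).trans
      (mul_le_mul hFy hGy (norm_nonneg _) ((norm_nonneg _).trans hFy))
  | append_singleton w m ih =>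
    simp only [List.length_append, List.length_singleton] at ha hb ⊢
    rw [wordDeriv_concat_mul hO hF hG w m hy, binomConv_succ]
    refine norm_add_le_of_le ?_ ?_
    · refine ih (contDiffOn_dirDeriv hO hF _) hG (fun v hv z hz => ?_) (fun v hv => hb v (by omega))
      simpa [wordDeriv_concat] using ha (v ++ [m]) (by simpa using hv) z hz
    · refine ih hF (contDiffOn_dirDeriv hO hG _) (fun v hv => ha v (by omega)) (fun v hv z hz => ?_)
      simpa [wordDeriv_concat] using hb (v ++ [m]) (by simpa using hv) z hz

theorem norm_wordDeriv_mul_sub_le (hO : IsOpen O) (w : List Y) {F G : E → 𝔸} {a b : ℕ → ℝ}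
    (hF : ContDiffOn ℝ ∞ F O) (hG : ContDiffOn ℝ ∞ G O) (ha0 : a 0 = 0)
    (ha : ∀ v : List Y, v ≠ [] → ∀ y ∈ O, ‖wordDeriv e v F y‖ ≤ a v.length)
    (hb : ∀ v : List Y, v.length < w.length → ∀ y ∈ O, ‖wordDeriv e v G y‖ ≤ b v.length)
    {y : E} (hy : y ∈ O) :
    ‖wordDeriv e w (fun y => F y * G y) y - F y * wordDeriv e w G y‖ ≤ binomConv a b w.length := by
  induction w using List.reverseRecOn generalizing G b with
  | nil => simp [binomConv, ha0]
  | append_singleton w m ih =>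
    simp only [List.length_append, List.length_singleton] at hb ⊢
    rw [wordDeriv_concat_mul hO hF hG w m hy, wordDeriv_concat, binomConv_succ, add_sub_assoc]
    refine norm_add_le_of_le ?_ ?_
    · refine norm_wordDeriv_mul_le hO w (contDiffOn_dirDeriv hO hF _) hG (fun v _ z hz => ?_)
        (fun v hv => hb v (by omega)) hy
      simpa [wordDeriv_concat] using ha (v ++ [m]) (by simp) z hz
    · refine ih (contDiffOn_dirDeriv hO hG _) fun v hv z hz => ?_
      simpa [wordDeriv_concat] using hb (v ++ [m]) (by simpa using hv) z hz

theorem sum_antidiagonal_mul_pow_le {h B : ℝ} (hh : 0 ≤ h) (hB : 2 * h ≤ B) (n : ℕ) :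
    ∑ ij ∈ antidiagonal n, h ^ ij.1 * B ^ ij.2 ≤ 2 * B ^ n := by
  suffices H : ∑ ij ∈ antidiagonal n, h ^ ij.1 * B ^ ij.2 ≤ 2 * B ^ n - h ^ n from
    H.trans (sub_le_self _ (pow_nonneg hh n))
  induction n with
  | zero => norm_num
  | succ n ih =>
    have hfactor : ∑ x ∈ antidiagonal n, h ^ x.1 * B ^ (x.2 + 1)
        = B * ∑ x ∈ antidiagonal n, h ^ x.1 * B ^ x.2 := by
      rw [Finset.mul_sum]; exact Finset.sum_congr rfl fun _ _ => by ring
    have hstep : 2 * h * h ^ n ≤ B * h ^ n := mul_le_mul_of_nonneg_right hB (pow_nonneg hh n)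
    rw [Finset.Nat.sum_antidiagonal_succ', hfactor]
    have := mul_le_mul_of_nonneg_left ih (show 0 ≤ B by linarith)
    simp only [pow_succ, pow_zero, mul_one]
    nlinarith

theorem binomConv_weight_le {M : ℕ → ℝ} (hM : IsWeightSequence M) {C₁ C₂ h B : ℝ} (hC₁ : 0 ≤ C₁)
    (hC₂ : 0 ≤ C₂) (hh : 0 ≤ h) (hB : 2 * h ≤ B) (k n : ℕ) :
    binomConv (fun i => C₁ * h ^ i * M i) (fun i => C₂ * B ^ i * M (i + k)) n
      ≤ 2 * C₁ * C₂ * B ^ n * M (n + k) := by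
  have hB0 : 0 ≤ B := by linarith
  have hpos := (hM.pos (n + k)).le
  calc binomConv (fun i => C₁ * h ^ i * M i) (fun i => C₂ * B ^ i * M (i + k)) n
      ≤ ∑ ij ∈ antidiagonal n, (C₁ * C₂ * M (n + k)) * (h ^ ij.1 * B ^ ij.2) := by
        refine Finset.sum_le_sum fun ij hij => ?_
        obtain rfl := mem_antidiagonal.1 hij
        calc ((ij.1 + ij.2).choose ij.1 : ℝ) *
              (C₁ * h ^ ij.1 * M ij.1 * (C₂ * B ^ ij.2 * M (ij.2 + k)))
            = C₁ * C₂ * (h ^ ij.1 * B ^ ij.2) *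
              (((ij.1 + ij.2).choose ij.1 : ℝ) * (M ij.1 * M (ij.2 + k))) := by ring
          _ ≤ C₁ * C₂ * (h ^ ij.1 * B ^ ij.2) * M (ij.1 + ij.2 + k) := by
            gcongr; exact hM.choose_mul_shift_le _ _ _
          _ = _ := by ring
    _ ≤ C₁ * C₂ * M (n + k) * (2 * B ^ n) := by
        rw [← Finset.mul_sum]
        gcongr
        exact sum_antidiagonal_mul_pow_le hh hB n
    _ = 2 * C₁ * C₂ * B ^ n * M (n + k) := by ring

theorem binomConv_weight_succ_le {M : ℕ → ℝ} (hM : IsWeightSequence M) {C₁ C₂ h B : ℝ}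
    (hC₁ : 0 ≤ C₁) (hC₂ : 0 ≤ C₂) (hh : 0 ≤ h) (hB : 2 * h ≤ B) (n : ℕ) :
    binomConv (fun i => if i = 0 then 0 else C₁ * h ^ i * M i) (fun i => C₂ * B ^ i * M i) (n + 1)
      ≤ 2 * h * C₁ * C₂ * B ^ n * M (n + 1) := by
  have hB0 : 0 ≤ B := by linarith
  have hpos := (hM.pos (n + 1)).le
  unfold binomConv
  rw [Finset.Nat.sum_antidiagonal_succ]
  simp only [if_true, zero_mul, mul_zero, zero_add, Nat.succ_ne_zero, if_false]
  calc _ ≤ ∑ ij ∈ antidiagonal n, (h * C₁ * C₂ * M (n + 1)) * (h ^ ij.1 * B ^ ij.2) := by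
        refine Finset.sum_le_sum fun ij hij => ?_
        obtain rfl := mem_antidiagonal.1 hij
        have hchoose := hM.choose_mul_le (ij.1 + 1) ij.2
        rw [show ij.1 + 1 + ij.2 = ij.1 + ij.2 + 1 by ring] at hchoose
        calc ((ij.1 + ij.2 + 1).choose (ij.1 + 1) : ℝ) *
              (C₁ * h ^ (ij.1 + 1) * M (ij.1 + 1) * (C₂ * B ^ ij.2 * M ij.2))
            = C₁ * C₂ * (h ^ (ij.1 + 1) * B ^ ij.2) *
              (((ij.1 + ij.2 + 1).choose (ij.1 + 1) : ℝ) * (M (ij.1 + 1) * M ij.2)) := by ring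
          _ ≤ C₁ * C₂ * (h ^ (ij.1 + 1) * B ^ ij.2) * M (ij.1 + ij.2 + 1) := by gcongr
          _ = _ := by ring
    _ ≤ h * C₁ * C₂ * M (n + 1) * (2 * B ^ n) := by
        rw [← Finset.mul_sum]
        gcongr
        exact sum_antidiagonal_mul_pow_le hh hB n
    _ = 2 * h * C₁ * C₂ * B ^ n * M (n + 1) := by ring

end Leibniz

section DenjoyCarlemanClass

variable {E : Type*} [NormedAddCommGroup E] [NormedSpace ℝ E] {Y V : Type*}
  {e : Y → E × (V → ℂ)} {O : Set (E × (V → ℂ))} {M : ℕ → ℝ} {F G : E × (V → ℂ) → ℂ}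

/-- Holomorphy on `O` in the second variable, expressed as complex linearity of the partial real
derivative; differentiability is not included. -/
def IsHolSnd (O : Set (E × (V → ℂ))) (F : E × (V → ℂ) → ℂ) : Prop :=
  ∀ y ∈ O, ∀ z : V → ℂ, fderiv ℝ F y (0, Complex.I • z) = Complex.I * fderiv ℝ F y (0, z)

namespace IsHolSnd

theorem mono {O' : Set (E × (V → ℂ))} (hF : IsHolSnd O F) (h : O' ⊆ O) : IsHolSnd O' F :=
  fun y hy => hF y (h hy)

theorem congr (hO : IsOpen O) (hF : IsHolSnd O F) (h : Set.EqOn G F O) : IsHolSnd O G := by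
  intro y hy z
  rw [(Filter.eventuallyEq_of_mem (hO.mem_nhds hy) h).fderiv_eq]
  exact hF y hy z

theorem fderiv_smul (hF : IsHolSnd O F) {y : E × (V → ℂ)} (hy : y ∈ O) (c : ℂ) (z : V → ℂ) :
    fderiv ℝ F y (0, c • z) = c * fderiv ℝ F y (0, z) := by
  have hsplit : ((0 : E), c • z) = c.re • ((0 : E), z) + c.im • ((0 : E), Complex.I • z) := by
    ext1
    · simp
    · funext i
      simp only [Prod.snd_add, Prod.smul_mk, Pi.add_apply, Pi.smul_apply, Complex.real_smul,
        smul_eq_mul]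
      linear_combination -(z i) * Complex.re_add_im c
  rw [hsplit, map_add, map_smul, map_smul, hF y hy z]
  simp only [Complex.real_smul]
  linear_combination (fderiv ℝ F y (0, z)) * Complex.re_add_im c

variable [Fintype V]

theorem add (hO : IsOpen O) (hF : IsHolSnd O F) (hG : IsHolSnd O G) (sF : ContDiffOn ℝ ∞ F O)
    (sG : ContDiffOn ℝ ∞ G O) : IsHolSnd O (fun y => F y + G y) := by
  intro y hy z
  rw [fderiv_fun_add (differentiableAt_of_contDiffOn hO (by simp) sF hy)
    (differentiableAt_of_contDiffOn hO (by simp) sG hy)]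
  simp only [add_apply, hF y hy z, hG y hy z]
  ring

theorem mul (hO : IsOpen O) (hF : IsHolSnd O F) (hG : IsHolSnd O G) (sF : ContDiffOn ℝ ∞ F O)
    (sG : ContDiffOn ℝ ∞ G O) : IsHolSnd O (fun y => F y * G y) := by
  intro y hy z
  rw [fderiv_fun_mul (differentiableAt_of_contDiffOn hO (by simp) sF hy)
    (differentiableAt_of_contDiffOn hO (by simp) sG hy)]
  simp only [add_apply, smul_apply, smul_eq_mul, hF y hy z, hG y hy z]
  ring

theorem inv (hO : IsOpen O) (hF : IsHolSnd O F) (sF : ContDiffOn ℝ ∞ F O)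
    (hne : ∀ y ∈ O, F y ≠ 0) : IsHolSnd O (fun y => (F y)⁻¹) := by
  intro y hy z
  have hd := differentiableAt_of_contDiffOn hO (by simp) sF hy
  have hderiv := ((hasFDerivAt_inv' (𝕜 := ℝ) (hne y hy)).comp y hd.hasFDerivAt).fderiv
  rw [show (fun y => (F y)⁻¹) = Inv.inv ∘ F from rfl, hderiv]
  simp only [ContinuousLinearMap.comp_apply, neg_apply, hF y hy z,
    ContinuousLinearMap.mulLeftRight_apply]
  ring

theorem dirDeriv (hO : IsOpen O) (hF : IsHolSnd O F) (sF : ContDiffOn ℝ ∞ F O)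
    (v : E × (V → ℂ)) : IsHolSnd O (dirDeriv v F) := by
  intro y hy z
  have hc : ContDiffAt ℝ 2 F y :=
    (sF.contDiffAt (hO.mem_nhds hy)).of_le (WithTop.coe_le_coe.2 le_top)
  have hd : DifferentiableAt ℝ (fun x => fderiv ℝ F x (0, z)) y :=
    ((hc.fderiv_right (m := 1) (by norm_num)).differentiableAt (by simp)).clm_apply
      (differentiableAt_const _)
  have hhol : (fun x => fderiv ℝ F x (0, Complex.I • z)) =ᶠ[nhds y]
      fun x => Complex.I * fderiv ℝ F x (0, z) :=
    Filter.eventuallyEq_of_mem (hO.mem_nhds hy) fun x hx => hF x hx z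
  unfold _root_.dirDeriv
  rw [fderiv_fderiv_apply_comm hc v (0, Complex.I • z), fderiv_fderiv_apply_comm hc v (0, z),
    hhol.fderiv_eq, fderiv_const_mul hd]
  rfl

end IsHolSnd

variable [Fintype V]

/-- The Denjoy-Carleman class on `O` with explicit constants: smooth functions, holomorphic in the
second variable, whose iterated derivatives of order `n` along the directions `e` are at most
`C * h ^ n * M (n + k)`. The shift `k` records derivatives that have already been taken. -/
structure InDCClassWith (e : Y → E × (V → ℂ)) (O : Set (E × (V → ℂ))) (M : ℕ → ℝ) (C h : ℝ) (k : ℕ)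
    (F : E × (V → ℂ) → ℂ) : Prop where
  const_nonneg : 0 ≤ C
  rate_nonneg : 0 ≤ h
  contDiffOn : ContDiffOn ℝ ∞ F O
  isHolSnd : IsHolSnd O F
  norm_le : ∀ w : List Y, ∀ y ∈ O, ‖wordDeriv e w F y‖ ≤ C * h ^ w.length * M (w.length + k)

namespace InDCClassWith

variable {C C' C₁ C₂ h h' B : ℝ} {k k' : ℕ}

theorem mono (hM : IsWeightSequence M) (hF : InDCClassWith e O M C h k F) (hC : C ≤ C')
    (hh : h ≤ h') (hk : k ≤ k') : InDCClassWith e O M C' h' k' F where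
  const_nonneg := hF.const_nonneg.trans hC
  rate_nonneg := hF.rate_nonneg.trans hh
  contDiffOn := hF.contDiffOn
  isHolSnd := hF.isHolSnd
  norm_le w y hy := by
    refine (hF.norm_le w y hy).trans ?_
    have hmono := hM.monotone (Nat.add_le_add_left hk w.length)
    have hpos := (hM.pos (w.length + k)).le
    have hC' := hF.const_nonneg.trans hC
    have hh₀ := hF.rate_nonneg
    have hh' := hh₀.trans hh
    gcongr

theorem subset {O' : Set (E × (V → ℂ))} (hF : InDCClassWith e O M C h k F) (hO' : O' ⊆ O) :
    InDCClassWith e O' M C h k F :=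
  ⟨hF.const_nonneg, hF.rate_nonneg, hF.contDiffOn.mono hO', hF.isHolSnd.mono hO',
    fun w y hy => hF.norm_le w y (hO' hy)⟩

theorem congr (hO : IsOpen O) (hF : InDCClassWith e O M C h k F) (hFG : Set.EqOn G F O) :
    InDCClassWith e O M C h k G :=
  ⟨hF.const_nonneg, hF.rate_nonneg, hF.contDiffOn.congr hFG, hF.isHolSnd.congr hO hFG,
    fun w y hy => by rw [wordDeriv_eqOn hO hFG w hy]; exact hF.norm_le w y hy⟩

theorem norm_apply_le (hF : InDCClassWith e O M C h k F) {y : E × (V → ℂ)} (hy : y ∈ O) :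
    ‖F y‖ ≤ C * M k := by
  simpa using hF.norm_le [] y hy

theorem add (hO : IsOpen O) (hF : InDCClassWith e O M C₁ h k F)
    (hG : InDCClassWith e O M C₂ h k G) :
    InDCClassWith e O M (C₁ + C₂) h k (fun y => F y + G y) where
  const_nonneg := add_nonneg hF.const_nonneg hG.const_nonneg
  rate_nonneg := hF.rate_nonneg
  contDiffOn := hF.contDiffOn.add hG.contDiffOn
  isHolSnd := hF.isHolSnd.add hO hG.isHolSnd hF.contDiffOn hG.contDiffOn
  norm_le w y hy := by
    rw [wordDeriv_add hO hF.contDiffOn hG.contDiffOn w hy, add_mul, add_mul]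
    exact norm_add_le_of_le (hF.norm_le w y hy) (hG.norm_le w y hy)

theorem mul (hM : IsWeightSequence M) (hO : IsOpen O) (hF : InDCClassWith e O M C₁ h 0 F)
    (hG : InDCClassWith e O M C₂ B k G) (hB : 2 * h ≤ B) :
    InDCClassWith e O M (2 * C₁ * C₂) B k (fun y => F y * G y) where
  const_nonneg := mul_nonneg (mul_nonneg zero_le_two hF.const_nonneg) hG.const_nonneg
  rate_nonneg := hG.rate_nonneg
  contDiffOn := hF.contDiffOn.mul hG.contDiffOn
  isHolSnd := hF.isHolSnd.mul hO hG.isHolSnd hF.contDiffOn hG.contDiffOn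
  norm_le w _ hy :=
    (norm_wordDeriv_mul_le hO w hF.contDiffOn hG.contDiffOn (a := fun i => C₁ * h ^ i * M i)
      (b := fun i => C₂ * B ^ i * M (i + k)) (fun v _ => hF.norm_le v) (fun v _ => hG.norm_le v)
      hy).trans
    (binomConv_weight_le hM hF.const_nonneg hG.const_nonneg hF.rate_nonneg hB k _)

theorem dirDeriv (hO : IsOpen O) (hF : InDCClassWith e O M C h k F) (m : Y) :
    InDCClassWith e O M (C * h) h (k + 1) (dirDeriv (e m) F) where
  const_nonneg := mul_nonneg hF.const_nonneg hF.rate_nonneg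
  rate_nonneg := hF.rate_nonneg
  contDiffOn := contDiffOn_dirDeriv hO hF.contDiffOn _
  isHolSnd := hF.isHolSnd.dirDeriv hO hF.contDiffOn _
  norm_le w y hy := by
    rw [← wordDeriv_concat]
    refine (hF.norm_le (w ++ [m]) y hy).trans_eq ?_
    rw [List.length_append, List.length_singleton, add_assoc, add_comm 1 k]
    ring

theorem dirDeriv_of_succ_le (hO : IsOpen O) {H : ℝ} (hH0 : 0 ≤ H)
    (hH : ∀ n, M (n + 1) ≤ H ^ n * M n) (hF : InDCClassWith e O M C h 0 F) (m : Y) :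
    InDCClassWith e O M (C * h) (h * H) 0 (_root_.dirDeriv (e m) F) where
  const_nonneg := mul_nonneg hF.const_nonneg hF.rate_nonneg
  rate_nonneg := mul_nonneg hF.rate_nonneg hH0
  contDiffOn := contDiffOn_dirDeriv hO hF.contDiffOn _
  isHolSnd := hF.isHolSnd.dirDeriv hO hF.contDiffOn _
  norm_le w y hy := by
    have hC := hF.const_nonneg
    have hh := hF.rate_nonneg
    calc _ ≤ C * h * h ^ w.length * M (w.length + 1) := (hF.dirDeriv hO m).norm_le w y hy
      _ ≤ C * h * h ^ w.length * (H ^ w.length * M w.length) := by gcongr; exact hH _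
      _ = C * h * (h * H) ^ w.length * M (w.length + 0) := by rw [mul_pow, add_zero]; ring

theorem const (hM : IsWeightSequence M) (hh : 0 ≤ h) (c : ℂ) :
    InDCClassWith e O M ‖c‖ h 0 (fun _ => c) where
  const_nonneg := norm_nonneg c
  rate_nonneg := hh
  contDiffOn := contDiffOn_const
  isHolSnd _ _ z := by simp
  norm_le w y _ := by
    rcases eq_or_ne w [] with rfl | hw
    · simp [hM.zero]
    · rw [wordDeriv_const hw, norm_zero]
      have := hM.pos (w.length + 0)
      positivity

theorem clm (hM : IsWeightSequence M) {R : ℝ} (hR : 0 ≤ R) (ℓ : E × (V → ℂ) →L[ℝ] ℂ)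
    (hℓ : ∀ z, ℓ (0, Complex.I • z) = Complex.I * ℓ (0, z)) (hO : ∀ y ∈ O, ‖ℓ y‖ ≤ R)
    (he : ∀ m, ‖ℓ (e m)‖ ≤ R) : InDCClassWith e O M R 1 0 (fun y => ℓ y) where
  const_nonneg := hR
  rate_nonneg := zero_le_one
  contDiffOn := ℓ.contDiff.contDiffOn
  isHolSnd _ _ z := by simp [hℓ]
  norm_le w y hy := by
    rw [one_pow, mul_one]
    refine le_trans ?_ (le_mul_of_one_le_right hR (hM.one_le _))
    rcases List.eq_nil_or_concat w with rfl | ⟨w', m, rfl⟩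
    · exact hO y hy
    · have hderiv : _root_.dirDeriv (e m) (fun y => ℓ y) = fun _ => ℓ (e m) := by
        funext y; simp [_root_.dirDeriv]
      rw [List.concat_eq_append, wordDeriv_concat, hderiv]
      rcases eq_or_ne w' [] with rfl | hw'
      · exact he m
      · rwa [wordDeriv_const hw', norm_zero]

theorem const_mul (hM : IsWeightSequence M) (hO : IsOpen O) (hF : InDCClassWith e O M C h k F)
    (c : ℂ) {D : ℝ} (hc : ‖c‖ ≤ D) : InDCClassWith e O M (2 * D * C) h k (fun y => c * F y) :=
  mul hM hO ((const hM le_rfl c).mono hM hc le_rfl le_rfl) hF (by simpa using hF.rate_nonneg)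

theorem sum (hM : IsWeightSequence M) (hO : IsOpen O) {ι : Type*} (s : Finset ι)
    {F : ι → E × (V → ℂ) → ℂ} (hh : 0 ≤ h) (hF : ∀ i ∈ s, InDCClassWith e O M C h k (F i)) :
    InDCClassWith e O M (s.card * C) h k (fun y => ∑ i ∈ s, F i y) := by
  classical
  induction s using Finset.induction_on with
  | empty =>
    simpa using (const (e := e) (O := O) hM hh 0).mono hM le_rfl le_rfl (Nat.zero_le k)
  | insert i s hi ih =>
    have hadd := add hO (hF i (by simp)) (ih fun j hj => hF j (by simp [hj]))
    simp only [Finset.sum_insert hi, Finset.card_insert_of_notMem hi]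
    convert hadd using 1
    push_cast
    ring

/-- Induction on the order of differentiation: the Leibniz rule for `F * F⁻¹ = 1` expresses the
derivatives of `F⁻¹` of order `n + 1` through those of order at most `n`. -/
theorem norm_wordDeriv_inv_le (hM : IsWeightSequence M) (hO : IsOpen O) {c : ℝ}
    (hF : InDCClassWith e O M C h 0 F) (hc : 0 < c) (hlow : ∀ y ∈ O, c ≤ ‖F y‖) (hB : 2 * h ≤ B)
    (hB' : 2 * h * C / c ≤ B) (w : List Y) {y : E × (V → ℂ)} (hy : y ∈ O) :
    ‖wordDeriv e w (fun y => (F y)⁻¹) y‖ ≤ 1 / c * B ^ w.length * M w.length := by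
  have hne : ∀ y ∈ O, F y ≠ 0 := fun y hy => norm_pos_iff.1 (hc.trans_le (hlow y hy))
  have hB0 : 0 ≤ B := (mul_nonneg zero_le_two hF.rate_nonneg).trans hB
  induction hn : w.length using Nat.strong_induction_on generalizing w y with
  | _ n ih =>
  rcases n with _ | n
  · obtain rfl := List.length_eq_zero_iff.1 hn
    simpa [hM.zero] using inv_anti₀ hc (hlow y hy)
  have hone : wordDeriv e w (fun y => F y * (F y)⁻¹) y = 0 := by
    have heq : Set.EqOn (fun y => F y * (F y)⁻¹) (fun _ => (1 : ℂ)) O :=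
      fun z hz => mul_inv_cancel₀ (hne z hz)
    rw [wordDeriv_eqOn hO heq w hy, wordDeriv_const (by rintro rfl; simp at hn)]
  have hleibniz := norm_wordDeriv_mul_sub_le hO w (e := e) (F := F) (G := fun y => (F y)⁻¹)
    (a := fun i => if i = 0 then 0 else C * h ^ i * M i) (b := fun i => (1 / c) * B ^ i * M i)
    hF.contDiffOn (hF.contDiffOn.inv hne) (by simp)
    (fun v hv z hz => by simpa [hv] using hF.norm_le v z hz)
    (fun v hv z hz => ih v.length (hn ▸ hv) v hz rfl) hy
  rw [hone, zero_sub, norm_neg, norm_mul, hn] at hleibniz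
  have hpos := (hM.pos (n + 1)).le
  refine le_of_mul_le_mul_left ?_ hc
  calc c * ‖wordDeriv e w (fun y => (F y)⁻¹) y‖
      ≤ ‖F y‖ * ‖wordDeriv e w (fun y => (F y)⁻¹) y‖ := by gcongr; exact hlow y hy
    _ ≤ 2 * h * C * (1 / c) * B ^ n * M (n + 1) :=
      hleibniz.trans (binomConv_weight_succ_le hM hF.const_nonneg (by positivity)
        hF.rate_nonneg hB n)
    _ = (2 * h * C / c) * (B ^ n * M (n + 1)) := by ring
    _ ≤ B * (B ^ n * M (n + 1)) := by gcongr
    _ = c * (1 / c * B ^ (n + 1) * M (n + 1)) := by field_simp; ring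

theorem inv (hM : IsWeightSequence M) (hO : IsOpen O) {c : ℝ}
    (hF : InDCClassWith e O M C h 0 F) (hc : 0 < c) (hlow : ∀ y ∈ O, c ≤ ‖F y‖) (hB : 2 * h ≤ B)
    (hB' : 2 * h * C / c ≤ B) : InDCClassWith e O M (1 / c) B 0 (fun y => (F y)⁻¹) := by
  have hne : ∀ y ∈ O, F y ≠ 0 := fun y hy => norm_pos_iff.1 (hc.trans_le (hlow y hy))
  exact ⟨by positivity, (mul_nonneg zero_le_two hF.rate_nonneg).trans hB, hF.contDiffOn.inv hne,
    hF.isHolSnd.inv hO hF.contDiffOn hne,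
    fun w _ hy => norm_wordDeriv_inv_le hM hO hF hc hlow hB hB' w hy⟩

end InDCClassWith

/-- Membership in the Denjoy-Carleman class on `O` for some constants. -/
def InDCClass (e : Y → E × (V → ℂ)) (O : Set (E × (V → ℂ))) (M : ℕ → ℝ) (F : E × (V → ℂ) → ℂ) :
    Prop :=
  ∃ C h : ℝ, InDCClassWith e O M C h 0 F

namespace InDCClass

theorem subset {O' : Set (E × (V → ℂ))} (hF : InDCClass e O M F) (hO' : O' ⊆ O) :
    InDCClass e O' M F := by
  obtain ⟨C, h, hF⟩ := hF
  exact ⟨C, h, hF.subset hO'⟩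

theorem add (hM : IsWeightSequence M) (hO : IsOpen O) (hF : InDCClass e O M F)
    (hG : InDCClass e O M G) : InDCClass e O M (fun y => F y + G y) := by
  obtain ⟨C, h, hF⟩ := hF
  obtain ⟨C', h', hG⟩ := hG
  exact ⟨C + C', max h h', .add hO (hF.mono hM le_rfl (le_max_left _ _) le_rfl)
    (hG.mono hM le_rfl (le_max_right _ _) le_rfl)⟩

theorem mul (hM : IsWeightSequence M) (hO : IsOpen O) (hF : InDCClass e O M F)
    (hG : InDCClass e O M G) : InDCClass e O M (fun y => F y * G y) := by
  obtain ⟨C, h, hF⟩ := hF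
  obtain ⟨C', h', hG⟩ := hG
  exact ⟨2 * C * C', max (2 * h) h', .mul hM hO hF
    (hG.mono hM le_rfl (le_max_right _ _) le_rfl) (le_max_left _ _)⟩

theorem const (hM : IsWeightSequence M) (c : ℂ) : InDCClass e O M (fun _ => c) :=
  ⟨‖c‖, 0, .const hM le_rfl c⟩

theorem pi_single (hM : IsWeightSequence M) {ι : Type*} [DecidableEq ι] (hF : InDCClass e O M F)
    (i j : ι) : InDCClass e O M ((Pi.single i F : ι → E × (V → ℂ) → ℂ) j) := by
  rcases eq_or_ne j i with rfl | hj
  · rwa [Pi.single_eq_same]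
  · rw [Pi.single_eq_of_ne hj]
    exact const hM 0

theorem dirDeriv (hM : IsWeightSequence M) (hO : IsOpen O) (hF : InDCClass e O M F) (m : Y) :
    InDCClass e O M (dirDeriv (e m) F) := by
  obtain ⟨C, h, hF⟩ := hF
  obtain ⟨H, hH1, hH⟩ := hM.exists_succ_le
  exact ⟨C * h, h * H, hF.dirDeriv_of_succ_le hO (zero_le_one.trans hH1) hH m⟩

theorem sum (hM : IsWeightSequence M) (hO : IsOpen O) {ι : Type*} (s : Finset ι)
    {F : ι → E × (V → ℂ) → ℂ} (hF : ∀ i ∈ s, InDCClass e O M (F i)) :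
    InDCClass e O M (fun y => ∑ i ∈ s, F i y) := by
  classical
  induction s using Finset.induction_on with
  | empty => simpa using const hM (0 : ℂ)
  | insert i s hi ih =>
    simp only [Finset.sum_insert hi]
    exact add hM hO (hF i (by simp)) (ih fun j hj => hF j (by simp [hj]))

theorem clm (hM : IsWeightSequence M) [Finite Y] (ℓ : E × (V → ℂ) →L[ℝ] ℂ)
    (hℓ : ∀ z, ℓ (0, Complex.I • z) = Complex.I * ℓ (0, z)) (hO : Bornology.IsBounded O) :
    InDCClass e O M (fun y => ℓ y) := by
  obtain ⟨R, hR0, hR⟩ := hO.exists_pos_norm_le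
  obtain ⟨R', hR'⟩ := (Set.finite_range fun m => ‖ℓ (e m)‖).bddAbove
  refine ⟨max (‖ℓ‖ * R) R', 1, .clm hM (by positivity) ℓ hℓ (fun y hy => ?_) fun m => ?_⟩
  · exact (ℓ.le_opNorm_of_le (hR y hy)).trans (le_max_left _ _)
  · exact (hR' ⟨m, rfl⟩).trans (le_max_right _ _)

theorem exists_forall_inDCClassWith (hM : IsWeightSequence M) {ι : Type*} (s : Finset ι)
    {F : ι → E × (V → ℂ) → ℂ} (hF : ∀ i ∈ s, InDCClass e O M (F i)) :
    ∃ C h : ℝ, ∀ i ∈ s, InDCClassWith e O M C h 0 (F i) := by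
  choose! C h hF using hF
  obtain ⟨C', hC'⟩ := (s.image C).bddAbove
  obtain ⟨h', hh'⟩ := (s.image h).bddAbove
  exact ⟨C', h', fun i hi => (hF i hi).mono hM (hC' (by simpa using ⟨i, hi, rfl⟩))
    (hh' (by simpa using ⟨i, hi, rfl⟩)) le_rfl⟩

end InDCClass

end DenjoyCarlemanClass

section PartialDerivatives

variable {E G : Type*} [NormedAddCommGroup E] [NormedSpace ℝ E] [NormedAddCommGroup G]
  [NormedSpace ℝ G]

theorem hasDerivAt_add_smul {F : E → G} {g : G} {z v : E} {t : ℝ}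
    (h : HasLineDerivAt ℝ F g (z + t • v) v) : HasDerivAt (fun s : ℝ => F (z + s • v)) g t := by
  have hshift : HasDerivAt (fun s : ℝ => s - t) 1 t := (hasDerivAt_id t).sub_const t
  have hcomp := HasDerivAt.scomp_of_eq (g₁ := fun s : ℝ => F (z + t • v + s • v)) t h hshift
    (by simp)
  rw [one_smul] at hcomp
  refine hcomp.congr_of_eventuallyEq (.of_forall fun s => ?_)
  simp only [Function.comp]
  congr 1
  module

theorem norm_add_smul_sub_le {F F' : E → G} {z v : E} {c B : ℝ}
    (h : ∀ t ∈ Set.uIcc 0 c, HasLineDerivAt ℝ F (F' (z + t • v)) (z + t • v) v ∧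
      ‖F' (z + t • v)‖ ≤ B) :
    ‖F (z + c • v) - F z‖ ≤ B * |c| := by
  simpa using (convex_uIcc 0 c).norm_image_sub_le_of_norm_hasDerivWithin_le
    (f := fun s : ℝ => F (z + s • v)) (f' := fun s => F' (z + s • v))
    (fun t ht => (hasDerivAt_add_smul (h t ht).1).hasDerivWithinAt)
    (fun t ht => (h t ht).2) Set.left_mem_uIcc Set.right_mem_uIcc

variable {ι : Type*}

theorem norm_add_sum_smul_sub_le {b : ι → E} {F : E → G} {F' : ι → E → G} {y : E} {r B : ℝ}
    (h : ∀ z ∈ Metric.ball y r, ∀ m, HasLineDerivAt ℝ F (F' m z) z (b m) ∧ ‖F' m z‖ ≤ B)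
    (c : ι → ℝ) (s : Finset ι) (hs : ∑ m ∈ s, |c m| * ‖b m‖ < r) :
    ‖F (y + ∑ m ∈ s, c m • b m) - F y‖ ≤ B * ∑ m ∈ s, |c m| := by
  classical
  induction s using Finset.induction_on with
  | empty => simp
  | insert i s hi ih =>
    rw [Finset.sum_insert hi] at hs
    have hprev := ih ((le_add_of_nonneg_left (by positivity)).trans_lt hs)
    set x := ∑ m ∈ s, c m • b m with hx
    have hnorm : ‖x‖ ≤ ∑ m ∈ s, |c m| * ‖b m‖ :=
      norm_sum_le_of_le _ fun m _ => (norm_smul _ _).le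
    have hstep : ‖F (y + x + c i • b i) - F (y + x)‖ ≤ B * |c i| := by
      refine norm_add_smul_sub_le fun t ht => h _ ?_ i
      have ht' : |t| ≤ |c i| := by simpa using Set.abs_sub_left_of_mem_uIcc ht
      rw [mem_ball_iff_norm, show y + x + t • b i - y = x + t • b i by abel]
      calc ‖x + t • b i‖ ≤ ‖x‖ + |t| * ‖b i‖ := norm_add_le_of_le le_rfl (norm_smul _ _).le
        _ ≤ ∑ m ∈ s, |c m| * ‖b m‖ + |c i| * ‖b i‖ := by gcongr
        _ < r := by linarith
    rw [Finset.sum_insert hi, Finset.sum_insert hi, ← hx, mul_add,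
      show y + (c i • b i + x) = y + x + c i • b i by abel]
    exact (norm_sub_le_norm_sub_add_norm_sub _ _ _).trans (add_le_add hstep hprev)

variable [FiniteDimensional ℝ E]

theorem exists_eventually_norm_add_sub_le [Finite ι] (b : Module.Basis ι ℝ E) :
    ∃ K : ℝ, 0 < K ∧ ∀ (F : E → G) (F' : ι → E → G) (y : E) (B : ℝ), 0 ≤ B →
      (∀ᶠ z in 𝓝 y, ∀ m, HasLineDerivAt ℝ F (F' m z) z (b m) ∧ ‖F' m z‖ ≤ B) →
      ∀ᶠ v in 𝓝 0, ‖F (y + v) - F y‖ ≤ B * (K * ‖v‖) := by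
  cases nonempty_fintype ι
  set L : ι → (E →L[ℝ] ℝ) := fun m => LinearMap.toContinuousLinearMap (b.coord m)
  refine ⟨1 + ∑ m, ‖L m‖, by positivity, fun F F' y B hB h => ?_⟩
  obtain ⟨r, hr, hball⟩ := Metric.eventually_nhds_iff_ball.1 h
  have hsmall : ∀ᶠ v in 𝓝 (0 : E), ∑ m, |b.repr v m| * ‖b m‖ < r := by
    have hcont : Continuous fun v : E => ∑ m, |L m v| * ‖b m‖ := by fun_prop
    exact (hcont.tendsto 0).eventually_lt_const (by simpa using hr)
  filter_upwards [hsmall] with v hv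
  have hmvt := norm_add_sum_smul_sub_le hball (fun m => b.repr v m) Finset.univ hv
  rw [b.sum_repr v] at hmvt
  refine hmvt.trans (mul_le_mul_of_nonneg_left ?_ hB)
  calc ∑ m, |b.repr v m| ≤ ∑ m, ‖L m‖ * ‖v‖ := Finset.sum_le_sum fun m _ => (L m).le_opNorm v
    _ ≤ (1 + ∑ m, ‖L m‖) * ‖v‖ := by
      rw [← Finset.sum_mul]
      gcongr
      exact le_add_of_nonneg_left zero_le_one

theorem continuousAt_of_hasLineDerivAt [Finite ι] (b : Module.Basis ι ℝ E) {F : E → G}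
    {F' : ι → E → G} {y : E} {B : ℝ} (hB : 0 ≤ B)
    (h : ∀ᶠ z in 𝓝 y, ∀ m, HasLineDerivAt ℝ F (F' m z) z (b m) ∧ ‖F' m z‖ ≤ B) :
    ContinuousAt F y := by
  obtain ⟨K, -, hK⟩ := exists_eventually_norm_add_sub_le (G := G) b
  rw [ContinuousAt, ← map_add_left_nhds_zero, Filter.tendsto_map'_iff,
    tendsto_iff_norm_sub_tendsto_zero]
  refine squeeze_zero' (.of_forall fun _ => norm_nonneg _) (hK F F' y B hB h) ?_
  exact Continuous.tendsto' (by fun_prop) _ _ (by simp)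

theorem hasFDerivAt_of_hasLineDerivAt [Fintype ι] (b : Module.Basis ι ℝ E) {F : E → G}
    {F' : ι → E → G} {y : E} (h : ∀ᶠ z in 𝓝 y, ∀ m, HasLineDerivAt ℝ F (F' m z) z (b m))
    (hcont : ∀ m, ContinuousAt (F' m) y) :
    HasFDerivAt F
      (∑ m, (LinearMap.toContinuousLinearMap (b.coord m)).smulRight (F' m y)) y := by
  obtain ⟨K, hK, hmvt⟩ := exists_eventually_norm_add_sub_le (G := G) b
  set ℓ := ∑ m, (LinearMap.toContinuousLinearMap (b.coord m)).smulRight (F' m y) with hℓ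
  have hℓb : ∀ m, ℓ (b m) = F' m y := by
    classical
    intro m
    simp [hℓ, Finsupp.single_apply]
  rw [hasFDerivAt_iff_isLittleO_nhds_zero, Asymptotics.isLittleO_iff]
  intro ε hε
  have hclose : ∀ᶠ z in 𝓝 y, ∀ m, ‖F' m z - F' m y‖ ≤ ε / K := by
    refine Filter.eventually_all.2 fun m => ?_
    filter_upwards [Metric.continuousAt_iff'.1 (hcont m) (ε / K) (by positivity)] with z hz
    exact (dist_eq_norm (F' m z) (F' m y) ▸ hz).le
  have hsub : ∀ᶠ z in 𝓝 y, ∀ m,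
      HasLineDerivAt ℝ (fun z => F z - ℓ z) (F' m z - F' m y) z (b m) ∧
        ‖F' m z - F' m y‖ ≤ ε / K := by
    filter_upwards [h, hclose] with z hz hz' m
    exact ⟨(hz m).sub (hℓb m ▸ (ℓ.hasFDerivAt (x := z)).hasLineDerivAt (b m)), hz' m⟩
  filter_upwards [hmvt _ _ y _ (by positivity) hsub] with v hv
  rw [map_add, show F (y + v) - (ℓ y + ℓ v) - (F y - ℓ y) = F (y + v) - F y - ℓ v by abel] at hv
  exact hv.trans_eq (by field_simp)

/-- Boundedness of the derivatives gives continuity of every member of the family, and continuity of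
the derivatives gives differentiability. -/
theorem contDiffOn_of_family [Finite ι] (b : Module.Basis ι ℝ E) {O : Set E} (hO : IsOpen O)
    (W : Set (E → G))
    (hW : ∀ F ∈ W, ∀ m, ∃ F' ∈ W, ∀ y ∈ O, HasLineDerivAt ℝ F (F' y) y (b m))
    (hbd : ∀ F ∈ W, ∀ y ∈ O, ∃ B, ∀ᶠ z in 𝓝 y, ‖F z‖ ≤ B) :
    ∀ F ∈ W, ContDiffOn ℝ ∞ F O := by
  cases nonempty_fintype ι
  choose! D hDW hD using hW
  have hcont : ∀ F ∈ W, ∀ y ∈ O, ContinuousAt F y := by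
    intro F hF y hy
    choose B hB using fun m => hbd (D F m) (hDW F hF m) y hy
    refine continuousAt_of_hasLineDerivAt b (F' := D F) (B := ∑ m, |B m|) (by positivity) ?_
    filter_upwards [Filter.eventually_all.2 hB, hO.mem_nhds hy] with z hz hzO m
    exact ⟨hD F hF m z hzO, ((hz m).trans (le_abs_self _)).trans
      (Finset.single_le_sum (f := fun m => |B m|) (fun i _ => abs_nonneg (B i))
        (Finset.mem_univ m))⟩
  have hderiv : ∀ F ∈ W, ∀ y ∈ O, HasFDerivAt F
      (∑ m, (LinearMap.toContinuousLinearMap (b.coord m)).smulRight (D F m y)) y := by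
    intro F hF y hy
    refine hasFDerivAt_of_hasLineDerivAt b ?_ fun m => hcont _ (hDW F hF m) y hy
    filter_upwards [hO.mem_nhds hy] with z hz m using hD F hF m z hz
  have hn : ∀ n : ℕ, ∀ F ∈ W, ContDiffOn ℝ n F O := by
    intro n
    induction n with
    | zero =>
      exact fun F hF => contDiffOn_zero.2 fun y hy => (hcont F hF y hy).continuousWithinAt
    | succ n ih =>
      intro F hF
      push_cast
      refine (contDiffOn_succ_iff_fderiv_of_isOpen hO).2
        ⟨fun y hy => (hderiv F hF y hy).differentiableAt.differentiableWithinAt, by simp, ?_⟩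
      have hsum : ContDiffOn ℝ n (fun y => ∑ m,
          (LinearMap.toContinuousLinearMap (b.coord m)).smulRight (D F m y)) O :=
        ContDiffOn.sum fun m _ => contDiffOn_const.smulRight (ih _ (hDW F hF m))
      exact hsum.congr fun y hy => (hderiv F hF y hy).fderiv
  exact fun F hF => contDiffOn_infty.2 fun n => hn n F hF

end PartialDerivatives

section SliceDerivatives

theorem norm_sub_sub_smul_le {F : Type*} [NormedAddCommGroup F] [NormedSpace ℝ F]
    {g g' g'' : ℝ → F} {r B : ℝ} (h : ∀ s ∈ Metric.ball 0 r, HasDerivAt g (g' s) s)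
    (h' : ∀ s ∈ Metric.ball 0 r, HasDerivAt g' (g'' s) s)
    (hB : ∀ s ∈ Metric.ball 0 r, ‖g'' s‖ ≤ B) {s : ℝ} (hs : s ∈ Metric.ball 0 r) :
    ‖g s - g 0 - s • g' 0‖ ≤ B * ‖s‖ * ‖s‖ := by
  have h0 : (0 : ℝ) ∈ Metric.ball 0 r := Metric.mem_ball_self (Metric.pos_of_mem_ball hs)
  have hB0 : 0 ≤ B := (norm_nonneg _).trans (hB 0 h0)
  have hsub : Metric.closedBall (0 : ℝ) ‖s‖ ⊆ Metric.ball 0 r :=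
    Metric.closedBall_subset_ball (by simpa using hs)
  have hg' : ∀ t ∈ Metric.closedBall (0 : ℝ) ‖s‖, ‖g' t - g' 0‖ ≤ B * ‖s‖ := by
    intro t ht
    have hmvt := (convex_ball 0 r).norm_image_sub_le_of_norm_hasDerivWithin_le
      (fun x hx => (h' x hx).hasDerivWithinAt) hB h0 (hsub ht)
    rw [mem_closedBall_zero_iff] at ht
    rw [sub_zero] at hmvt
    exact hmvt.trans (by gcongr)
  have hmvt := (convex_closedBall 0 ‖s‖).norm_image_sub_le_of_norm_hasDerivWithin_le
    (f := fun t => g t - t • g' 0) (f' := fun t => g' t - (1 : ℝ) • g' 0) (x := 0) (y := s)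
    (fun t ht => ((h t (hsub ht)).sub ((hasDerivAt_id t).smul_const (g' 0))).hasDerivWithinAt)
    (fun t ht => by simpa using hg' t ht) (by simp) (by simp)
  simpa [sub_right_comm] using hmvt

theorem tendstoUniformlyOn_inv_smul_sub {X F : Type*} [NormedAddCommGroup F] [NormedSpace ℝ F]
    {H H' H'' : ℝ → X → F} {S : Set X} {r B : ℝ} (hr : 0 < r)
    (h : ∀ s ∈ Metric.ball 0 r, ∀ c ∈ S, HasDerivAt (H · c) (H' s c) s)
    (h' : ∀ s ∈ Metric.ball 0 r, ∀ c ∈ S, HasDerivAt (H' · c) (H'' s c) s)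
    (hB : ∀ s ∈ Metric.ball 0 r, ∀ c ∈ S, ‖H'' s c‖ ≤ B) :
    TendstoUniformlyOn (fun (s : ℝ) c => s⁻¹ • (H s c - H 0 c)) (H' 0) (𝓝[≠] 0) S := by
  rw [Metric.tendstoUniformlyOn_iff]
  intro ε hε
  have hsmall : ∀ᶠ s : ℝ in 𝓝[≠] 0, B * ‖s‖ < ε := by
    refine (Continuous.tendsto' (by fun_prop) _ 0 (by simp)).mono_left nhdsWithin_le_nhds
      |>.eventually_lt_const hε
  filter_upwards [hsmall, self_mem_nhdsWithin,
    mem_nhdsWithin_of_mem_nhds (Metric.ball_mem_nhds 0 hr)] with s hsε hs0 hs c hc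
  have hs0 : 0 < ‖s‖ := norm_pos_iff.2 hs0
  have htaylor := norm_sub_sub_smul_le (fun t ht => h t ht c hc) (fun t ht => h' t ht c hc)
    (fun t ht => hB t ht c hc) hs
  have hfactor : s⁻¹ • (H s c - H 0 c) - H' 0 c = s⁻¹ • (H s c - H 0 c - s • H' 0 c) := by
    rw [smul_sub s⁻¹ (H s c - H 0 c), inv_smul_smul₀ (norm_pos_iff.1 hs0)]
  rw [dist_comm, dist_eq_norm, hfactor, norm_smul, norm_inv]
  calc ‖s‖⁻¹ * ‖H s c - H 0 c - s • H' 0 c‖ ≤ ‖s‖⁻¹ * (B * ‖s‖ * ‖s‖) := by gcongr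
    _ = B * ‖s‖ := by field_simp
    _ < ε := hsε

/-- A family of holomorphic functions with locally bounded second derivative in a real parameter may
be differentiated in the parameter: the difference quotients converge uniformly. -/
theorem differentiableOn_and_hasDerivAt_deriv {H H' H'' : ℝ → ℂ → ℂ} {r ρ B : ℝ} (hr : 0 < r)
    (hρ : 0 < ρ)
    (h : ∀ s ∈ Metric.ball 0 r, ∀ c ∈ Metric.ball 0 ρ, HasDerivAt (H · c) (H' s c) s)
    (h' : ∀ s ∈ Metric.ball 0 r, ∀ c ∈ Metric.ball 0 ρ, HasDerivAt (H' · c) (H'' s c) s)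
    (hB : ∀ s ∈ Metric.ball 0 r, ∀ c ∈ Metric.ball 0 ρ, ‖H'' s c‖ ≤ B)
    (hd : ∀ s ∈ Metric.ball 0 r, DifferentiableOn ℂ (H s) (Metric.ball 0 ρ)) :
    DifferentiableOn ℂ (H' 0) (Metric.ball 0 ρ) ∧
      HasDerivAt (fun s => deriv (H s) 0) (deriv (H' 0) 0) 0 := by
  have h0 : (0 : ℝ) ∈ Metric.ball 0 r := Metric.mem_ball_self hr
  have hunif := (tendstoUniformlyOn_inv_smul_sub hr h h' hB).tendstoLocallyUniformlyOn
  have hev : ∀ᶠ s : ℝ in 𝓝[≠] 0, s ∈ Metric.ball 0 r :=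
    mem_nhdsWithin_of_mem_nhds (Metric.ball_mem_nhds _ hr)
  have hquot : ∀ᶠ s : ℝ in 𝓝[≠] 0,
      DifferentiableOn ℂ (fun c => s⁻¹ • (H s c - H 0 c)) (Metric.ball 0 ρ) := by
    filter_upwards [hev] with s hs using ((hd s hs).sub (hd 0 h0)).const_smul (s⁻¹)
  refine ⟨hunif.differentiableOn hquot Metric.isOpen_ball, hasDerivAt_iff_tendsto_slope.2 ?_⟩
  refine ((hunif.deriv hquot Metric.isOpen_ball).tendsto_at (Metric.mem_ball_self hρ)).congr' ?_
  have hdiff : ∀ s ∈ Metric.ball 0 r, DifferentiableAt ℂ (H s) 0 := fun s hs =>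
    (hd s hs).differentiableAt (Metric.ball_mem_nhds _ hρ)
  filter_upwards [hev] with s hs
  simp only [Function.comp, slope, sub_zero, vsub_eq_sub]
  rw [deriv_fun_const_smul (s⁻¹) ((hdiff s hs).fun_sub (hdiff 0 h0)),
    deriv_fun_sub (hdiff s hs) (hdiff 0 h0)]

/-- Boundedness on the compact subsets of `O`. -/
def BddOnCompacts {X F : Type*} [TopologicalSpace X] [Norm F] (O : Set X) (f : X → F) : Prop :=
  ∀ K : Set X, IsCompact K → K ⊆ O → ∃ B, ∀ y ∈ K, ‖f y‖ ≤ B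

variable {E V : Type*} [DecidableEq V]

/-- The complex derivative in the `l`-th complex variable, defined on slices so that no joint
differentiability is presupposed. -/
noncomputable def sliceDeriv (l : V) (F : E × (V → ℂ) → ℂ) : E × (V → ℂ) → ℂ :=
  fun y => deriv (fun c : ℂ => F (y.1, y.2 + Pi.single l c)) 0

/-- Holomorphy over `Ω` in the `l`-th complex variable alone. -/
def IsSliceHol (Ω : Set E) (F : E × (V → ℂ) → ℂ) (l : V) : Prop :=
  ∀ p ∈ Ω, ∀ z : V → ℂ, Differentiable ℂ (fun c : ℂ => F (p, z + Pi.single l c))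

theorem add_single_add_single_sub (z : V → ℂ) (l : V) (c s : ℂ) :
    z + Pi.single l c + Pi.single l (s - c) = z + Pi.single l s := by
  rw [add_assoc, ← Pi.single_add, add_sub_cancel]

namespace IsSliceHol

variable {Ω : Set E} {F : E × (V → ℂ) → ℂ} {l : V}

theorem hasDerivAt (h : IsSliceHol Ω F l) {p : E} (hp : p ∈ Ω) (z : V → ℂ) (c : ℂ) :
    HasDerivAt (fun c : ℂ => F (p, z + Pi.single l c))
      (sliceDeriv l F (p, z + Pi.single l c)) c := by
  have hcomp := HasDerivAt.comp_of_eq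
    (h₂ := fun s : ℂ => F (p, z + Pi.single l c + Pi.single l s)) c
    (h p hp (z + Pi.single l c) 0).hasDerivAt ((hasDerivAt_id c).sub_const c) (by simp)
  rw [mul_one] at hcomp
  refine hcomp.congr_of_eventuallyEq (.of_forall fun s => ?_)
  simp only [Function.comp, id, add_single_add_single_sub]

theorem of_differentiableAt
    (h : ∀ p ∈ Ω, ∀ z : V → ℂ, DifferentiableAt ℂ (fun c : ℂ => F (p, z + Pi.single l c)) 0) :
    IsSliceHol Ω F l := by
  intro p hp z c
  have hcomp := DifferentiableAt.comp
    (g := fun s : ℂ => F (p, z + Pi.single l c + Pi.single l s)) c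
    (by simpa using h p hp (z + Pi.single l c)) (differentiableAt_id.sub_const c)
  refine hcomp.congr_of_eventuallyEq (.of_forall fun s => ?_)
  simp only [Function.comp, id, add_single_add_single_sub]

theorem sliceDeriv_self (h : IsSliceHol Ω F l) : IsSliceHol Ω (sliceDeriv l F) l := by
  intro p hp z
  rw [show (fun c : ℂ => sliceDeriv l F (p, z + Pi.single l c)) =
    deriv (fun c : ℂ => F (p, z + Pi.single l c)) from
      funext fun c => (h.hasDerivAt hp z c).deriv.symm]
  exact (h p hp z).deriv

theorem norm_sliceDeriv_le [Fintype V] (h : IsSliceHol Ω F l) {p : E} (hp : p ∈ Ω)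
    {z₀ : V → ℂ} {R B δ : ℝ} (hδ : 0 < δ)
    (hB : ∀ z ∈ Metric.closedBall z₀ (R + δ), ‖F (p, z)‖ ≤ B) :
    ∀ z ∈ Metric.closedBall z₀ R, ‖sliceDeriv l F (p, z)‖ ≤ B / δ := by
  intro z hz
  refine Complex.norm_deriv_le_of_forall_mem_sphere_norm_le hδ (h p hp z).diffContOnCl
    fun c hc => hB _ ?_
  rw [mem_closedBall_iff_norm] at hz ⊢
  have hsingle : ‖(Pi.single l c : V → ℂ)‖ = δ :=
    (Pi.norm_single (G := fun _ : V => ℂ) c).trans (mem_sphere_zero_iff_norm.1 hc)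
  rw [add_sub_right_comm]
  exact norm_add_le_of_le hz hsingle.le

variable [NormedAddCommGroup E]

theorem bddOnCompacts_sliceDeriv [Finite V] (h : IsSliceHol Ω F l)
    (hb : BddOnCompacts (Ω ×ˢ Set.univ) F) :
    BddOnCompacts (Ω ×ˢ Set.univ) (sliceDeriv l F) := by
  cases nonempty_fintype V
  intro K hK hKΩ
  obtain ⟨B, hB⟩ := hb ((Prod.fst '' K) ×ˢ Metric.cthickening 1 (Prod.snd '' K))
    ((hK.image continuous_fst).prod (hK.image continuous_snd).cthickening)
    (Set.prod_mono (Set.image_subset_iff.2 fun y hy => (hKΩ hy).1) (Set.subset_univ _))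
  refine ⟨B / 1, fun y hy => h.norm_sliceDeriv_le (hKΩ hy).1 (z₀ := y.2) (R := 0) one_pos
    (fun z hz => hB _ ⟨⟨y, hy, rfl⟩, ?_⟩) y.2 (by simp)⟩
  exact Metric.mem_cthickening_of_dist_le z y.2 1 _ ⟨y, hy, rfl⟩ (by simpa using hz)

variable [NormedSpace ℝ E]

theorem hasLineDerivAt (h : IsSliceHol Ω F l) {y : E × (V → ℂ)} (hy : y.1 ∈ Ω) (a : ℂ) :
    HasLineDerivAt ℝ F (a * sliceDeriv l F y) y (0, Pi.single l a) := by
  have hslice := h.hasDerivAt hy y.2 0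
  have hline : HasDerivAt (fun s : ℝ => (s : ℂ) * a) a 0 := by
    simpa using (Complex.ofRealCLM.hasDerivAt (x := (0 : ℝ))).mul_const a
  have hcomp := HasDerivAt.comp_of_eq (h₂ := fun c : ℂ => F (y.1, y.2 + Pi.single l c)) (0 : ℝ)
    hslice hline (by simp)
  simp only [Pi.single_zero, add_zero] at hcomp
  rw [mul_comm]
  refine hcomp.congr_of_eventuallyEq (.of_forall fun s => ?_)
  simp only [Function.comp]
  congr 1
  ext i
  · simp
  · rcases eq_or_ne i l with rfl | hi <;> simp [*]

variable [Finite V]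

theorem of_hasLineDerivAt (hΩ : IsOpen Ω) {F' F'' : E × (V → ℂ) → ℂ} {v : E × (V → ℂ)}
    (h : IsSliceHol Ω F l) (hb : BddOnCompacts (Ω ×ˢ Set.univ) F'')
    (h₁ : ∀ y, y.1 ∈ Ω → HasLineDerivAt ℝ F (F' y) y v)
    (h₂ : ∀ y, y.1 ∈ Ω → HasLineDerivAt ℝ F' (F'' y) y v) :
    IsSliceHol Ω F' l ∧
      ∀ y, y.1 ∈ Ω → HasLineDerivAt ℝ (sliceDeriv l F) (sliceDeriv l F' y) y v := by
  cases nonempty_fintype V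
  have main : ∀ p ∈ Ω, ∀ z : V → ℂ,
      DifferentiableAt ℂ (fun c : ℂ => F' (p, z + Pi.single l c)) 0 ∧
        HasLineDerivAt ℝ (sliceDeriv l F) (sliceDeriv l F' (p, z)) (p, z) v := by
    intro p hp z
    let γ : ℝ × ℂ → E × (V → ℂ) := fun q => (p + q.1 • v.1, z + Pi.single l q.2 + q.1 • v.2)
    have hγ : Continuous γ := by
      have hsingle := continuous_single (A := fun _ : V => ℂ) l
      fun_prop
    have hline : ∀ᶠ s : ℝ in 𝓝 0, p + s • v.1 ∈ Ω :=
      (Continuous.tendsto' (by fun_prop) _ p (by simp)).eventually (hΩ.mem_nhds hp)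
    obtain ⟨r, hr, hrΩ⟩ := Metric.nhds_basis_closedBall.eventually_iff.1 hline
    obtain ⟨B, hB⟩ := hb _
      (((isCompact_closedBall (0 : ℝ) r).prod (isCompact_closedBall (0 : ℂ) 1)).image hγ)
      (by rintro _ ⟨q, hq, rfl⟩; exact ⟨hrΩ hq.1, trivial⟩)
    have hmem : ∀ s ∈ Metric.ball (0 : ℝ) r, ∀ c, (γ (s, c)).1 ∈ Ω := fun s hs _ =>
      hrΩ (Metric.ball_subset_closedBall hs)
    have key := differentiableOn_and_hasDerivAt_deriv (H := fun s c => F (γ (s, c)))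
      (H' := fun s c => F' (γ (s, c))) (H'' := fun s c => F'' (γ (s, c))) hr one_pos
      (fun s hs c _ => hasDerivAt_add_smul (z := (p, z + Pi.single l c)) (h₁ _ (hmem s hs c)))
      (fun s hs c _ => hasDerivAt_add_smul (z := (p, z + Pi.single l c)) (h₂ _ (hmem s hs c)))
      (fun s hs c hc => hB _ ⟨(s, c), ⟨Metric.ball_subset_closedBall hs,
        Metric.ball_subset_closedBall hc⟩, rfl⟩)
      (fun s hs => by
        simpa [γ, add_right_comm] using (h _ (hmem s hs 0) (z + s • v.2)).differentiableOn)
    refine ⟨by simpa [γ] using key.1.differentiableAt (Metric.ball_mem_nhds 0 one_pos), ?_⟩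
    simpa [HasLineDerivAt, sliceDeriv, γ, add_right_comm] using key.2
  exact ⟨of_differentiableAt fun p hp z => (main p hp z).1, fun y hy => (main y.1 hy y.2).2⟩

theorem sliceDeriv (hΩ : IsOpen Ω) {l' : V} (h : IsSliceHol Ω F l) (h' : IsSliceHol Ω F l')
    (hb : BddOnCompacts (Ω ×ˢ Set.univ) F) : IsSliceHol Ω (sliceDeriv l' F) l :=
  (h.of_hasLineDerivAt hΩ (h'.sliceDeriv_self.bddOnCompacts_sliceDeriv
    (h'.bddOnCompacts_sliceDeriv hb)) (fun _ hy => by simpa using h'.hasLineDerivAt hy 1)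
    fun _ hy => by simpa using h'.sliceDeriv_self.hasLineDerivAt hy 1).1

end IsSliceHol

end SliceDerivatives

section SeparateRegularity

variable {E V ι : Type*} [NormedAddCommGroup E] [NormedSpace ℝ E] [DecidableEq V]
  {b : ι → E} {f : E × (V → ℂ) → ℂ} {Ω : Set E}

/-- The mixed derivative of `f`: first the real derivatives along `b` over the word `α`, then the
complex derivatives in the coordinates listed in `γ`. -/
noncomputable def mixedDeriv (b : ι → E) (f : E × (V → ℂ) → ℂ) (α : List ι) (γ : List V) :
    E × (V → ℂ) → ℂ :=
  γ.foldr sliceDeriv fun y => wordDeriv b α (fun p => f (p, y.2)) y.1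

theorem mixedDeriv_cons (α : List ι) (l : V) (γ : List V) :
    mixedDeriv b f α (l :: γ) = sliceDeriv l (mixedDeriv b f α γ) := rfl

/-- The directions in `E × (V → ℂ)` along which derivatives are taken: those of `b` in the first
factor and the real coordinate directions in the second. -/
def prodDir (b : ι → E) : ι ⊕ V → E × (V → ℂ) :=
  Sum.elim (fun i => (b i, 0)) fun l => (0, Pi.single l 1)

/-- Functions that are smooth in the first variable, holomorphic in each coordinate of the second,
and whose derivatives in the first variable are locally bounded jointly in both variables. -/
structure IsSeparatelyRegular (b : ι → E) (Ω : Set E) (f : E × (V → ℂ) → ℂ) : Prop where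
  isOpen : IsOpen Ω
  contDiffOn_left : ∀ z, ContDiffOn ℝ ∞ (fun p => f (p, z)) Ω
  isSliceHol : ∀ l, IsSliceHol Ω f l
  bddOnCompacts : ∀ α : List ι, BddOnCompacts (Ω ×ˢ Set.univ) (mixedDeriv b f α [])

namespace IsSeparatelyRegular

theorem hasLineDerivAt_nil (hf : IsSeparatelyRegular b Ω f) (α : List ι) (i : ι)
    {y : E × (V → ℂ)} (hy : y.1 ∈ Ω) :
    HasLineDerivAt ℝ (mixedDeriv b f α []) (mixedDeriv b f (i :: α) [] y) y (b i, 0) := by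
  have hline := (differentiableAt_of_contDiffOn hf.isOpen (by simp)
    (contDiffOn_wordDeriv (e := b) hf.isOpen (hf.contDiffOn_left y.2) α)
    hy).hasFDerivAt.hasLineDerivAt (b i)
  unfold HasLineDerivAt at hline ⊢
  simpa [mixedDeriv, wordDeriv_cons, dirDeriv] using hline

theorem isSliceHol_nil [Finite V] (hf : IsSeparatelyRegular b Ω f) (α : List ι) (l : V) :
    IsSliceHol Ω (mixedDeriv b f α []) l := by
  induction α with
  | nil => exact hf.isSliceHol l
  | cons i α ih =>
    exact (ih.of_hasLineDerivAt hf.isOpen (hf.bddOnCompacts (i :: i :: α))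
      (fun _ hy => hf.hasLineDerivAt_nil α i hy)
      fun _ hy => hf.hasLineDerivAt_nil (i :: α) i hy).1

theorem mixedDeriv_regular [Finite V] (hf : IsSeparatelyRegular b Ω f) (α : List ι) (γ : List V) :
    BddOnCompacts (Ω ×ˢ Set.univ) (mixedDeriv b f α γ) ∧
      (∀ l, IsSliceHol Ω (mixedDeriv b f α γ) l) ∧
      ∀ i y, y.1 ∈ Ω →
        HasLineDerivAt ℝ (mixedDeriv b f α γ) (mixedDeriv b f (i :: α) γ y) y (b i, 0) := by
  induction γ generalizing α with
  | nil =>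
    exact ⟨hf.bddOnCompacts α, hf.isSliceHol_nil α, fun i _ hy => hf.hasLineDerivAt_nil α i hy⟩
  | cons l γ ih =>
    obtain ⟨hbdd, hhol, hline⟩ := ih α
    exact ⟨(hhol l).bddOnCompacts_sliceDeriv hbdd,
      fun l' => (hhol l').sliceDeriv hf.isOpen (hhol l) hbdd,
      fun i => ((hhol l).of_hasLineDerivAt hf.isOpen (ih (i :: i :: α)).1 (hline i)
        ((ih (i :: α)).2.2 i)).2⟩

theorem norm_mixedDeriv_le [Fintype V] (hf : IsSeparatelyRegular b Ω f) (α : List ι) {p : E}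
    (hp : p ∈ Ω) {z₀ : V → ℂ} {R B δ : ℝ} (hδ : 0 < δ)
    (h : ∀ z ∈ Metric.closedBall z₀ R, ‖mixedDeriv b f α [] (p, z)‖ ≤ B) (γ : List V) :
    ∀ z ∈ Metric.closedBall z₀ (R - γ.length * δ),
      ‖mixedDeriv b f α γ (p, z)‖ ≤ B / δ ^ γ.length := by
  induction γ with
  | nil => simpa using h
  | cons l γ ih =>
    rw [List.length_cons, pow_succ, ← div_div]
    refine ((hf.mixedDeriv_regular α γ).2.1 l).norm_sliceDeriv_le hp hδ ?_
    rwa [show R - ((γ.length + 1 : ℕ) : ℝ) * δ + δ = R - γ.length * δ by push_cast; ring]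

variable [FiniteDimensional ℝ E] [Finite ι] {b : Module.Basis ι ℝ E}

theorem contDiffOn_mixedDeriv [Fintype V] (hf : IsSeparatelyRegular b Ω f) (α : List ι)
    (γ : List V) :
    ContDiffOn ℝ ∞ (mixedDeriv b f α γ) (Ω ×ˢ Set.univ) := by
  have hO : IsOpen (Ω ×ˢ (Set.univ : Set (V → ℂ))) := hf.isOpen.prod isOpen_univ
  let B := b.prod (Pi.basis fun _ : V => Complex.basisOneI)
  -- The scalar multiples close the family under the direction `i • ∂/∂z_l`.
  suffices h : ∀ F ∈ Set.range fun q : ℂ × List ι × List V =>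
      fun y => q.1 * mixedDeriv b f q.2.1 q.2.2 y, ContDiffOn ℝ ∞ F (Ω ×ˢ Set.univ) by
    simpa using h _ ⟨(1, α, γ), rfl⟩
  refine contDiffOn_of_family B hO _ ?_ ?_
  · rintro _ ⟨⟨c, α, γ⟩, rfl⟩ (i | ⟨l, t⟩)
    · refine ⟨_, ⟨(c, i :: α, γ), rfl⟩, fun y hy => ?_⟩
      rw [show B (Sum.inl i) = (b i, 0) by simp [B]]
      exact HasDerivAt.const_mul c ((hf.mixedDeriv_regular α γ).2.2 i y hy.1)
    · refine ⟨_, ⟨(c * Complex.basisOneI t, α, l :: γ), rfl⟩, fun y hy => ?_⟩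
      rw [show B (Sum.inr ⟨l, t⟩) = (0, Pi.single l (Complex.basisOneI t)) by
        simp [B, Pi.basis_apply]]
      simp only [mixedDeriv_cons, mul_assoc]
      exact HasDerivAt.const_mul c (((hf.mixedDeriv_regular α γ).2.1 l).hasLineDerivAt hy.1 _)
  · rintro _ ⟨⟨c, α, γ⟩, rfl⟩ y hy
    obtain ⟨r, hr, hball⟩ := Metric.nhds_basis_closedBall.mem_iff.1 (hO.mem_nhds hy)
    obtain ⟨C, hC⟩ := (hf.mixedDeriv_regular α γ).1 _ (isCompact_closedBall y r) hball
    refine ⟨‖c‖ * C, Filter.eventually_of_mem (Metric.closedBall_mem_nhds y hr) fun z hz => ?_⟩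
    rw [norm_mul]
    gcongr
    exact hC z hz

theorem contDiffOn [Fintype V] (hf : IsSeparatelyRegular b Ω f) :
    ContDiffOn ℝ ∞ f (Ω ×ˢ Set.univ) :=
  hf.contDiffOn_mixedDeriv [] []

theorem wordDeriv_eqOn_mixedDeriv [Fintype V] (hf : IsSeparatelyRegular b Ω f)
    (w : List (ι ⊕ V)) :
    Set.EqOn (wordDeriv (prodDir b) w f)
      (mixedDeriv b f (w.filterMap Sum.getLeft?) (w.filterMap Sum.getRight?))
      (Ω ×ˢ Set.univ) := by
  have hO : IsOpen (Ω ×ˢ (Set.univ : Set (V → ℂ))) := hf.isOpen.prod isOpen_univ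
  induction w with
  | nil => exact fun y _ => rfl
  | cons m w ih =>
    intro y hy
    rw [wordDeriv_cons, dirDeriv_eqOn hO ih _ hy]
    have hline := (differentiableAt_of_contDiffOn hO (by simp)
      (hf.contDiffOn_mixedDeriv (w.filterMap Sum.getLeft?) (w.filterMap Sum.getRight?))
      hy).hasFDerivAt.hasLineDerivAt (prodDir b m)
    rcases m with i | l
    · exact hline.unique ((hf.mixedDeriv_regular _ _).2.2 i y hy.1)
    · have hslice := ((hf.mixedDeriv_regular (w.filterMap Sum.getLeft?)
        (w.filterMap Sum.getRight?)).2.1 l).hasLineDerivAt hy.1 1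
      rw [one_mul] at hslice
      exact hline.unique hslice

theorem isHolSnd [Finite V] (hf : IsSeparatelyRegular b Ω f) :
    IsHolSnd (Ω ×ˢ Set.univ) f := by
  cases nonempty_fintype V
  intro y hy z
  have hd := (differentiableAt_of_contDiffOn (hf.isOpen.prod isOpen_univ) (by simp)
    hf.contDiffOn hy).hasFDerivAt
  have hsum : ∀ z : V → ℂ, fderiv ℝ f y (0, z) = ∑ l, z l * sliceDeriv l f y := by
    intro z
    have hz : ((0, z) : E × (V → ℂ)) = ∑ l, (0, Pi.single l (z l)) := by
      ext i <;> simp [Prod.fst_sum, Prod.snd_sum, Finset.sum_apply, Pi.single_apply]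
    rw [hz, map_sum]
    exact Finset.sum_congr rfl fun l _ =>
      (hd.hasLineDerivAt _).unique ((hf.isSliceHol l).hasLineDerivAt hy.1 (z l))
  rw [hsum, hsum, Finset.mul_sum]
  simp [mul_assoc]

end IsSeparatelyRegular

theorem length_filterMap_getLeft_add_getRight {α β : Type*} (w : List (α ⊕ β)) :
    (w.filterMap Sum.getLeft?).length + (w.filterMap Sum.getRight?).length = w.length := by
  induction w with
  | nil => rfl
  | cons m w ih => rcases m with i | l <;> simp [List.filterMap_cons] <;> omega

theorem succ_pow_le_exp_pow_mul_factorial (k : ℕ) :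
    ((k : ℝ) + 1) ^ k ≤ Real.exp 1 ^ (k + 1) * k.factorial := by
  have h := Real.pow_div_factorial_le_exp ((k : ℝ) + 1) (by positivity) k
  rw [div_le_iff₀ (by positivity)] at h
  rw [← Real.exp_nat_mul, mul_one]
  exact_mod_cast h

theorem IsWeightSequence.cauchy_bound_le {M : ℕ → ℝ} (hM : IsWeightSequence M) {C r : ℝ}
    (hC : 0 ≤ C) (hr : 0 < r) (a k : ℕ) :
    C ^ (a + 1) * M a / (r / (k + 1)) ^ k ≤
      C * Real.exp 1 * ((1 + C) * (1 + Real.exp 1 / r)) ^ (a + k) * M (a + k) := by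
  have hMa := hM.pos a
  have hpow : ∀ {x : ℝ} (m : ℕ), 0 ≤ x → m ≤ a + k → x ^ m ≤ (1 + x) ^ (a + k) := fun m hx hm =>
    (pow_le_pow_left₀ hx (by linarith) m).trans (pow_le_pow_right₀ (by linarith) hm)
  calc C ^ (a + 1) * M a / (r / (k + 1)) ^ k
      = C ^ (a + 1) * M a * (((k : ℝ) + 1) ^ k / r ^ k) := by rw [div_pow]; field_simp
    _ ≤ C ^ (a + 1) * M a * ((Real.exp 1 ^ (k + 1) * k.factorial) / r ^ k) := by
        gcongr
        exact succ_pow_le_exp_pow_mul_factorial k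
    _ = C * Real.exp 1 * (C ^ a * (Real.exp 1 / r) ^ k) * (M a * k.factorial) := by
        rw [div_pow]; ring
    _ ≤ C * Real.exp 1 * ((1 + C) ^ (a + k) * (1 + Real.exp 1 / r) ^ (a + k)) * M (a + k) := by
        gcongr
        · exact hpow a hC (by omega)
        · exact hpow k (by positivity) (by omega)
        · exact hM.mul_factorial_le a k
    _ = _ := by rw [mul_pow]

variable [FiniteDimensional ℝ E] [Fintype V] [Finite ι] {b : Module.Basis ι ℝ E} {M : ℕ → ℝ}

theorem exists_inDCClass_of_separate (hM : IsWeightSequence M) (hΩ : IsOpen Ω)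
    (hsmooth : ∀ z, ContDiffOn ℝ ∞ (fun p => f (p, z)) Ω) (hhol : ∀ l, IsSliceHol Ω f l)
    (hbound : ∀ K : Set (E × (V → ℂ)), IsCompact K → K ⊆ Ω ×ˢ Set.univ → ∃ C > (0 : ℝ),
      ∀ α : List ι, ∀ y ∈ K,
        ‖wordDeriv b α (fun p => f (p, y.2)) y.1‖ ≤ C ^ (α.length + 1) * M α.length)
    {y₀ : E × (V → ℂ)} (hy₀ : y₀.1 ∈ Ω) :
    ∃ r > 0, InDCClass (prodDir b) (Metric.ball y₀ r) M f := by
  have hf : IsSeparatelyRegular b Ω f := ⟨hΩ, hsmooth, hhol, fun α K hK hKΩ =>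
    let ⟨_, _, h⟩ := hbound K hK hKΩ; ⟨_, fun y hy => h α y hy⟩⟩
  obtain ⟨r, hr, hsub⟩ := Metric.nhds_basis_closedBall.mem_iff.1 (hΩ.mem_nhds hy₀)
  rw [← Prod.mk.eta (p := y₀)]
  simp only [← ball_prod_same]
  obtain ⟨C, hC, hCb⟩ := hbound (Metric.closedBall y₀.1 r ×ˢ Metric.closedBall y₀.2 (2 * r))
    ((isCompact_closedBall _ _).prod (isCompact_closedBall _ _))
    (Set.prod_mono hsub (Set.subset_univ _))
  have hball : Metric.ball y₀.1 r ⊆ Ω := Metric.ball_subset_closedBall.trans hsub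
  have hsubO : Metric.ball y₀.1 r ×ˢ Metric.ball y₀.2 r ⊆ Ω ×ˢ (Set.univ : Set (V → ℂ)) :=
    Set.prod_mono hball (Set.subset_univ _)
  refine ⟨r, hr, C * Real.exp 1, (1 + C) * (1 + Real.exp 1 / r), by positivity,
    by positivity, hf.contDiffOn.mono hsubO, hf.isHolSnd.mono hsubO, fun w y hy => ?_⟩
  rw [hf.wordDeriv_eqOn_mixedDeriv w (hsubO hy), add_zero,
    ← length_filterMap_getLeft_add_getRight w]
  set k := (w.filterMap Sum.getRight?).length with hk
  -- Cauchy's estimate is applied `k` times, each time giving up `r / (k + 1)` of the radius.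
  refine (hf.norm_mixedDeriv_le _ (hball hy.1) (z₀ := y₀.2) (R := 2 * r) (δ := r / (k + 1))
    (by positivity) (fun z hz => hCb _ (y.1, z) ⟨Metric.ball_subset_closedBall hy.1, hz⟩)
    _ y.2 ?_).trans (hM.cauchy_bound_le hC.le hr _ k)
  rw [Metric.mem_closedBall, ← hk]
  have hy₂ : dist y.2 y₀.2 < r := hy.2
  have hloss : (k : ℝ) * (r / (k + 1)) ≤ r := by
    rw [mul_div_assoc', div_le_iff₀ (by positivity)]
    nlinarith
  linarith

end SeparateRegularity

section CoordinateDerivatives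

theorem wordDeriv_replicate {E G Y : Type*} [NormedAddCommGroup E] [NormedSpace ℝ E]
    [NormedAddCommGroup G] [NormedSpace ℝ G] (e : Y → E) (m : Y) (k : ℕ) (F : E → G) :
    wordDeriv e (List.replicate k m) F = (dirDeriv (e m))^[k] F := by
  induction k with
  | zero => rfl
  | succ k ih => rw [List.replicate_succ, Function.iterate_succ_apply', ← ih, wordDeriv_cons]

theorem foldr_comp_wordDeriv {E G Y : Type*} [NormedAddCommGroup E] [NormedSpace ℝ E]
    [NormedAddCommGroup G] [NormedSpace ℝ G] (e : Y → E) (L : List (List Y)) (F : E → G) :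
    (L.map (wordDeriv e)).foldr (· ∘ ·) id F = wordDeriv e L.flatten F := by
  induction L with
  | nil => rfl
  | cons w L ih => simp [wordDeriv_append, ih]

variable {d n : ℕ}

/-- The standard basis of `ℝ^d × ℝ^n`. -/
noncomputable def stdBasis (d n : ℕ) : Module.Basis (Fin d ⊕ Fin n) ℝ (PSp d n) :=
  (Pi.basisFun ℝ (Fin d)).prod (Pi.basisFun ℝ (Fin n))

theorem stdBasis_inl (i : Fin d) : stdBasis d n (Sum.inl i) = (Pi.single i 1, 0) := by
  simp [stdBasis]

theorem stdBasis_inr (j : Fin n) : stdBasis d n (Sum.inr j) = (0, Pi.single j 1) := by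
  simp [stdBasis]

/-- The word representing the multi-index `(α, β)`: its letters in increasing order. -/
def multiIndexWord (α : Fin d → ℕ) (β : Fin n → ℕ) : List (Fin d ⊕ Fin n) :=
  ((List.ofFn fun i => List.replicate (α i) (Sum.inl i)) ++
    (List.ofFn fun j => List.replicate (β j) (Sum.inr j))).flatten

theorem length_multiIndexWord (α : Fin d → ℕ) (β : Fin n → ℕ) :
    (multiIndexWord α β).length = (∑ i, α i) + ∑ j, β j := by
  simp [multiIndexWord, List.length_flatten, List.map_ofFn, List.sum_ofFn, Function.comp_def]

theorem PDxt_eq_wordDeriv (α : Fin d → ℕ) (β : Fin n → ℕ) (g : PSp d n → ℂ) :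
    PDxt α β g = wordDeriv (stdBasis d n) (multiIndexWord α β) g := by
  rw [multiIndexWord, ← foldr_comp_wordDeriv, List.map_append, List.map_ofFn, List.map_ofFn]
  simp only [Function.comp_def, funext (wordDeriv_replicate (G := ℂ) (stdBasis d n) _ _),
    stdBasis_inl, stdBasis_inr]
  rfl

theorem exists_perm_multiIndexWord (w : List (Fin d ⊕ Fin n)) :
    ∃ α β, w.Perm (multiIndexWord α β) := by
  -- The default `BEq` instance on a sum type is not known to be lawful.
  let _ : BEq (Fin d ⊕ Fin n) := instBEqOfDecidableEq
  refine ⟨fun i => w.count (Sum.inl i), fun j => w.count (Sum.inr j), List.perm_iff_count.2 ?_⟩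
  rintro (i | j) <;>
    simp [multiIndexWord, List.count_flatten, List.map_ofFn, List.sum_ofFn, Function.comp_def,
      List.count_replicate]

theorem norm_wordDeriv_stdBasis_le {Ω : Set (PSp d n)} (hΩ : IsOpen Ω) {g : PSp d n → ℂ}
    (hg : ContDiffOn ℝ ∞ g Ω) {B : ℕ → ℝ} {p : PSp d n} (hp : p ∈ Ω)
    (h : ∀ (α : Fin d → ℕ) (β : Fin n → ℕ), ‖PDxt α β g p‖ ≤ B ((∑ i, α i) + ∑ j, β j))
    (w : List (Fin d ⊕ Fin n)) : ‖wordDeriv (stdBasis d n) w g p‖ ≤ B w.length := by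
  obtain ⟨α, β, hperm⟩ := exists_perm_multiIndexWord w
  rw [wordDeriv_perm hΩ hg hperm hp, ← PDxt_eq_wordDeriv, hperm.length_eq, length_multiIndexWord]
  exact h α β

end CoordinateDerivatives

section NullLagrangian

open scoped Convolution Pointwise

variable {E : Type*} [NormedAddCommGroup E] [NormedSpace ℝ E] {ι κ : Type*}

/-- The matrix of the derivatives of the functions `h i` in the directions `e j`. -/
noncomputable def jacobianMatrix (e : κ → E) (h : ι → E → ℂ) (q : E) : Matrix ι κ ℂ :=
  Matrix.of fun i j => fderiv ℝ (h i) q (e j)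

@[simp]
theorem jacobianMatrix_apply (e : κ → E) (h : ι → E → ℂ) (q : E) (i : ι) (j : κ) :
    jacobianMatrix e h q i j = fderiv ℝ (h i) q (e j) := rfl

section Permutations

variable [Fintype ι] [DecidableEq ι]

theorem det_eq_sum_perm_prod_erase (A : Matrix ι ι ℂ) (i₀ : ι) :
    A.det = ∑ σ : Equiv.Perm ι, (Equiv.Perm.sign σ : ℂ) *
      ((∏ i ∈ Finset.univ.erase i₀, A i (σ i)) * A i₀ (σ i₀)) := by
  rw [← Matrix.det_transpose, Matrix.det_apply']
  refine Finset.sum_congr rfl fun σ _ => ?_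
  rw [Finset.prod_erase_mul _ _ (Finset.mem_univ i₀)]
  rfl

theorem norm_det_le_sum_prod (A : Matrix ι ι ℂ) :
    ‖A.det‖ ≤ ∑ σ : Equiv.Perm ι, ∏ i, ‖A i (σ i)‖ := by
  rw [← Matrix.det_transpose, Matrix.det_apply']
  refine norm_sum_le_of_le _ fun σ _ => ?_
  have hsign : ‖((Equiv.Perm.sign σ : ℤ) : ℂ)‖ = 1 := by
    rcases Int.units_eq_one_or (Equiv.Perm.sign σ) with h | h <;> simp [h]
  rw [norm_mul, norm_prod, hsign, one_mul]
  rfl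

theorem sum_perm_eq_zero_of_mul_swap {i l : ι} {T : Equiv.Perm ι → ℂ}
    (hT : ∀ σ, T (σ * Equiv.swap i l) = -T σ) : ∑ σ, T σ = 0 := by
  rw [← self_eq_neg, ← Finset.sum_neg_distrib]
  simp_rw [← hT]
  exact (Equiv.sum_comp (Equiv.mulRight (Equiv.swap i l)) T).symm

-- The rows of the cofactor matrix of a Jacobian are divergence free, since second derivatives are
-- symmetric while the sign of a permutation changes under a transposition.
theorem sum_sign_mul_fderiv_prod_erase_eq_zero (e : ι → E) {h : ι → E → ℂ} {q : E}
    (hs : ∀ i, ContDiffAt ℝ 2 (h i) q) (i₀ : ι) :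
    ∑ σ : Equiv.Perm ι, (Equiv.Perm.sign σ : ℂ) *
      fderiv ℝ (fun q => ∏ i ∈ Finset.univ.erase i₀, fderiv ℝ (h i) q (e (σ i))) q
        (e (σ i₀)) = 0 := by
  have hd : ∀ i j, DifferentiableAt ℝ (fun q => fderiv ℝ (h i) q (e j)) q := fun i j =>
    (((hs i).fderiv_right (m := 1) le_rfl).differentiableAt one_ne_zero).clm_apply
      (differentiableAt_const _)
  have hprod : ∀ σ : Equiv.Perm ι,
      fderiv ℝ (fun q => ∏ i ∈ Finset.univ.erase i₀, fderiv ℝ (h i) q (e (σ i))) q (e (σ i₀)) =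
        ∑ l ∈ Finset.univ.erase i₀,
          (∏ i ∈ (Finset.univ.erase i₀).erase l, fderiv ℝ (h i) q (e (σ i))) *
            fderiv ℝ (fun q => fderiv ℝ (h l) q (e (σ l))) q (e (σ i₀)) := by
    intro σ
    rw [(HasFDerivAt.finsetProd fun i _ => (hd i (σ i)).hasFDerivAt).fderiv]
    simp
  simp_rw [hprod, Finset.mul_sum]
  rw [Finset.sum_comm]
  refine Finset.sum_eq_zero fun l hl =>
    sum_perm_eq_zero_of_mul_swap (i := i₀) (l := l) fun σ => ?_
  have hfix : ∀ i ∈ (Finset.univ.erase i₀).erase l, Equiv.swap i₀ l i = i := fun i hi =>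
    Equiv.swap_apply_of_ne_of_ne (Finset.ne_of_mem_erase (Finset.mem_of_mem_erase hi))
      (Finset.ne_of_mem_erase hi)
  rw [Equiv.Perm.sign_mul, Equiv.Perm.sign_swap (Finset.ne_of_mem_erase hl).symm,
    Finset.prod_congr rfl fun i hi => by rw [Equiv.Perm.mul_apply, hfix i hi]]
  simp only [Equiv.Perm.mul_apply, Equiv.swap_apply_left, Equiv.swap_apply_right]
  rw [fderiv_fderiv_apply_comm (hs l) (e (σ i₀)) (e (σ l))]
  push_cast
  ring

end Permutations

theorem continuousOn_det_jacobianMatrix [Fintype ι] [DecidableEq ι] (e : ι → E) {Ω : Set E}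
    (hΩ : IsOpen Ω) {h : ι → E → ℂ} (hs : ∀ i, ContDiffOn ℝ 1 (h i) Ω) :
    ContinuousOn (fun q => (jacobianMatrix e h q).det) Ω := by
  simp only [Matrix.det_apply', jacobianMatrix_apply]
  exact continuousOn_finsetSum _ fun σ _ => continuousOn_const.mul <|
    continuousOn_finsetProd _ fun i _ =>
      ((hs (σ i)).continuousOn_fderiv_of_isOpen hΩ le_rfl).clm_apply continuousOn_const

variable [FiniteDimensional ℝ E] [MeasurableSpace E] [BorelSpace E] (μ : Measure E)
  [μ.IsAddHaarMeasure]

section Mollification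

variable (φ : ContDiffBump (0 : E)) {g : E → ℂ}

theorem fderiv_normed_convolution_apply (hg : ContDiff ℝ 1 g) (hc : HasCompactSupport g)
    (q v : E) :
    fderiv ℝ (φ.normed μ ⋆[ContinuousLinearMap.lsmul ℝ ℝ, μ] g) q v =
      (φ.normed μ ⋆[ContinuousLinearMap.lsmul ℝ ℝ, μ] fun x => fderiv ℝ g x v) q := by
  have hφ : LocallyIntegrable (φ.normed μ) μ := φ.continuous_normed.locallyIntegrable
  rw [(hc.hasFDerivAt_convolution_right (ContinuousLinearMap.lsmul ℝ ℝ) hφ hg q).fderiv,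
    convolution_precompR_apply _ hφ (hc.fderiv ℝ) (hg.continuous_fderiv one_ne_zero)]

theorem norm_normed_convolution_le {B : ℝ} (hB : ∀ x, ‖g x‖ ≤ B) (q : E) :
    ‖(φ.normed μ ⋆[ContinuousLinearMap.lsmul ℝ ℝ, μ] g) q‖ ≤ B := by
  calc ‖(φ.normed μ ⋆[ContinuousLinearMap.lsmul ℝ ℝ, μ] g) q‖
      ≤ ∫ t, φ.normed μ t * B ∂μ := by
        refine norm_integral_le_of_norm_le (φ.integrable_normed.mul_const B)
          (.of_forall fun t => ?_)
        rw [ContinuousLinearMap.lsmul_apply, norm_smul,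
          Real.norm_of_nonneg (φ.nonneg_normed t)]
        exact mul_le_mul_of_nonneg_left (hB _) (φ.nonneg_normed t)
    _ = B := by rw [integral_mul_const, φ.integral_normed, one_mul]

omit φ in
include μ in
theorem exists_contDiff_tendsto_fderiv (hg : ContDiff ℝ 1 g) (hc : HasCompactSupport g) :
    ∃ G : ℕ → E → ℂ, (∀ k, ContDiff ℝ ∞ (G k)) ∧
      (∃ K, IsCompact K ∧ ∀ k, tsupport (G k) ⊆ K) ∧
      (∃ B, ∀ k q v, ‖fderiv ℝ (G k) q v‖ ≤ B * ‖v‖) ∧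
      ∀ q v, Filter.Tendsto (fun k => fderiv ℝ (G k) q v) Filter.atTop
        (𝓝 (fderiv ℝ g q v)) := by
  let φ : ℕ → ContDiffBump (0 : E) := fun k =>
    ⟨1 / ((k : ℝ) + 1) / 2, 1 / ((k : ℝ) + 1), by positivity, half_lt_self (by positivity)⟩
  have hcd : Continuous (fderiv ℝ g) := hg.continuous_fderiv one_ne_zero
  obtain ⟨B, hB⟩ := hcd.norm.bddAbove_range_of_hasCompactSupport (hc.fderiv ℝ).norm
  refine ⟨fun k => (φ k).normed μ ⋆[ContinuousLinearMap.lsmul ℝ ℝ, μ] g, fun k => ?_,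
    ⟨Metric.closedBall (0 : E) 1 + tsupport g, ?_, fun k => ?_⟩,
    ⟨B, fun k q v => ?_⟩, fun q v => ?_⟩
  · exact (φ k).hasCompactSupport_normed.contDiff_convolution_left _ (φ k).contDiff_normed
      hg.continuous.locallyIntegrable
  · exact (isCompact_closedBall 0 1).add hc
  · refine closure_minimal ((support_convolution_subset _).trans (Set.add_subset_add ?_
      (subset_tsupport g))) ((isCompact_closedBall 0 1).add hc).isClosed
    rw [ContDiffBump.support_normed_eq]
    refine Metric.ball_subset_closedBall.trans (Metric.closedBall_subset_closedBall ?_)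
    exact (div_le_one (by positivity)).2 (le_add_of_nonneg_left k.cast_nonneg)
  · rw [fderiv_normed_convolution_apply μ (φ k) hg hc]
    exact norm_normed_convolution_le μ (φ k)
      (fun x => (fderiv ℝ g x).le_of_opNorm_le (hB ⟨x, rfl⟩) v) q
  · simp only [fun k => fderiv_normed_convolution_apply μ (φ k) hg hc q v]
    exact ContDiffBump.convolution_tendsto_right_of_continuous (φ := φ)
      tendsto_one_div_add_atTop_nhds_zero_nat (hcd.clm_apply continuous_const) q

end Mollification

variable [Fintype ι] [DecidableEq ι] (e : ι → E) {h : ι → E → ℂ}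

theorem integral_det_jacobianMatrix_eq_zero_of_contDiff_two (hs : ∀ i, ContDiff ℝ 2 (h i))
    (hc : ∀ i, HasCompactSupport (h i)) (i₀ : ι) :
    ∫ q, (jacobianMatrix e h q).det ∂μ = 0 := by
  have hd : ∀ i v, ContDiff ℝ 1 fun q => fderiv ℝ (h i) q v := fun i v =>
    ((hs i).fderiv_right (m := 1) le_rfl).clm_apply contDiff_const
  let P : Equiv.Perm ι → E → ℂ := fun σ q => ∏ i ∈ Finset.univ.erase i₀, fderiv ℝ (h i) q (e (σ i))
  have hP : ∀ σ, ContDiff ℝ 1 (P σ) := fun σ => contDiff_prod fun i _ => hd i (e (σ i))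
  have hPd : ∀ σ, Continuous fun q => fderiv ℝ (P σ) q (e (σ i₀)) := fun σ =>
    ((hP σ).continuous_fderiv one_ne_zero).clm_apply continuous_const
  have hint₁ : ∀ σ, Integrable (fun q => P σ q * fderiv ℝ (h i₀) q (e (σ i₀))) μ := fun σ =>
    ((hP σ).continuous.mul (hd i₀ _).continuous).integrable_of_hasCompactSupport
      ((hc i₀).fderiv_apply ℝ _).mul_left
  have hint₂ : ∀ σ, Integrable (fun q => fderiv ℝ (P σ) q (e (σ i₀)) * h i₀ q) μ := fun σ =>
    ((hPd σ).mul (hs i₀).continuous).integrable_of_hasCompactSupport (hc i₀).mul_left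
  have hparts : ∀ σ, ∫ q, P σ q * fderiv ℝ (h i₀) q (e (σ i₀)) ∂μ =
      -∫ q, fderiv ℝ (P σ) q (e (σ i₀)) * h i₀ q ∂μ := fun σ =>
    integral_mul_fderiv_eq_neg_fderiv_mul_of_integrable (hint₂ σ) (hint₁ σ)
      (((hP σ).continuous.mul (hs i₀).continuous).integrable_of_hasCompactSupport
        (hc i₀).mul_left)
      (fun x _ => (hP σ).differentiable one_ne_zero x)
      (fun x _ => (hs i₀).differentiable two_ne_zero x)
  calc ∫ q, (jacobianMatrix e h q).det ∂μ
      = ∫ q, ∑ σ : Equiv.Perm ι,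
          (Equiv.Perm.sign σ : ℂ) * (P σ q * fderiv ℝ (h i₀) q (e (σ i₀))) ∂μ := by
        simp_rw [det_eq_sum_perm_prod_erase _ i₀]; rfl
    _ = -∫ q, ∑ σ : Equiv.Perm ι,
          (Equiv.Perm.sign σ : ℂ) * (fderiv ℝ (P σ) q (e (σ i₀)) * h i₀ q) ∂μ := by
        rw [integral_finsetSum _ fun σ _ => (hint₁ σ).const_mul _,
          integral_finsetSum _ fun σ _ => (hint₂ σ).const_mul _, ← Finset.sum_neg_distrib]
        simp_rw [integral_const_mul, hparts, mul_neg]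
    _ = 0 := by
        simp_rw [← mul_assoc, ← Finset.sum_mul, P,
          sum_sign_mul_fderiv_prod_erase_eq_zero e (fun i => (hs i).contDiffAt) i₀]
        simp

theorem integral_det_jacobianMatrix_eq_zero (hs : ∀ i, ContDiff ℝ 1 (h i))
    (hc : ∀ i, HasCompactSupport (h i)) (i₀ : ι) :
    ∫ q, (jacobianMatrix e h q).det ∂μ = 0 := by
  choose G hG hGK hGB hlim using fun i => exists_contDiff_tendsto_fderiv μ (hs i) (hc i)
  choose K hK hGK using hGK
  choose B hB using hGB
  refine tendsto_nhds_unique (f := fun k => ∫ q, (jacobianMatrix e (fun i => G i k) q).det ∂μ)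
    (tendsto_integral_of_dominated_convergence
      ((K i₀).indicator fun _ => ∑ σ : Equiv.Perm ι, ∏ i, B i * ‖e (σ i)‖) (fun k => ?_) ?_
      (fun k => .of_forall fun q => ?_) (.of_forall fun q => ?_)) ?_
  · exact (continuousOn_univ.1 <| continuousOn_det_jacobianMatrix e isOpen_univ fun i =>
      ((hG i k).of_le ENat.LEInfty.out).contDiffOn).aestronglyMeasurable
  · exact (integrable_indicator_iff (hK i₀).measurableSet).2
      (integrableOn_const (hK i₀).measure_lt_top.ne)
  · by_cases hq : q ∈ K i₀
    · rw [Set.indicator_of_mem hq]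
      exact (norm_det_le_sum_prod _).trans <| Finset.sum_le_sum fun σ _ =>
        Finset.prod_le_prod (fun _ _ => norm_nonneg _) fun i _ => hB i k q _
    · have hzero : fderiv ℝ (G i₀ k) q = 0 :=
        image_eq_zero_of_notMem_tsupport fun h => hq (hGK i₀ k (tsupport_fderiv_subset ℝ h))
      rw [Set.indicator_of_notMem hq, Matrix.det_eq_zero_of_row_eq_zero i₀, norm_zero]
      simp [hzero]
  · simp only [Matrix.det_apply', jacobianMatrix_apply]
    exact tendsto_finsetSum _ fun σ _ =>
      (tendsto_finsetProd _ fun i _ => hlim _ q _).const_mul _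
  · exact tendsto_const_nhds.congr fun k =>
      (integral_det_jacobianMatrix_eq_zero_of_contDiff_two μ e
        (fun i => (hG i k).of_le ENat.LEInfty.out)
        (fun i => (hK i).of_isClosed_subset (isClosed_tsupport _) (hGK i k)) i₀).symm

end NullLagrangian

section LocalNullLagrangian

variable {E : Type*} [NormedAddCommGroup E] [NormedSpace ℝ E] {Ω : Set E}

theorem contDiff_of_tsupport_subset (hΩ : IsOpen Ω) {g : E → ℂ} {n : WithTop ℕ∞}
    (hg : ContDiffOn ℝ n g Ω) (hs : tsupport g ⊆ Ω) : ContDiff ℝ n g :=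
  contMDiff_iff_contDiff.1 <| contMDiff_of_tsupport fun _ hx =>
    (hg.contDiffAt (hΩ.mem_nhds (hs hx))).contMDiffAt

omit [NormedSpace ℝ E] in
theorem integrable_of_continuousOn_tsupport_subset [MeasurableSpace E] [BorelSpace E]
    {μ : Measure E} [IsFiniteMeasureOnCompacts μ] {G : Type*} [NormedAddCommGroup G]
    (hΩ : IsOpen Ω) {g : E → G} (hg : ContinuousOn g Ω) (hc : HasCompactSupport g)
    (hs : tsupport g ⊆ Ω) : Integrable g μ :=
  (continuous_of_tsupport fun _ hx =>
    hg.continuousAt (hΩ.mem_nhds (hs hx))).integrable_of_hasCompactSupport hc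

theorem exists_contDiff_eventually_eq_one [FiniteDimensional ℝ E] {K : Set E} (hΩ : IsOpen Ω)
    (hK : IsCompact K) (hKΩ : K ⊆ Ω) :
    ∃ κ : E → ℝ, ContDiff ℝ ∞ κ ∧ (∀ᶠ x in 𝓝ˢ K, κ x = 1) ∧ HasCompactSupport κ ∧
      tsupport κ ⊆ Ω := by
  obtain ⟨t, ht, hKt, htΩ⟩ := exists_compact_between hK hΩ hKΩ
  obtain ⟨f, hone, hzero, -⟩ := exists_contMDiffMap_one_nhds_of_subset_interior (n := (⊤ : ℕ∞))
    (modelWithCornersSelf ℝ E) hK.isClosed hKt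
  have hft : tsupport f ⊆ t :=
    closure_minimal (fun x hx => not_imp_comm.1 (hzero x) hx) ht.isClosed
  exact ⟨f, f.contMDiff.contDiff, hone, ht.of_isClosed_subset (isClosed_tsupport f) hft,
    hft.trans htΩ⟩

section Jacobian

variable {ι : Type*} [Fintype ι] [DecidableEq ι] (e : ι → E) {h : ι → E → ℂ}

omit [Fintype ι] in
theorem jacobianMatrix_update (h : ι → E → ℂ) (i : ι) (g : E → ℂ) (q : E) :
    jacobianMatrix e (Function.update h i g) q =
      (jacobianMatrix e h q).updateRow i fun j => fderiv ℝ g q (e j) := by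
  ext i' j
  rcases eq_or_ne i' i with rfl | hi <;> simp [*]

theorem det_jacobianMatrix_eq_zero {i : ι} {q : E} (hq : q ∉ tsupport (h i)) :
    (jacobianMatrix e h q).det = 0 :=
  Matrix.det_eq_zero_of_row_eq_zero i fun j => by
    simp [(notMem_tsupport_iff_eventuallyEq.1 hq).fderiv_eq]

variable [FiniteDimensional ℝ E] [MeasurableSpace E] [BorelSpace E] (μ : Measure E)
  [μ.IsAddHaarMeasure]

theorem integral_det_jacobianMatrix_eq_zero_of_contDiffOn (hΩ : IsOpen Ω)
    (hs : ∀ i, ContDiffOn ℝ 1 (h i) Ω) {i₀ : ι} (hc : HasCompactSupport (h i₀))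
    (hsup : tsupport (h i₀) ⊆ Ω) : ∫ q, (jacobianMatrix e h q).det ∂μ = 0 := by
  obtain ⟨κ, hκ, hκone, hκc, hκΩ⟩ := exists_contDiff_eventually_eq_one hΩ hc.isCompact hsup
  have hsub : ∀ i, tsupport (fun q => (κ q : ℂ) * h i q) ⊆ tsupport κ := fun i =>
    closure_mono fun x hx hx' => hx (by simp [hx'])
  have hκℂ : ContDiff ℝ 1 fun q => (κ q : ℂ) :=
    Complex.ofRealCLM.contDiff.comp (hκ.of_le ENat.LEInfty.out)
  rw [← integral_det_jacobianMatrix_eq_zero μ e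
    (fun i => contDiff_of_tsupport_subset hΩ (hκℂ.contDiffOn.mul (hs i)) ((hsub i).trans hκΩ))
    (fun i => hκc.of_isClosed_subset (isClosed_tsupport _) (hsub i)) i₀]
  congr 1
  ext q
  by_cases hq : q ∈ tsupport (h i₀)
  · congr 1
    ext i j
    have heq : h i =ᶠ[𝓝 q] fun q => (κ q : ℂ) * h i q := by
      filter_upwards [hκone.filter_mono (nhds_le_nhdsSet hq)] with x hx
      simp [hx]
    simp [heq.fderiv_eq]
  · rw [det_jacobianMatrix_eq_zero e hq, det_jacobianMatrix_eq_zero e (i := i₀)]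
    exact fun h' => hq (tsupport_mul_subset_right h')

end Jacobian

section FieldDerivative

variable {ι : Type*} [Fintype ι]

/-- The derivative of `g` along the complex vector field with component `a j` in the direction
`e j`. -/
noncomputable def fieldDeriv (e : ι → E) (a : ι → E → ℂ) (g : E → ℂ) (q : E) : ℂ :=
  ∑ j, a j q * fderiv ℝ g q (e j)

variable {e : ι → E} {a : ι → E → ℂ} {f g : E → ℂ} {q : E}

theorem fieldDeriv_mul (hf : DifferentiableAt ℝ f q) (hg : DifferentiableAt ℝ g q) :
    fieldDeriv e a (fun q => f q * g q) q =
      fieldDeriv e a f q * g q + f q * fieldDeriv e a g q := by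
  simp only [fieldDeriv, Finset.sum_mul, Finset.mul_sum, ← Finset.sum_add_distrib]
  refine Finset.sum_congr rfl fun j _ => ?_
  rw [fderiv_fun_mul hf hg]
  simp only [_root_.add_apply, _root_.smul_apply, smul_eq_mul]
  ring

theorem fieldDeriv_cexp (hf : DifferentiableAt ℝ f q) :
    fieldDeriv e a (fun q => Complex.exp (f q)) q = Complex.exp (f q) * fieldDeriv e a f q := by
  simp only [fieldDeriv, hf.hasFDerivAt.cexp.fderiv, Finset.mul_sum, _root_.smul_apply, smul_eq_mul]
  exact Finset.sum_congr rfl fun j _ => mul_left_comm _ _ _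

theorem fieldDeriv_eq_zero (hq : q ∉ tsupport g) : fieldDeriv e a g q = 0 := by
  simp [fieldDeriv, (notMem_tsupport_iff_eventuallyEq.1 hq).fderiv_eq]

theorem continuousOn_fieldDeriv (ha : ∀ j, ContinuousOn (a j) Ω) (hg : ContDiff ℝ 1 g) :
    ContinuousOn (fieldDeriv e a g) Ω :=
  continuousOn_finsetSum _ fun j _ => (ha j).mul
    ((hg.continuous_fderiv one_ne_zero).clm_apply continuous_const).continuousOn

variable [DecidableEq ι]

-- Cramer's rule for the system whose rows are the rows of `A`.
theorem sum_mul_det_eq_sum_mulVec_mul_det_updateRow (A : Matrix ι ι ℂ) (r c : ι → ℂ) :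
    (∑ j, c j * r j) * A.det = ∑ i, A.mulVec c i * (A.updateRow i r).det := by
  have hcramer : A.vecMul (fun i => (A.updateRow i r).det) = A.det • r := by
    have h := Matrix.mulVec_cramer A.transpose r
    rw [Matrix.det_transpose, Matrix.mulVec_transpose] at h
    rw [← h]
    congr 1
    ext i
    exact (Matrix.cramer_transpose_apply A r i).symm
  calc (∑ j, c j * r j) * A.det = (A.det • r) ⬝ᵥ c := by
        rw [smul_dotProduct, dotProduct_comm, smul_eq_mul, mul_comm]; rfl
    _ = ∑ i, A.mulVec c i * (A.updateRow i r).det := by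
        rw [← hcramer, ← Matrix.dotProduct_mulVec, dotProduct_comm]; rfl

theorem fieldDeriv_mul_det_jacobianMatrix_add {φ : E → ℂ} {h G : ι → E → ℂ}
    (hφ : DifferentiableAt ℝ φ q) (hG : ∀ i, DifferentiableAt ℝ (G i) q)
    (hL : ∀ i, fieldDeriv e a (h i) q = G i q) :
    fieldDeriv e a φ q * (jacobianMatrix e h q).det +
        φ q * ∑ i, (jacobianMatrix e (Function.update h i (G i)) q).det =
      ∑ i, (jacobianMatrix e (Function.update h i fun q => φ q * G i q) q).det := by
  have hrow : ∀ i, (fun j => fderiv ℝ (fun q => φ q * G i q) q (e j)) =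
      G i q • (fun j => fderiv ℝ φ q (e j)) + φ q • fun j => fderiv ℝ (G i) q (e j) := by
    intro i
    ext j
    rw [fderiv_fun_mul hφ (hG i)]
    simp [add_comm]
  have hvec : (jacobianMatrix e h q).mulVec (fun j => a j q) = fun i => G i q := by
    ext i
    rw [← hL i]
    exact Finset.sum_congr rfl fun j _ => mul_comm _ _
  rw [fieldDeriv, sum_mul_det_eq_sum_mulVec_mul_det_updateRow, hvec, Finset.mul_sum,
    ← Finset.sum_add_distrib]
  refine Finset.sum_congr rfl fun i _ => ?_
  rw [jacobianMatrix_update, jacobianMatrix_update, hrow, Matrix.det_updateRow_add,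
    Matrix.det_updateRow_smul, Matrix.det_updateRow_smul]

variable [FiniteDimensional ℝ E] [MeasurableSpace E] [BorelSpace E] (μ : Measure E)
  [μ.IsAddHaarMeasure]

theorem integrable_and_integral_fieldDeriv_mul_det_add_eq_zero (hΩ : IsOpen Ω)
    {φ : E → ℂ} {h G : ι → E → ℂ} (hh : ∀ i, ContDiffOn ℝ 1 (h i) Ω)
    (hG : ∀ i, ContDiffOn ℝ 1 (G i) Ω) (hφ : ContDiffOn ℝ 1 φ Ω) (hc : HasCompactSupport φ)
    (hsup : tsupport φ ⊆ Ω) (hL : ∀ i, ∀ q ∈ Ω, fieldDeriv e a (h i) q = G i q) :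
    Integrable (fun q => fieldDeriv e a φ q * (jacobianMatrix e h q).det +
        φ q * ∑ i, (jacobianMatrix e (Function.update h i (G i)) q).det) μ ∧
      ∫ q, (fieldDeriv e a φ q * (jacobianMatrix e h q).det +
        φ q * ∑ i, (jacobianMatrix e (Function.update h i (G i)) q).det) ∂μ = 0 := by
  let N : ι → E → ℂ := fun i q =>
    (jacobianMatrix e (Function.update h i fun q => φ q * G i q) q).det
  have hsub : ∀ i, tsupport (fun q => φ q * G i q) ⊆ tsupport φ := fun i =>
    tsupport_mul_subset_left
  have hupd : ∀ i i', ContDiffOn ℝ 1 (Function.update h i (fun q => φ q * G i q) i') Ω := by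
    intro i i'
    rcases eq_or_ne i' i with rfl | hi
    · simpa using hφ.mul (hG i')
    · simpa [hi] using hh i'
  have hzero : ∀ i, ∀ q ∉ tsupport φ, N i q = 0 := fun i q hq =>
    det_jacobianMatrix_eq_zero e (i := i) (by simpa using fun h' => hq (hsub i h'))
  have hNsup : ∀ i, tsupport (N i) ⊆ tsupport φ := fun i =>
    closure_minimal (fun q hq => not_imp_comm.1 (hzero i q) hq) (isClosed_tsupport _)
  have hNint : ∀ i, Integrable (N i) μ := fun i =>
    integrable_of_continuousOn_tsupport_subset hΩ (continuousOn_det_jacobianMatrix e hΩ (hupd i))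
      (hc.of_isClosed_subset (isClosed_tsupport _) (hNsup i)) ((hNsup i).trans hsup)
  have hN : ∀ i, ∫ q, N i q ∂μ = 0 := fun i =>
    integral_det_jacobianMatrix_eq_zero_of_contDiffOn e μ hΩ (hupd i) (i₀ := i)
      (by rw [Function.update_self]; exact hc.mul_right)
      (by simpa using (hsub i).trans hsup)
  have hsum : (fun q => fieldDeriv e a φ q * (jacobianMatrix e h q).det +
      φ q * ∑ i, (jacobianMatrix e (Function.update h i (G i)) q).det) = fun q => ∑ i, N i q := by
    ext q
    by_cases hq : q ∈ Ω
    · exact fieldDeriv_mul_det_jacobianMatrix_add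
        ((hφ.differentiableOn one_ne_zero).differentiableAt (hΩ.mem_nhds hq))
        (fun i => ((hG i).differentiableOn one_ne_zero).differentiableAt (hΩ.mem_nhds hq))
        fun i => hL i q hq
    · have hq' : q ∉ tsupport φ := fun h' => hq (hsup h')
      simp [fieldDeriv_eq_zero hq', image_eq_zero_of_notMem_tsupport hq', hzero _ q hq']
  rw [hsum, integral_finsetSum _ fun i _ => hNint i, Finset.sum_eq_zero fun i _ => hN i]
  exact ⟨integrable_finsetSum _ fun i _ => hNint i, rfl⟩

end FieldDerivative

end LocalNullLagrangian

section TangentField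

variable {E : Type*} [NormedAddCommGroup E] [NormedSpace ℝ E] {ι V : Type*} [Fintype ι]
  [Fintype V]

/-- The coordinate functions on the graph of `v`: those of `q` in the basis `b`, followed by those
of `v q`. -/
noncomputable def graphCoord (b : Module.Basis ι ℝ E) (v : E → V → ℂ) : ι ⊕ V → E → ℂ :=
  Sum.elim (fun i q => (b.repr q i : ℂ)) fun l q => v q l

/-- The coefficients of the vector field on the base that the vector field `X` on the total space
induces along the graph of `v`. -/
def baseField (v : E → V → ℂ) (X : ι ⊕ V → E × (V → ℂ) → ℂ) (j : ι) (q : E) : ℂ :=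
  X (Sum.inl j) (q, v q)

/-- The vector field `∑ X (inl j) ∂/∂x_j + ∑ X (inr l) ∂/∂ζ_l` on `O ⊆ E × ℂ^V` has smooth
coefficients, holomorphic in the second variable, and is tangent to the graph of `v` over `Ω`. -/
structure IsTangentField (b : Module.Basis ι ℝ E) (O : Set (E × (V → ℂ))) (Ω : Set E)
    (v : E → V → ℂ) (X : ι ⊕ V → E × (V → ℂ) → ℂ) : Prop where
  isOpen_total : IsOpen O
  isOpen_base : IsOpen Ω
  contDiffOn_graph : ContDiffOn ℝ 1 v Ω
  mapsTo : ∀ q ∈ Ω, (q, v q) ∈ O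
  contDiffOn : ∀ m, ContDiffOn ℝ ∞ (X m) O
  isHolSnd : ∀ m, IsHolSnd O (X m)
  tangent : ∀ l, ∀ q ∈ Ω, fieldDeriv b (baseField v X) (fun q => v q l) q =
    X (Sum.inr l) (q, v q)

variable {b : Module.Basis ι ℝ E} {O : Set (E × (V → ℂ))} {Ω : Set E} {v : E → V → ℂ}
  {X : ι ⊕ V → E × (V → ℂ) → ℂ} {F : E × (V → ℂ) → ℂ}

theorem fderiv_eq_sum_of_isHolSnd [DecidableEq V] {y : E × (V → ℂ)} (hF : IsHolSnd O F) (hy : y ∈ O)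
    (p : E) (z : V → ℂ) :
    fderiv ℝ F y (p, z) = ∑ i, (b.repr p i : ℂ) * dirDeriv (prodDir b (Sum.inl i)) F y +
      ∑ l, z l * dirDeriv (prodDir b (Sum.inr l)) F y := by
  have hp : (p, (0 : V → ℂ)) = ∑ i, b.repr p i • (b i, (0 : V → ℂ)) := by
    ext1 <;> simp [Prod.fst_sum, Prod.snd_sum, b.sum_repr]
  have hz : ((0 : E), z) = ∑ l, ((0 : E), z l • (Pi.single l 1 : V → ℂ)) := by
    ext1
    · simp [Prod.fst_sum]
    · simp [Prod.snd_sum, ← Pi.single_smul, Finset.univ_sum_single]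
  rw [show (p, z) = (p, 0) + (0, z) by simp, map_add, hp, hz, map_sum, map_sum]
  simp only [map_smul, hF.fderiv_smul hy, Complex.real_smul]
  rfl

section FiniteDimensional

variable [FiniteDimensional ℝ E]

omit [Fintype ι] [Fintype V] in
theorem fderiv_graphCoord_inl (i : ι) (q p : E) :
    fderiv ℝ (graphCoord b v (Sum.inl i)) q p = b.repr p i :=
  congrFun (congrArg _ (Complex.ofRealCLM.comp
    (LinearMap.toContinuousLinearMap (b.coord i))).fderiv) p

omit [Fintype ι] in
theorem contDiffOn_graphCoord (hv : ContDiffOn ℝ 1 v Ω) (m : ι ⊕ V) :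
    ContDiffOn ℝ 1 (graphCoord b v m) Ω := by
  rcases m with i | l
  · exact (Complex.ofRealCLM.comp
      (LinearMap.toContinuousLinearMap (b.coord i))).contDiff.contDiffOn
  · exact contDiffOn_pi.1 hv l

theorem fderiv_comp_graph [DecidableEq V] {q : E} (hF : IsHolSnd O F)
    (hFd : DifferentiableAt ℝ F (q, v q)) (hv : DifferentiableAt ℝ v q) (hq : (q, v q) ∈ O)
    (p : E) :
    fderiv ℝ (fun q => F (q, v q)) q p =
      ∑ m, dirDeriv (prodDir b m) F (q, v q) * fderiv ℝ (graphCoord b v m) q p := by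
  have hcomp : HasFDerivAt (fun q => F (q, v q)) _ q :=
    HasFDerivAt.comp (g := F) (f := fun q => (q, v q)) q hFd.hasFDerivAt
      ((hasFDerivAt_id q).prodMk hv.hasFDerivAt)
  have hcoord : ∀ l, fderiv ℝ (graphCoord b v (Sum.inr l)) q p = fderiv ℝ v q p l := fun l =>
    congrFun (congrArg _ (hasFDerivAt_pi'.1 hv.hasFDerivAt l).fderiv) p
  rw [hcomp.fderiv, ContinuousLinearMap.comp_apply, ContinuousLinearMap.prod_apply,
    fderiv_eq_sum_of_isHolSnd (b := b) hF hq, Fintype.sum_sum_type]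
  simp only [fderiv_graphCoord_inl, hcoord, ContinuousLinearMap.id_apply, mul_comm]

namespace IsTangentField

variable (S : IsTangentField b O Ω v X)

include S

omit [FiniteDimensional ℝ E] in
theorem contDiffOn_comp_graph (hF : ContDiffOn ℝ ∞ F O) :
    ContDiffOn ℝ 1 (fun q => F (q, v q)) Ω :=
  (hF.of_le ENat.LEInfty.out).comp (contDiffOn_id.prodMk S.contDiffOn_graph) S.mapsTo

omit [FiniteDimensional ℝ E] in
theorem continuousOn_fieldDeriv_baseField {g : E → ℂ} (hg : ContDiff ℝ 1 g) :
    ContinuousOn (fieldDeriv b (baseField v X) g) Ω :=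
  continuousOn_fieldDeriv (fun _ => (S.contDiffOn_comp_graph (S.contDiffOn _)).continuousOn) hg

theorem fieldDeriv_graphCoord (m : ι ⊕ V) {q : E} (hq : q ∈ Ω) :
    fieldDeriv b (baseField v X) (graphCoord b v m) q = X m (q, v q) := by
  rcases m with i | l
  · classical simp [fieldDeriv, baseField, fderiv_graphCoord_inl, Finsupp.single_apply, apply_ite]
  · exact S.tangent l q hq

variable [DecidableEq V]

theorem fderiv_comp_graph (hFs : ContDiffOn ℝ ∞ F O) (hF : IsHolSnd O F) {q : E} (hq : q ∈ Ω)
    (p : E) :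
    fderiv ℝ (fun q => F (q, v q)) q p =
      ∑ m, dirDeriv (prodDir b m) F (q, v q) * fderiv ℝ (graphCoord b v m) q p :=
  _root_.fderiv_comp_graph hF
    (differentiableAt_of_contDiffOn S.isOpen_total (by simp) hFs (S.mapsTo q hq))
    (differentiableAt_of_contDiffOn S.isOpen_base one_ne_zero S.contDiffOn_graph hq)
    (S.mapsTo q hq) p

theorem fieldDeriv_comp_graph (hFs : ContDiffOn ℝ ∞ F O) (hF : IsHolSnd O F) {q : E}
    (hq : q ∈ Ω) :
    fieldDeriv b (baseField v X) (fun q => F (q, v q)) q =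
      ∑ m, X m (q, v q) * dirDeriv (prodDir b m) F (q, v q) := by
  simp_rw [← S.fieldDeriv_graphCoord _ hq, fieldDeriv, S.fderiv_comp_graph hFs hF hq,
    Finset.mul_sum, Finset.sum_mul]
  rw [Finset.sum_comm]
  exact Finset.sum_congr rfl fun m _ => Finset.sum_congr rfl fun j _ => by ring

end IsTangentField

end FiniteDimensional

end TangentField

section GraphForm

variable {E : Type*} [NormedAddCommGroup E] [NormedSpace ℝ E] {ι V : Type*} [Fintype ι]
  [DecidableEq ι] {b : Module.Basis ι ℝ E} {O : Set (E × (V → ℂ))} {Ω : Set E} {v : E → V → ℂ}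
  {X : ι ⊕ V → E × (V → ℂ) → ℂ} {F G : (ι → ι ⊕ V) → E × (V → ℂ) → ℂ}

/-- The Jacobian determinant of the functions `graphCoord b v (J i)`, that is, the density of the
top degree form `⋀ᵢ dy_{J i}` restricted to the graph of `v`. -/
noncomputable def graphMinor (b : Module.Basis ι ℝ E) (v : E → V → ℂ) (J : ι → ι ⊕ V) (q : E) : ℂ :=
  (jacobianMatrix b (fun i => graphCoord b v (J i)) q).det

theorem graphMinor_inl [FiniteDimensional ℝ E] (q : E) : graphMinor b v Sum.inl q = 1 := by
  have hone : jacobianMatrix b (fun i => graphCoord b v (Sum.inl i)) q = 1 := by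
    ext i j
    simp [fderiv_graphCoord_inl, Finsupp.single_apply, Matrix.one_apply, apply_ite, eq_comm]
  rw [graphMinor, hone, Matrix.det_one]

variable [Fintype V]

/-- The density of the top degree form `∑ F J • ⋀ᵢ dy_{J i}` restricted to the graph of `v`. -/
noncomputable def graphForm (b : Module.Basis ι ℝ E) (v : E → V → ℂ)
    (F : (ι → ι ⊕ V) → E × (V → ℂ) → ℂ) (q : E) : ℂ :=
  ∑ J, F J (q, v q) * graphMinor b v J q

variable [DecidableEq V]

theorem graphForm_single_inl [FiniteDimensional ℝ E] (f : E × (V → ℂ) → ℂ) (q : E) :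
    graphForm b v (Pi.single Sum.inl f) q = f (q, v q) := by
  rw [graphForm, Finset.sum_eq_single Sum.inl (fun J _ hJ => by simp [hJ]) (by simp)]
  simp [graphMinor_inl]

/-- The coefficients of the form obtained from `∑ G J • ⋀ᵢ dy_{J i}` by the transpose of the vector
field `X`, that is, of minus its Lie derivative along `X`. -/
noncomputable def transposeCoeff (b : Module.Basis ι ℝ E) (X : ι ⊕ V → E × (V → ℂ) → ℂ)
    (G : (ι → ι ⊕ V) → E × (V → ℂ) → ℂ) (J' : ι → ι ⊕ V) (y : E × (V → ℂ)) : ℂ :=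
  (∑ m, (-1) * (X m y * dirDeriv (prodDir b m) (G J') y)) +
    ∑ J : ι → ι ⊕ V, ∑ i, ∑ m, (if Function.update J i m = J' then (-1 : ℂ) else 0) *
      (dirDeriv (prodDir b m) (X (J i)) y * G J y)

theorem graphForm_transposeCoeff (q : E) :
    graphForm b v (transposeCoeff b X G) q =
      -∑ J, ((∑ m, X m (q, v q) * dirDeriv (prodDir b m) (G J) (q, v q)) * graphMinor b v J q +
        G J (q, v q) * ∑ i, ∑ m, dirDeriv (prodDir b m) (X (J i)) (q, v q) *
          graphMinor b v (Function.update J i m) q) := by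
  simp only [graphForm, transposeCoeff, add_mul, Finset.sum_add_distrib, neg_add]
  congr 1
  · simp only [neg_mul, one_mul, Finset.sum_neg_distrib]
  · simp only [Finset.sum_mul, Finset.mul_sum, ← Finset.sum_neg_distrib]
    rw [Finset.sum_comm]
    refine Finset.sum_congr rfl fun J _ => ?_
    rw [Finset.sum_comm]
    refine Finset.sum_congr rfl fun i _ => ?_
    rw [Finset.sum_comm]
    refine Finset.sum_congr rfl fun m _ => ?_
    simp only [ite_mul, zero_mul, Finset.sum_ite_eq, Finset.mem_univ, if_true]
    ring

variable [FiniteDimensional ℝ E]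

namespace IsTangentField

variable (S : IsTangentField b O Ω v X)

include S

omit [DecidableEq V] in
theorem continuousOn_graphForm (hF : ∀ J, ContDiffOn ℝ ∞ (F J) O) :
    ContinuousOn (graphForm b v F) Ω :=
  continuousOn_finsetSum _ fun J _ => (S.contDiffOn_comp_graph (hF J)).continuousOn.mul
    (continuousOn_det_jacobianMatrix b S.isOpen_base fun i =>
      contDiffOn_graphCoord S.contDiffOn_graph (J i))

theorem det_jacobianMatrix_update_comp_graph {f : E × (V → ℂ) → ℂ} (hfs : ContDiffOn ℝ ∞ f O)
    (hf : IsHolSnd O f) {q : E} (hq : q ∈ Ω) (J : ι → ι ⊕ V) (i : ι) :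
    (jacobianMatrix b (Function.update (fun i => graphCoord b v (J i)) i fun q => f (q, v q))
        q).det =
      ∑ m, dirDeriv (prodDir b m) f (q, v q) * graphMinor b v (Function.update J i m) q := by
  have hrow : (fun j => fderiv ℝ (fun q => f (q, v q)) q (b j)) =
      ∑ m, dirDeriv (prodDir b m) f (q, v q) • fun j => fderiv ℝ (graphCoord b v m) q (b j) := by
    ext j
    simp [S.fderiv_comp_graph hfs hf hq, Finset.sum_apply]
  have hlin : ∀ r, ((jacobianMatrix b (fun i => graphCoord b v (J i)) q).updateRow i r).det =
      Matrix.detRowAlternating.toMultilinearMap.toLinearMap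
        (jacobianMatrix b (fun i => graphCoord b v (J i)) q) i r := fun _ => rfl
  rw [jacobianMatrix_update, hrow, hlin, map_sum]
  refine Finset.sum_congr rfl fun m _ => ?_
  rw [map_smul, ← hlin, ← jacobianMatrix_update, smul_eq_mul, graphMinor]
  congr 3
  ext1 i'
  rcases eq_or_ne i' i with rfl | hi <;> simp [*]

theorem sum_fieldDeriv_mul_graphMinor_add (hG : ∀ J, ContDiffOn ℝ ∞ (G J) O)
    (hGhol : ∀ J, IsHolSnd O (G J)) {θ : E → ℂ} {q : E} (hθ : DifferentiableAt ℝ θ q) (hq : q ∈ Ω) :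
    ∑ J, (fieldDeriv b (baseField v X) (fun q => θ q * G J (q, v q)) q *
          graphMinor b v J q +
        θ q * G J (q, v q) * ∑ i, (jacobianMatrix b
          (Function.update (fun i => graphCoord b v (J i)) i fun q => X (J i) (q, v q)) q).det) =
      fieldDeriv b (baseField v X) θ q * graphForm b v G q -
        θ q * graphForm b v (transposeCoeff b X G) q := by
  rw [graphForm_transposeCoeff, mul_neg, sub_neg_eq_add, graphForm, Finset.mul_sum, Finset.mul_sum,
    ← Finset.sum_add_distrib]
  refine Finset.sum_congr rfl fun J _ => ?_
  have hGq : DifferentiableAt ℝ (fun q => G J (q, v q)) q :=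
    differentiableAt_of_contDiffOn S.isOpen_base one_ne_zero (S.contDiffOn_comp_graph (hG J)) hq
  simp_rw [fieldDeriv_mul hθ hGq, S.fieldDeriv_comp_graph (hG J) (hGhol J) hq,
    S.det_jacobianMatrix_update_comp_graph (S.contDiffOn _) (S.isHolSnd _) hq]
  ring

variable [MeasurableSpace E] [BorelSpace E] (μ : Measure E) [μ.IsAddHaarMeasure] {θ χ : E → ℂ}

omit [DecidableEq V] in
theorem integrable_mul_graphForm (hF : ∀ J, ContDiffOn ℝ ∞ (F J) O) (hθ : ContinuousOn θ Ω)
    (hχ : HasCompactSupport χ) (hχΩ : tsupport χ ⊆ Ω) (hzero : ∀ q ∉ tsupport χ, θ q = 0) :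
    Integrable (fun q => θ q * graphForm b v F q) μ := by
  have hsub : tsupport (fun q => θ q * graphForm b v F q) ⊆ tsupport χ :=
    closure_minimal (fun q hq => not_imp_comm.1 (hzero q) (left_ne_zero_of_mul hq))
      (isClosed_tsupport _)
  exact integrable_of_continuousOn_tsupport_subset S.isOpen_base
    (hθ.mul (S.continuousOn_graphForm hF)) (hχ.of_isClosed_subset (isClosed_tsupport _) hsub)
    (hsub.trans hχΩ)

theorem integral_fieldDeriv_mul_graphForm (hG : ∀ J, ContDiffOn ℝ ∞ (G J) O)
    (hGhol : ∀ J, IsHolSnd O (G J)) (hθ : ContDiff ℝ 1 θ) (hθc : HasCompactSupport θ)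
    (hθΩ : tsupport θ ⊆ Ω) :
    ∫ q, fieldDeriv b (baseField v X) θ q * graphForm b v G q ∂μ =
      ∫ q, θ q * graphForm b v (transposeCoeff b X G) q ∂μ := by
  have hA := S.integrable_mul_graphForm μ hG (S.continuousOn_fieldDeriv_baseField hθ) hθc hθΩ
    fun q hq => fieldDeriv_eq_zero hq
  have hsub : ∀ J, tsupport (fun q => θ q * G J (q, v q)) ⊆ tsupport θ := fun J =>
    tsupport_mul_subset_left
  have hnull := fun J => integrable_and_integral_fieldDeriv_mul_det_add_eq_zero μ S.isOpen_base
    (φ := fun q => θ q * G J (q, v q)) (h := fun i => graphCoord b v (J i))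
    (G := fun i q => X (J i) (q, v q)) (fun i => contDiffOn_graphCoord S.contDiffOn_graph (J i))
    (fun i => S.contDiffOn_comp_graph (S.contDiffOn (J i)))
    (hθ.contDiffOn.mul (S.contDiffOn_comp_graph (hG J)))
    (hθc.of_isClosed_subset (isClosed_tsupport _) (hsub J)) ((hsub J).trans hθΩ)
    (fun i q hq => S.fieldDeriv_graphCoord (J i) hq)
  have hsum := integral_finsetSum Finset.univ fun J _ => (hnull J).1
  rw [Finset.sum_eq_zero fun J _ => (hnull J).2] at hsum
  rw [← sub_zero (∫ q, _ ∂μ), ← hsum,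
    ← integral_sub hA (integrable_finsetSum _ fun J _ => (hnull J).1)]
  congr 1 with q
  by_cases hq : q ∈ Ω
  · rw [sub_eq_iff_eq_add', ← sub_eq_iff_eq_add]
    exact (S.sum_fieldDeriv_mul_graphMinor_add hG hGhol
      (hθ.differentiable one_ne_zero).differentiableAt hq).symm
  · have hqθ : q ∉ tsupport θ := fun h => hq (hθΩ h)
    simp [fieldDeriv_eq_zero hqθ, image_eq_zero_of_notMem_tsupport hqθ,
      fieldDeriv_eq_zero fun h => hqθ (hsub _ h)]

end IsTangentField

end GraphForm

section Recursion

variable {ρ : ℝ} {T ε : ℕ → ℝ}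

theorem pow_mul_le_add_sum (hρ : 0 ≤ ρ) (hT : ∀ k, ρ * T k ≤ T (k + 1) + ε k) (k : ℕ) :
    ρ ^ k * T 0 ≤ T k + ∑ j ∈ Finset.range k, ρ ^ (k - 1 - j) * ε j := by
  induction k with
  | zero => simp
  | succ k ih =>
    have hsum : ∑ j ∈ Finset.range k, ρ ^ (k - j) * ε j =
        ρ * ∑ j ∈ Finset.range k, ρ ^ (k - 1 - j) * ε j := by
      rw [Finset.mul_sum]
      refine Finset.sum_congr rfl fun j hj => ?_
      rw [show k - j = k - 1 - j + 1 by have := Finset.mem_range.1 hj; omega]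
      ring
    rw [Finset.sum_range_succ, Nat.add_sub_cancel, hsum, Nat.sub_self, pow_zero, one_mul]
    calc ρ ^ (k + 1) * T 0 = ρ * (ρ ^ k * T 0) := by ring
      _ ≤ ρ * (T k + ∑ j ∈ Finset.range k, ρ ^ (k - 1 - j) * ε j) := by gcongr
      _ ≤ _ := by linarith [hT k]

theorem pow_mul_exp_neg_le {c : ℝ} (hρ : 0 ≤ ρ) (hc : 0 < c) (m : ℕ) :
    ρ ^ m * Real.exp (-(c * ρ)) ≤ (1 / c) ^ m * m.factorial := by
  have hexp := Real.pow_div_factorial_le_exp (c * ρ) (by positivity) m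
  rw [div_le_iff₀' (by positivity), mul_pow] at hexp
  rw [Real.exp_neg, ← div_eq_mul_inv, div_le_iff₀ (Real.exp_pos _), one_div, inv_pow, mul_assoc,
    inv_mul_eq_div, le_div_iff₀' (by positivity)]
  exact hexp

namespace IsWeightSequence

variable {M : ℕ → ℝ} {a c : ℝ}

theorem pow_mul_exp_neg_mul_le (hM : IsWeightSequence M) (hρ : 0 ≤ ρ) (hc : 0 < c)
    (hac : 1 / c ≤ a) (j m : ℕ) :
    ρ ^ m * (Real.exp (-(c * ρ)) * (a ^ j * M j)) ≤ a ^ (j + m) * M (j + m) := by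
  have hMj := hM.pos j
  have ha : 0 < a := (one_div_pos.2 hc).trans_le hac
  calc ρ ^ m * (Real.exp (-(c * ρ)) * (a ^ j * M j))
      = ρ ^ m * Real.exp (-(c * ρ)) * (a ^ j * M j) := by ring
    _ ≤ (1 / c) ^ m * m.factorial * (a ^ j * M j) :=
      mul_le_mul_of_nonneg_right (pow_mul_exp_neg_le hρ hc m) (by positivity)
    _ ≤ a ^ m * m.factorial * (a ^ j * M j) := by gcongr
    _ = a ^ (j + m) * (M j * m.factorial) := by rw [pow_add]; ring
    _ ≤ _ := by
      gcongr
      exact hM.mul_factorial_le j m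

theorem pow_mul_le_of_recursion (hM : IsWeightSequence M) (hρ : 0 ≤ ρ) (hc : 0 < c) (ha : 1 ≤ a)
    (hac : 1 / c ≤ a) {D Q : ℝ} (hD : 0 ≤ D) (hQ : 0 ≤ Q)
    (hstep : ∀ k, ρ * T k ≤ T (k + 1) + Q * (Real.exp (-(c * ρ)) * (a ^ k * M k)))
    (hT : ∀ k, T k ≤ D * (a ^ k * M k)) (k : ℕ) :
    ρ ^ k * T 0 ≤ (D + Q) * ((2 * a) ^ k * M k) := by
  have hMk := hM.pos k
  have herr : ∀ j ∈ Finset.range k,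
      ρ ^ (k - 1 - j) * (Q * (Real.exp (-(c * ρ)) * (a ^ j * M j))) ≤ Q * (a ^ k * M k) := by
    intro j hj
    have hle : j + (k - 1 - j) ≤ k := by have := Finset.mem_range.1 hj; omega
    rw [mul_left_comm]
    refine mul_le_mul_of_nonneg_left ((hM.pow_mul_exp_neg_mul_le hρ hc hac _ _).trans ?_) hQ
    exact mul_le_mul (pow_le_pow_right₀ ha hle) (hM.monotone hle) (hM.pos _).le (by positivity)
  have hsum := Finset.sum_le_card_nsmul _ _ _ herr
  rw [Finset.card_range, nsmul_eq_mul] at hsum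
  have hk : (k : ℝ) ≤ 2 ^ k := by exact_mod_cast Nat.lt_two_pow_self.le
  calc ρ ^ k * T 0 ≤ D * (a ^ k * M k) + k * (Q * (a ^ k * M k)) :=
        (pow_mul_le_add_sum hρ hstep k).trans (add_le_add (hT k) hsum)
    _ ≤ 2 ^ k * (D * (a ^ k * M k)) + 2 ^ k * (Q * (a ^ k * M k)) :=
        add_le_add (le_mul_of_one_le_left (by positivity) (one_le_pow₀ one_le_two))
          (mul_le_mul_of_nonneg_right hk (by positivity))
    _ = _ := by rw [mul_pow]; ring

end IsWeightSequence

end Recursion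

section PhaseIntegral

variable {E : Type*} [NormedAddCommGroup E] [NormedSpace ℝ E] {ι V : Type*} [Fintype ι]
  [DecidableEq ι] [Fintype V] {b : Module.Basis ι ℝ E} {O : Set (E × (V → ℂ))} {Ω : Set E}
  {v : E → V → ℂ} {X : ι ⊕ V → E × (V → ℂ) → ℂ} {F : (ι → ι ⊕ V) → E × (V → ℂ) → ℂ}
  {R : E × (V → ℂ) → ℂ} {M : ℕ → ℝ}

theorem graphForm_mul (q : E) :
    graphForm b v (fun J y => R y * F J y) q = R (q, v q) * graphForm b v F q := by
  simp only [graphForm, Finset.mul_sum, mul_assoc]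

theorem norm_graphForm_le {N : ℝ} (hF : ∀ J, ∀ y ∈ O, ‖F J y‖ ≤ N) {q : E} (hq : (q, v q) ∈ O) :
    ‖graphForm b v F q‖ ≤ N * ∑ J, ‖graphMinor b v J q‖ := by
  rw [graphForm, Finset.mul_sum]
  refine norm_sum_le_of_le _ fun J _ => ?_
  rw [norm_mul]
  exact mul_le_mul_of_nonneg_right (hF J _ hq) (norm_nonneg _)

section Class

variable [DecidableEq V]

theorem exists_inDCClassWith_transposeCoeff (hM : IsWeightSequence M) (hO : IsOpen O)
    (hX : ∀ m, InDCClass (prodDir b) O M (X m)) :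
    ∃ B₀ : ℝ, ∀ B ≥ B₀, ∃ A ≥ 0, ∀ (C : ℝ) (k : ℕ) (G : (ι → ι ⊕ V) → E × (V → ℂ) → ℂ),
      (∀ J, InDCClassWith (prodDir b) O M C B k (G J)) →
        ∀ J, InDCClassWith (prodDir b) O M (A * C) B (k + 1) (transposeCoeff b X G J) := by
  obtain ⟨C₁, h₁, hX₁⟩ := InDCClass.exists_forall_inDCClassWith hM Finset.univ fun m _ => hX m
  obtain ⟨C₂, h₂, hX₂⟩ := InDCClass.exists_forall_inDCClassWith hM Finset.univ
    fun (p : (ι ⊕ V) × (ι ⊕ V)) _ => (hX p.1).dirDeriv hM hO p.2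
  refine ⟨max (2 * h₁) (2 * h₂), fun B hB => ?_⟩
  let A₁ : ℝ := (Finset.univ : Finset (ι ⊕ V)).card * (2 * 1 * (2 * C₁ * B))
  let A₂ : ℝ := (Finset.univ : Finset (ι → ι ⊕ V)).card * ((Finset.univ : Finset ι).card *
    ((Finset.univ : Finset (ι ⊕ V)).card * (2 * 1 * (2 * C₂))))
  refine ⟨max (A₁ + A₂) 0, le_max_right _ _, fun C k G hG J' => ?_⟩
  have hB0 : 0 ≤ B := (hG J').rate_nonneg
  have hfirst := InDCClassWith.sum hM hO Finset.univ hB0 fun m _ =>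
    (InDCClassWith.mul hM hO (hX₁ m (Finset.mem_univ m)) ((hG J').dirDeriv hO m)
      ((le_max_left _ _).trans hB)).const_mul hM hO (-1) (D := 1) (by simp)
  have hzeroth := InDCClassWith.sum hM hO Finset.univ hB0 fun (J : ι → ι ⊕ V) _ =>
    InDCClassWith.sum hM hO Finset.univ hB0 fun i _ =>
      InDCClassWith.sum hM hO Finset.univ hB0 fun m _ =>
        (InDCClassWith.mul hM hO (hX₂ (J i, m) (Finset.mem_univ _)) (hG J)
          ((le_max_right _ _).trans hB)).const_mul hM hO (D := 1)
          (if Function.update J i m = J' then (-1 : ℂ) else 0) (by split_ifs <;> simp)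
  refine (hfirst.add hO (hzeroth.mono hM le_rfl le_rfl k.le_succ)).mono hM ?_ le_rfl le_rfl
  calc _ = (A₁ + A₂) * C := by simp only [A₁, A₂]; ring
    _ ≤ max (A₁ + A₂) 0 * C :=
      mul_le_mul_of_nonneg_right (le_max_left _ _) (hG J').const_nonneg

/-- The coefficients obtained from those of a form by `k` steps of the integration by parts, which
multiplies by `R` and applies the transpose of `X`. -/
noncomputable def transposeIter (b : Module.Basis ι ℝ E) (X : ι ⊕ V → E × (V → ℂ) → ℂ)
    (R : E × (V → ℂ) → ℂ) (F : (ι → ι ⊕ V) → E × (V → ℂ) → ℂ) :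
    ℕ → (ι → ι ⊕ V) → E × (V → ℂ) → ℂ
  | 0 => F
  | k + 1 => transposeCoeff b X fun J y => R y * transposeIter b X R F k J y

theorem exists_inDCClassWith_transposeIter (hM : IsWeightSequence M) (hO : IsOpen O)
    (hX : ∀ m, InDCClass (prodDir b) O M (X m)) (C₀ C h : ℝ) :
    ∃ B, ∃ A ≥ 0, ∀ (R : E × (V → ℂ) → ℂ) (F : (ι → ι ⊕ V) → E × (V → ℂ) → ℂ),
      InDCClassWith (prodDir b) O M C h 0 R → (∀ J, InDCClassWith (prodDir b) O M C₀ h 0 (F J)) →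
        ∀ k J, InDCClassWith (prodDir b) O M (A ^ k * C₀) B k (transposeIter b X R F k J) := by
  obtain ⟨B₀, hB₀⟩ := exists_inDCClassWith_transposeCoeff hM hO hX
  obtain ⟨A, hA, hstep⟩ := hB₀ (max B₀ (2 * h)) (le_max_left _ _)
  refine ⟨max B₀ (2 * h), A * (2 * |C|), by positivity, fun R F hR hF k => ?_⟩
  induction k with
  | zero =>
    intro J
    refine (hF J).mono hM (by simp) ?_ le_rfl
    linarith [le_max_right B₀ (2 * h), hR.rate_nonneg]
  | succ k ih =>
    intro J
    refine (hstep _ k _ (fun J => hR.mul hM hO (ih J) (le_max_right _ _)) J).mono hM (le_of_eq ?_)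
      le_rfl le_rfl
    rw [abs_of_nonneg hR.const_nonneg]
    ring

theorem exists_norm_transposeIter_le (hM : IsWeightSequence M) (hO : IsOpen O)
    (hX : ∀ m, InDCClass (prodDir b) O M (X m)) (C₀ C h a₀ : ℝ) :
    ∃ a ≥ a₀, ∀ (R : E × (V → ℂ) → ℂ) (F : (ι → ι ⊕ V) → E × (V → ℂ) → ℂ),
      InDCClassWith (prodDir b) O M C h 0 R → (∀ J, InDCClassWith (prodDir b) O M C₀ h 0 (F J)) →
        ∀ k J, ContDiffOn ℝ ∞ (transposeIter b X R F k J) O ∧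
          IsHolSnd O (transposeIter b X R F k J) ∧
            ∀ y ∈ O, ‖transposeIter b X R F k J y‖ ≤ |C₀| * (a ^ k * M k) := by
  obtain ⟨B, A, hA, hiter⟩ := exists_inDCClassWith_transposeIter hM hO hX C₀ C h
  refine ⟨max A a₀, le_max_right _ _, fun R F hR hF k J => ?_⟩
  have hclass := hiter R F hR hF k J
  refine ⟨hclass.contDiffOn, hclass.isHolSnd, fun y hy => (hclass.norm_apply_le hy).trans ?_⟩
  have hMk := hM.pos k
  have hAa := le_max_left A a₀
  rw [mul_comm (A ^ k), mul_assoc]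
  exact mul_le_mul (le_abs_self C₀) (by gcongr) (by positivity) (abs_nonneg C₀)

end Class

variable [MeasurableSpace E]

/-- The integral against `exp Φ * χ` of the form `∑ F J • ⋀ᵢ dy_{J i}` over the graph of `v`. -/
noncomputable def phaseIntegral (μ : Measure E) (b : Module.Basis ι ℝ E) (v : E → V → ℂ)
    (Φ χ : E → ℂ) (F : (ι → ι ⊕ V) → E × (V → ℂ) → ℂ) : ℂ :=
  ∫ q, Complex.exp (Φ q) * χ q * graphForm b v F q ∂μ

variable [BorelSpace E] [FiniteDimensional ℝ E] (μ : Measure E) [μ.IsAddHaarMeasure] {Φ χ : E → ℂ}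

namespace IsTangentField

variable (S : IsTangentField b O Ω v X)

include S

theorem mul_phaseIntegral [DecidableEq V] (hΦ : ContDiff ℝ 1 Φ) (hχ : ContDiff ℝ 1 χ)
    (hχc : HasCompactSupport χ) (hχΩ : tsupport χ ⊆ Ω) (hR : ContDiffOn ℝ ∞ R O)
    (hRhol : IsHolSnd O R) {ρ : ℂ}
    (hΦR : ∀ q ∈ Ω, fieldDeriv b (baseField v X) Φ q * R (q, v q) = ρ)
    (hF : ∀ J, ContDiffOn ℝ ∞ (F J) O) (hFhol : ∀ J, IsHolSnd O (F J)) :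
    ρ * phaseIntegral μ b v Φ χ F =
      phaseIntegral μ b v Φ χ (transposeCoeff b X fun J y => R y * F J y) -
        phaseIntegral μ b v Φ (fieldDeriv b (baseField v X) χ) fun J y => R y * F J y := by
  have hRF : ∀ J, ContDiffOn ℝ ∞ (fun y => R y * F J y) O := fun J => hR.mul (hF J)
  have hexp : ContDiff ℝ 1 fun q => Complex.exp (Φ q) := hΦ.cexp
  have hsub : tsupport (fun q => Complex.exp (Φ q) * χ q) ⊆ tsupport χ := tsupport_mul_subset_right
  have hparts := S.integral_fieldDeriv_mul_graphForm μ hRF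
    (fun J => hRhol.mul S.isOpen_total (hFhol J) hR (hF J)) (hexp.mul hχ)
    (hχc.of_isClosed_subset (isClosed_tsupport _) hsub) (hsub.trans hχΩ)
  have hmain := S.integrable_mul_graphForm μ hF (hexp.mul hχ).continuous.continuousOn hχc hχΩ
    fun q hq => by simp [image_eq_zero_of_notMem_tsupport hq]
  have hcutoff := S.integrable_mul_graphForm μ hRF
    (θ := fun q => Complex.exp (Φ q) * fieldDeriv b (baseField v X) χ q)
    (hexp.continuous.continuousOn.mul (S.continuousOn_fieldDeriv_baseField hχ)) hχc hχΩ
    fun q hq => by simp [fieldDeriv_eq_zero hq]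
  rw [eq_sub_iff_add_eq, phaseIntegral, phaseIntegral, phaseIntegral, ← hparts,
    ← integral_const_mul, ← integral_add (hmain.const_mul ρ) hcutoff]
  congr 1 with q
  by_cases hq : q ∈ Ω
  · rw [fieldDeriv_mul (hexp.differentiable one_ne_zero).differentiableAt
      (hχ.differentiable one_ne_zero).differentiableAt,
      fieldDeriv_cexp (hΦ.differentiable one_ne_zero).differentiableAt, graphForm_mul, ← hΦR q hq]
    ring
  · have hqχ : q ∉ tsupport χ := fun h => hq (hχΩ h)
    rw [fieldDeriv_eq_zero hqχ, fieldDeriv_eq_zero fun h => hqχ (hsub h),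
      image_eq_zero_of_notMem_tsupport hqχ]
    simp

theorem exists_norm_phaseIntegral_le {g : E → ℂ} (hg : ContinuousOn g Ω)
    (hχ : HasCompactSupport χ) (hχΩ : tsupport χ ⊆ Ω) (hzero : ∀ q ∉ tsupport χ, g q = 0) :
    ∃ K ≥ 0, ∀ (Φ : E → ℂ) (s N : ℝ) (F : (ι → ι ⊕ V) → E × (V → ℂ) → ℂ), 0 ≤ s →
      (∀ q, g q ≠ 0 → ‖Complex.exp (Φ q)‖ ≤ s) → (∀ J, ∀ y ∈ O, ‖F J y‖ ≤ N) →
        ‖phaseIntegral μ b v Φ g F‖ ≤ s * N * K := by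
  have hminor : ContinuousOn (fun q => ∑ J, ‖graphMinor b v J q‖) Ω :=
    continuousOn_finsetSum _ fun J _ => (continuousOn_det_jacobianMatrix b S.isOpen_base fun i =>
      contDiffOn_graphCoord S.contDiffOn_graph (J i)).norm
  have hint : Integrable (fun q => ‖g q‖ * ∑ J, ‖graphMinor b v J q‖) μ := by
    have hsub : tsupport (fun q => ‖g q‖ * ∑ J, ‖graphMinor b v J q‖) ⊆ tsupport χ :=
      closure_minimal (fun q hq => not_imp_comm.1 (hzero q)
        (norm_ne_zero_iff.1 (left_ne_zero_of_mul hq))) (isClosed_tsupport _)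
    exact integrable_of_continuousOn_tsupport_subset S.isOpen_base
      (hg.norm.mul hminor) (hχ.of_isClosed_subset (isClosed_tsupport _) hsub)
      (hsub.trans hχΩ)
  refine ⟨∫ q, ‖g q‖ * ∑ J, ‖graphMinor b v J q‖ ∂μ, integral_nonneg fun q => by positivity,
    fun Φ s N F hs hΦ hF => ?_⟩
  rw [phaseIntegral, ← integral_const_mul]
  refine norm_integral_le_of_norm_le (hint.const_mul _) (.of_forall fun q => ?_)
  by_cases hgq : g q = 0
  · simp [hgq]
  have hq : q ∈ Ω := hχΩ (not_imp_comm.1 (hzero q) hgq)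
  rw [norm_mul, norm_mul]
  calc ‖Complex.exp (Φ q)‖ * ‖g q‖ * ‖graphForm b v F q‖
      ≤ s * ‖g q‖ * (N * ∑ J, ‖graphMinor b v J q‖) := by
        gcongr
        · exact hΦ q hgq
        · exact norm_graphForm_le hF (S.mapsTo q hq)
    _ = s * N * (‖g q‖ * ∑ J, ‖graphMinor b v J q‖) := by ring

theorem exists_norm_phaseIntegral_le_div [DecidableEq V] (hM : IsWeightSequence M)
    (hX : ∀ m, InDCClass (prodDir b) O M (X m)) (hχ : ContDiff ℝ 1 χ) (hχc : HasCompactSupport χ)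
    (hχΩ : tsupport χ ⊆ Ω) (C₀ C h : ℝ) {c : ℝ} (hc : 0 < c) :
    ∃ A > 0, ∀ (Φ : E → ℂ) (R : E × (V → ℂ) → ℂ) (ρ : ℝ) (F : (ι → ι ⊕ V) → E × (V → ℂ) → ℂ),
      ContDiff ℝ 1 Φ → 0 < ρ → InDCClassWith (prodDir b) O M C h 0 R →
      (∀ J, InDCClassWith (prodDir b) O M C₀ h 0 (F J)) →
      (∀ q ∈ Ω, fieldDeriv b (baseField v X) Φ q * R (q, v q) = ρ) →
      (∀ q, χ q ≠ 0 → ‖Complex.exp (Φ q)‖ ≤ 1) →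
      (∀ q, fieldDeriv b (baseField v X) χ q ≠ 0 →
        ‖Complex.exp (Φ q)‖ ≤ Real.exp (-(c * ρ))) →
      ∀ k : ℕ, ‖phaseIntegral μ b v Φ χ F‖ ≤ A ^ (k + 1) * M k / ρ ^ k := by
  obtain ⟨a, ha, hiter⟩ := exists_norm_transposeIter_le hM S.isOpen_total hX C₀ C h (max 1 (1 / c))
  obtain ⟨K₁, hK₁, hbound₁⟩ := S.exists_norm_phaseIntegral_le μ hχ.continuous.continuousOn hχc hχΩ
    fun q hq => image_eq_zero_of_notMem_tsupport hq
  obtain ⟨K₂, hK₂, hbound₂⟩ := S.exists_norm_phaseIntegral_le μ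
    (S.continuousOn_fieldDeriv_baseField hχ) hχc hχΩ fun q hq => fieldDeriv_eq_zero hq
  have ha₁ : 1 ≤ a := (le_max_left _ _).trans ha
  have hD : 0 ≤ |C₀| * K₁ + |C| * |C₀| * K₂ := by positivity
  refine ⟨2 * a + (|C₀| * K₁ + |C| * |C₀| * K₂), by linarith,
    fun Φ R ρ F hΦ hρ hR hF hΦR hΦ₁ hΦ₂ k => ?_⟩
  have hclass := hiter R F hR hF
  have hRnorm : ∀ k J, ∀ y ∈ O,
      ‖R y * transposeIter b X R F k J y‖ ≤ |C| * (|C₀| * (a ^ k * M k)) := by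
    intro k J y hy
    rw [norm_mul]
    refine mul_le_mul (((hR.norm_apply_le hy).trans_eq ?_).trans (le_abs_self C))
      ((hclass k J).2.2 y hy) (norm_nonneg _) (abs_nonneg C)
    rw [hM.zero, mul_one]
  have hstep : ∀ k, ρ * ‖phaseIntegral μ b v Φ χ (transposeIter b X R F k)‖ ≤
      ‖phaseIntegral μ b v Φ χ (transposeIter b X R F (k + 1))‖ +
        |C| * |C₀| * K₂ * (Real.exp (-(c * ρ)) * (a ^ k * M k)) := by
    intro k
    have hparts := congrArg norm (S.mul_phaseIntegral μ hΦ hχ hχc hχΩ hR.contDiffOn hR.isHolSnd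
      hΦR (fun J => (hclass k J).1) fun J => (hclass k J).2.1)
    rw [norm_mul, Complex.norm_of_nonneg hρ.le] at hparts
    refine hparts.trans_le ((norm_sub_le _ _).trans (add_le_add_right
      ((hbound₂ Φ _ _ _ (Real.exp_pos _).le hΦ₂ (hRnorm k)).trans_eq ?_) _))
    ring
  have hdecay := hM.pow_mul_le_of_recursion hρ.le hc ha₁ ((le_max_right _ _).trans ha)
    (D := |C₀| * K₁) (by positivity) (by positivity) hstep
    (fun k => (hbound₁ Φ 1 _ _ zero_le_one hΦ₁ fun J => (hclass k J).2.2).trans_eq (by ring)) k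
  rw [le_div_iff₀' (pow_pos hρ k), pow_succ', mul_assoc]
  exact hdecay.trans (mul_le_mul (le_add_of_nonneg_left (by linarith))
    (mul_le_mul_of_nonneg_right (pow_le_pow_left₀ (by linarith) (le_add_of_nonneg_right hD) k)
      (hM.pos k).le) (mul_nonneg (pow_nonneg (by linarith) k) (hM.pos k).le) (by linarith))

end IsTangentField

end PhaseIntegral

section FirstJet

variable {d n : ℕ} {f : PSp d n → ℂ → (Fin d → ℂ) → ℂ} {u : PSp d n → ℂ} {Ω : Set (PSp d n)}
  {O : Set (PSp d n × (Option (Fin d) → ℂ))} {M : ℕ → ℝ}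

/-- The nonlinearity `f (x, t, ζ₀, ζ)` as a function on the space of first jets in `x`. The fibre
coordinate `none` stands for `ζ₀`, and `some k` for `ζ_k`. -/
def jetFun (f : PSp d n → ℂ → (Fin d → ℂ) → ℂ) (y : PSp d n × (Option (Fin d) → ℂ)) : ℂ :=
  f y.1 (y.2 none) fun k => y.2 (some k)

/-- The isomorphism `ℂ^{1+d} ≅ ℂ × ℂ^d` that splits off the coordinate `none`. -/
noncomputable def splitNone (d : ℕ) : (Option (Fin d) → ℂ) →L[ℂ] ℂ × (Fin d → ℂ) :=
  (ContinuousLinearMap.proj none).prod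
    (ContinuousLinearMap.pi fun k => ContinuousLinearMap.proj (some k))

theorem isSliceHol_jetFun
    (hf : ∀ p ∈ Ω, Differentiable ℂ fun ζ : ℂ × (Fin d → ℂ) => f p ζ.1 ζ.2)
    (l : Option (Fin d)) : IsSliceHol Ω (jetFun f) l := fun p hp z =>
  (hf p hp).comp ((splitNone d).differentiable.comp
    ((ContinuousLinearMap.single ℂ (fun _ => ℂ) l).differentiable.const_add z))

theorem dirDeriv_inr_some_jetFun {y : PSp d n × (Option (Fin d) → ℂ)}
    (hf : Differentiable ℂ fun ζ : ℂ × (Fin d → ℂ) => f y.1 ζ.1 ζ.2)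
    (hy : DifferentiableAt ℝ (jetFun f) y) (k : Fin d) :
    dirDeriv (prodDir (stdBasis d n) (Sum.inr (some k))) (jetFun f) y =
      fderiv ℂ (fun ζ : ℂ × (Fin d → ℂ) => f y.1 ζ.1 ζ.2) (y.2 none, fun k => y.2 (some k))
        (0, Pi.single k 1) := by
  have hreal : HasFDerivAt (fun z => jetFun f (y.1, z)) _ y.2 :=
    HasFDerivAt.comp (g := jetFun f) (f := fun z => (y.1, z)) y.2 hy.hasFDerivAt
      (hasFDerivAt_prodMk_right y.1 y.2)
  have hcomplex : HasFDerivAt (fun z => jetFun f (y.1, z)) _ y.2 :=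
    ((hf (splitNone d y.2)).hasFDerivAt.comp y.2 (splitNone d).hasFDerivAt).restrictScalars ℝ
  have hsplit : splitNone d (Pi.single (some k) 1) = (0, Pi.single k 1) := by
    ext m <;> simp [splitNone, Pi.single_apply]
  rw [← hsplit]
  exact DFunLike.congr_fun (hreal.unique hcomplex) (Pi.single (some k) 1)

theorem exists_inDCClass_jetFun (hM : IsWeightSequence M) (hΩ : IsOpen Ω)
    (hsmooth : ∀ (ζ₀ : ℂ) (ζ : Fin d → ℂ), ContDiffOn ℝ ∞ (fun p => f p ζ₀ ζ) Ω)
    (hhol : ∀ p ∈ Ω, Differentiable ℂ fun ζ : ℂ × (Fin d → ℂ) => f p ζ.1 ζ.2)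
    (hbound : ∀ K : Set (PSp d n × ℂ × (Fin d → ℂ)), IsCompact K → K ⊆ Ω ×ˢ Set.univ →
      ∃ C > (0 : ℝ), ∀ (α : Fin d → ℕ) (β : Fin n → ℕ), ∀ q ∈ K,
        ‖PDxt α β (fun p => f p q.2.1 q.2.2) q.1‖
          ≤ C ^ ((∑ i, α i) + (∑ i, β i) + 1) * M ((∑ i, α i) + (∑ i, β i)))
    {y₀ : PSp d n × (Option (Fin d) → ℂ)} (hy₀ : y₀.1 ∈ Ω) :
    ∃ r > 0, InDCClass (prodDir (stdBasis d n)) (Metric.ball y₀ r) M (jetFun f) := by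
  refine exists_inDCClass_of_separate hM hΩ (fun z => hsmooth (z none) fun k => z (some k))
    (isSliceHol_jetFun hhol) (fun K hK hKΩ => ?_) hy₀
  obtain ⟨C, hC, hle⟩ := hbound (Prod.map id (splitNone d) '' K)
    (hK.image (continuous_id.prodMap (splitNone d).continuous))
    (Set.image_subset_iff.2 fun y hy => ⟨(hKΩ hy).1, trivial⟩)
  exact ⟨C, hC, fun α y hy => norm_wordDeriv_stdBasis_le (B := fun m => C ^ (m + 1) * M m) hΩ
    (hsmooth (y.2 none) fun k => y.2 (some k)) (hKΩ hy).1
    (fun a b => hle a b (Prod.map id (splitNone d) y) ⟨y, hy, rfl⟩) α⟩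

/-- The first jet in `x` of `u`. -/
noncomputable def firstJet (u : PSp d n → ℂ) (q : PSp d n) : Option (Fin d) → ℂ
  | none => u q
  | some k => fderiv ℝ u q (Pi.single k 1, 0)

theorem contDiffOn_firstJet (hΩ : IsOpen Ω) (hu : ContDiffOn ℝ 2 u Ω) :
    ContDiffOn ℝ 1 (firstJet u) Ω := by
  refine contDiffOn_pi.2 ?_
  rintro (_ | k)
  · exact hu.of_le one_le_two
  · exact (hu.fderiv_of_isOpen hΩ (by norm_num)).clm_apply contDiffOn_const

/-- The lift to the jet space of the linearization `∂/∂t_j - ∑ ∂f/∂ζ_k ∂/∂x_k` of the equation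
`∂u/∂t_j = f (x, t, u, u_x)`. Its vertical part makes it tangent to the jet of every solution. -/
noncomputable def jetField (f : PSp d n → ℂ → (Fin d → ℂ) → ℂ) (j : Fin n) :
    (Fin d ⊕ Fin n) ⊕ Option (Fin d) → PSp d n × (Option (Fin d) → ℂ) → ℂ
  | Sum.inl (Sum.inl k) => fun y =>
      -1 * dirDeriv (prodDir (stdBasis d n) (Sum.inr (some k))) (jetFun f) y
  | Sum.inl (Sum.inr i) => fun _ => if i = j then 1 else 0
  | Sum.inr none => fun y => jetFun f y + ∑ k,
      -1 * (y.2 (some k) * dirDeriv (prodDir (stdBasis d n) (Sum.inr (some k))) (jetFun f) y)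
  | Sum.inr (some k) => fun y =>
      dirDeriv (prodDir (stdBasis d n) (Sum.inl (Sum.inl k))) (jetFun f) y +
        y.2 (some k) * dirDeriv (prodDir (stdBasis d n) (Sum.inr none)) (jetFun f) y

theorem inDCClass_fibreCoord {E V Y : Type*} [NormedAddCommGroup E] [NormedSpace ℝ E] [Fintype V]
    [Finite Y] {e : Y → E × (V → ℂ)} {O : Set (E × (V → ℂ))} (hM : IsWeightSequence M)
    (hO : Bornology.IsBounded O) (l : V) : InDCClass e O M fun y => y.2 l :=
  InDCClass.clm hM ((ContinuousLinearMap.proj (R := ℝ) (φ := fun _ : V => ℂ) l).comp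
    (ContinuousLinearMap.snd ℝ E (V → ℂ))) (fun z => by simp) hO

theorem inDCClass_jetField (hM : IsWeightSequence M) (hO : IsOpen O) (hOb : Bornology.IsBounded O)
    (hf : InDCClass (prodDir (stdBasis d n)) O M (jetFun f)) (j : Fin n)
    (m : (Fin d ⊕ Fin n) ⊕ Option (Fin d)) :
    InDCClass (prodDir (stdBasis d n)) O M (jetField f j m) := by
  rcases m with (k | i) | (_ | k)
  · exact .mul hM hO (.const hM _) (hf.dirDeriv hM hO _)
  · exact .const hM _
  · exact .add hM hO hf (.sum hM hO _ fun k _ => .mul hM hO (.const hM _)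
      (.mul hM hO (inDCClass_fibreCoord hM hOb _) (hf.dirDeriv hM hO _)))
  · exact .add hM hO (hf.dirDeriv hM hO _)
      (.mul hM hO (inDCClass_fibreCoord hM hOb _) (hf.dirDeriv hM hO _))

section Tangency

variable {j : Fin n} {q : PSp d n}

theorem fieldDeriv_baseField_jetField (g : PSp d n → ℂ) :
    fieldDeriv (stdBasis d n) (baseField (firstJet u) (jetField f j)) g q =
      fderiv ℝ g q (0, Pi.single j 1) -
        ∑ k, dirDeriv (prodDir (stdBasis d n) (Sum.inr (some k))) (jetFun f) (q, firstJet u q) *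
          fderiv ℝ g q (Pi.single k 1, 0) := by
  simp [fieldDeriv, baseField, jetField, stdBasis_inl, stdBasis_inr, neg_add_eq_sub]

theorem fderiv_jetFun_firstJet (hΩ : IsOpen Ω) (hu : ContDiffOn ℝ 2 u Ω) (hq : q ∈ Ω)
    (hqO : (q, firstJet u q) ∈ O) (hf : IsHolSnd O (jetFun f))
    (hfd : DifferentiableAt ℝ (jetFun f) (q, firstJet u q)) (k : Fin d) :
    fderiv ℝ (fun p => jetFun f (p, firstJet u p)) q (Pi.single k 1, 0) =
      jetField f j (Sum.inr (some k)) (q, firstJet u q) +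
        ∑ k', dirDeriv (prodDir (stdBasis d n) (Sum.inr (some k'))) (jetFun f) (q, firstJet u q) *
          fderiv ℝ (fun p => fderiv ℝ u p (Pi.single k' 1, 0)) q (Pi.single k 1, 0) := by
  rw [fderiv_comp_graph (b := stdBasis d n) hf hfd
    (differentiableAt_of_contDiffOn hΩ one_ne_zero (contDiffOn_firstJet hΩ hu) hq) hqO]
  have hnone : graphCoord (stdBasis d n) (firstJet u) (Sum.inr none) = u := rfl
  have hsome : ∀ k', graphCoord (stdBasis d n) (firstJet u) (Sum.inr (some k')) =
      fun p => fderiv ℝ u p (Pi.single k' 1, 0) := fun _ => rfl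
  simp only [Fintype.sum_sum_type, Fintype.sum_option, fderiv_graphCoord_inl, hnone, hsome,
    jetField, firstJet, ← stdBasis_inl, Module.Basis.repr_self, Finsupp.single_apply,
    apply_ite Complex.ofReal, Complex.ofReal_one, Complex.ofReal_zero, mul_ite, mul_one, mul_zero,
    Finset.sum_ite_eq, Finset.mem_univ, if_true]
  ring

theorem fieldDeriv_firstJet (hΩ : IsOpen Ω) (hu : ContDiffOn ℝ 2 u Ω)
    (hPDE : ∀ p ∈ Ω, fderiv ℝ u p (0, Pi.single j 1) = jetFun f (p, firstJet u p)) (hq : q ∈ Ω)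
    (hqO : (q, firstJet u q) ∈ O) (hf : IsHolSnd O (jetFun f))
    (hfd : DifferentiableAt ℝ (jetFun f) (q, firstJet u q)) (l : Option (Fin d)) :
    fieldDeriv (stdBasis d n) (baseField (firstJet u) (jetField f j)) (fun p => firstJet u p l) q =
      jetField f j (Sum.inr l) (q, firstJet u q) := by
  have hu2 : ContDiffAt ℝ 2 u q := hu.contDiffAt (hΩ.mem_nhds hq)
  rw [fieldDeriv_baseField_jetField]
  rcases l with _ | k
  · simp only [firstJet, hPDE q hq, jetField]
    simp [sub_eq_add_neg, mul_comm]
  · have hdt : fderiv ℝ (fun p => fderiv ℝ u p (Pi.single k 1, 0)) q (0, Pi.single j 1) =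
        fderiv ℝ (fun p => jetFun f (p, firstJet u p)) q (Pi.single k 1, 0) := by
      rw [fderiv_fderiv_apply_comm hu2]
      exact DFunLike.congr_fun (Filter.EventuallyEq.fderiv_eq
        (Filter.eventually_of_mem (hΩ.mem_nhds hq) hPDE)) _
    simp only [firstJet, hdt, fderiv_jetFun_firstJet (j := j) hΩ hu hq hqO hf hfd]
    rw [sub_eq_iff_eq_add]
    congr 1
    exact Finset.sum_congr rfl fun k' _ => by rw [fderiv_fderiv_apply_comm hu2]

theorem isTangentField_jetField (hM : IsWeightSequence M) (hΩ : IsOpen Ω)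
    (hu : ContDiffOn ℝ 2 u Ω)
    (hPDE : ∀ p ∈ Ω, fderiv ℝ u p (0, Pi.single j 1) = jetFun f (p, firstJet u p))
    (hO : IsOpen O) (hOb : Bornology.IsBounded O)
    (hf : InDCClass (prodDir (stdBasis d n)) O M (jetFun f)) :
    IsTangentField (stdBasis d n) O (Ω ∩ (fun q => (q, firstJet u q)) ⁻¹' O) (firstJet u)
      (jetField f j) where
  isOpen_total := hO
  isOpen_base :=
    (continuousOn_id.prodMk (contDiffOn_firstJet hΩ hu).continuousOn).isOpen_inter_preimage hΩ hO
  contDiffOn_graph := (contDiffOn_firstJet hΩ hu).mono Set.inter_subset_left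
  mapsTo _ hq := hq.2
  contDiffOn m := by
    obtain ⟨_, _, h⟩ := inDCClass_jetField hM hO hOb hf j m
    exact h.contDiffOn
  isHolSnd m := by
    obtain ⟨_, _, h⟩ := inDCClass_jetField hM hO hOb hf j m
    exact h.isHolSnd
  tangent l q hq := by
    obtain ⟨_, _, h⟩ := hf
    exact fieldDeriv_firstJet hΩ hu hPDE hq.1 hq.2 h.isHolSnd
      (differentiableAt_of_contDiffOn hO (by simp) h.contDiffOn hq.2) l

end Tangency

end FirstJet

section Euclidean

variable {d n : ℕ}

/-- The coordinate functions of `ℝ^d × ℝ^n`. -/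
noncomputable def coordCLM (i : Fin d ⊕ Fin n) : PSp d n →L[ℝ] ℝ :=
  LinearMap.toContinuousLinearMap ((stdBasis d n).coord i)

theorem coordCLM_inl (k : Fin d) (q : PSp d n) : coordCLM (Sum.inl k) q = q.1 k := by
  simp [coordCLM, stdBasis]

theorem coordCLM_inr (k : Fin n) (q : PSp d n) : coordCLM (Sum.inr k) q = q.2 k := by
  simp [coordCLM, stdBasis]

theorem coordCLM_stdBasis (i j : Fin d ⊕ Fin n) :
    coordCLM i (stdBasis d n j) = if j = i then 1 else 0 := by
  simp [coordCLM, Finsupp.single_apply]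

theorem abs_coordCLM_le (i : Fin d ⊕ Fin n) (q : PSp d n) : |coordCLM i q| ≤ ‖q‖ := by
  rcases i with k | k
  · exact (congrArg _ (coordCLM_inl k q)).trans_le
      ((norm_le_pi_norm q.1 k).trans (norm_fst_le q))
  · exact (congrArg _ (coordCLM_inr k q)).trans_le
      ((norm_le_pi_norm q.2 k).trans (norm_snd_le q))

theorem dotP_eq_sum (p q : PSp d n) : dotP p q = ∑ i, coordCLM i p * coordCLM i q := by
  simp [dotP, coordCLM_inl, coordCLM_inr]

theorem enP_sq (p : PSp d n) : enP p ^ 2 = ∑ i, coordCLM i p ^ 2 := by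
  rw [enP, Real.sq_sqrt (by positivity)]
  simp [coordCLM_inl, coordCLM_inr]

theorem enP_nonneg (p : PSp d n) : 0 ≤ enP p := Real.sqrt_nonneg _

theorem continuous_enP : Continuous (enP : PSp d n → ℝ) := by
  unfold enP
  fun_prop

theorem enP_smul {s : ℝ} (hs : 0 ≤ s) (p : PSp d n) : enP (s • p) = s * enP p := by
  refine (pow_left_inj₀ (enP_nonneg _) (mul_nonneg hs (enP_nonneg p)) two_ne_zero).1 ?_
  simp only [mul_pow, enP_sq, Finset.mul_sum, map_smul, smul_eq_mul]

theorem norm_le_enP (p : PSp d n) : ‖p‖ ≤ enP p := by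
  have hcoord : ∀ i, |coordCLM i p| ≤ enP p := fun i => by
    refine abs_le_of_sq_le_sq ?_ (enP_nonneg p)
    rw [enP_sq]
    exact Finset.single_le_sum (f := fun i => coordCLM i p ^ 2) (fun _ _ => sq_nonneg _)
      (Finset.mem_univ i)
  refine max_le ((pi_norm_le_iff_of_nonneg (enP_nonneg p)).2 fun k => ?_)
    ((pi_norm_le_iff_of_nonneg (enP_nonneg p)).2 fun k => ?_)
  · exact coordCLM_inl k p ▸ hcoord (Sum.inl k)
  · exact coordCLM_inr k p ▸ hcoord (Sum.inr k)

theorem enP_pos {p : PSp d n} (hp : p ≠ 0) : 0 < enP p :=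
  (norm_pos_iff.2 hp).trans_le (norm_le_enP p)

/-- The cone over a set `N` of directions, normalized in the Euclidean norm. -/
def directionCone (N : Set (PSp d n)) : Set (PSp d n) := {w | w ≠ 0 ∧ (enP w)⁻¹ • w ∈ N}

theorem isOpen_directionCone {N : Set (PSp d n)} (hN : IsOpen N) : IsOpen (directionCone N) :=
  ContinuousOn.isOpen_inter_preimage (f := fun w => (enP w)⁻¹ • w)
    ((continuous_enP.continuousOn.inv₀ fun _ hw => (enP_pos hw).ne').smul continuousOn_id)
    isOpen_ne hN

theorem smul_mem_directionCone {N : Set (PSp d n)} {w : PSp d n} (hw : w ∈ directionCone N)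
    {s : ℝ} (hs : 0 < s) : s • w ∈ directionCone N := by
  refine ⟨smul_ne_zero hs.ne' hw.1, ?_⟩
  rw [enP_smul hs.le, smul_smul, mul_inv_rev, inv_mul_cancel_right₀ hs.ne']
  exact hw.2

end Euclidean

section FBIPhase

variable {d n : ℕ}

/-- The exponent of the F.B.I. kernel. -/
noncomputable def fbiPhase (p w q : PSp d n) : ℂ :=
  Complex.I * ((dotP (p - q) w : ℝ) : ℂ) - ((enP w * enP (p - q) ^ 2 : ℝ) : ℂ)

theorem norm_cexp_fbiPhase (p w q : PSp d n) :
    ‖Complex.exp (fbiPhase p w q)‖ = Real.exp (-(enP w * enP (p - q) ^ 2)) := by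
  rw [Complex.norm_exp, fbiPhase, Complex.sub_re, Complex.ofReal_re, Complex.mul_re]
  simp

theorem fbiPhase_eq_sum (p w q : PSp d n) :
    fbiPhase p w q = ∑ i, (Complex.I * coordCLM i w * ((coordCLM i p : ℂ) - coordCLM i q) -
      enP w * ((coordCLM i p : ℂ) - coordCLM i q) ^ 2) := by
  rw [fbiPhase, dotP_eq_sum, enP_sq, Finset.sum_sub_distrib, Finset.mul_sum]
  push_cast [map_sub]
  rw [Finset.mul_sum]
  exact congrArg (· - _) (Finset.sum_congr rfl fun i _ => by ring)

theorem contDiff_fbiPhase (p w : PSp d n) : ContDiff ℝ 1 (fbiPhase p w) := by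
  rw [show fbiPhase p w = _ from funext (fbiPhase_eq_sum p w)]
  have hcoord : ∀ i, ContDiff ℝ 1 fun q : PSp d n => (coordCLM i q : ℂ) := fun i =>
    (Complex.ofRealCLM.comp (coordCLM i)).contDiff
  fun_prop

theorem fderiv_fbiPhase (p w q : PSp d n) (i : Fin d ⊕ Fin n) :
    fderiv ℝ (fbiPhase p w) q (stdBasis d n i) =
      -Complex.I * coordCLM i w + 2 * enP w * coordCLM i (p - q) := by
  have hcoord : ∀ j, HasFDerivAt (fun q => (coordCLM j p : ℂ) - coordCLM j q)
      (-(Complex.ofRealCLM.comp (coordCLM j))) q := fun j =>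
    (Complex.ofRealCLM.comp (coordCLM j)).hasFDerivAt.const_sub _
  have hphase := HasFDerivAt.fun_sum (u := Finset.univ) fun j _ =>
    ((hcoord j).const_mul (Complex.I * coordCLM j w)).fun_sub
      (((hcoord j).pow 2).const_mul (enP w : ℂ))
  rw [show fbiPhase p w = _ from funext (fbiPhase_eq_sum p w), hphase.fderiv]
  simp only [sum_apply, sub_apply, smul_apply, neg_apply,
    ContinuousLinearMap.comp_apply, Complex.ofRealCLM_apply, coordCLM_stdBasis, smul_eq_mul,
    nsmul_eq_mul, apply_ite Complex.ofReal, Complex.ofReal_one, Complex.ofReal_zero, map_sub,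
    Complex.ofReal_sub]
  rw [Finset.sum_eq_single i (fun j _ hj => by simp [hj.symm]) (by simp)]
  simp only [if_true, mul_neg, mul_one]
  push_cast
  ring

end FBIPhase

section PhaseSymbol

variable {d n : ℕ} {V : Type*} {M : ℕ → ℝ} {X : (Fin d ⊕ Fin n) ⊕ V → PSp d n × (V → ℂ) → ℂ}
  {O : Set (PSp d n × (V → ℂ))}

/-- The derivative along the base part of `X` of the F.B.I. phase with parameters `p` and `w`,
divided by `|w|`, as a function of the direction `o = w / |w|`. -/
noncomputable def phaseSymbol (X : (Fin d ⊕ Fin n) ⊕ V → PSp d n × (V → ℂ) → ℂ) (p o : PSp d n)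
    (y : PSp d n × (V → ℂ)) : ℂ :=
  ∑ i, X (Sum.inl i) y * (-Complex.I * coordCLM i o + 2 * coordCLM i (p - y.1))

theorem fieldDeriv_fbiPhase (v : PSp d n → V → ℂ) {w : PSp d n} (hw : w ≠ 0) (p q : PSp d n) :
    fieldDeriv (stdBasis d n) (baseField v X) (fbiPhase p w) q =
      enP w * phaseSymbol X p ((enP w)⁻¹ • w) (q, v q) := by
  have hw' : (enP w : ℂ) ≠ 0 := Complex.ofReal_ne_zero.2 (enP_pos hw).ne'
  rw [fieldDeriv, phaseSymbol, Finset.mul_sum]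
  refine Finset.sum_congr rfl fun i _ => ?_
  rw [fderiv_fbiPhase, baseField, map_smul, smul_eq_mul]
  push_cast
  field_simp

theorem phaseSymbol_self_smul (p w : PSp d n) (s : ℝ) (z : V → ℂ) :
    phaseSymbol X p (s • w) (p, z) =
      (-Complex.I * s) * ∑ i, X (Sum.inl i) (p, z) * coordCLM i w := by
  rw [phaseSymbol, Finset.mul_sum]
  refine Finset.sum_congr rfl fun i _ => ?_
  rw [sub_self, map_zero, map_smul, smul_eq_mul]
  push_cast
  ring

theorem continuousAt_phaseSymbol (hX : ∀ i, ContinuousOn (X (Sum.inl i)) O) (hO : IsOpen O)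
    {y : PSp d n × (V → ℂ)} (hy : y ∈ O) (p o : PSp d n) :
    ContinuousAt (fun a : (PSp d n × PSp d n) × PSp d n × (V → ℂ) => phaseSymbol X a.1.1 a.1.2 a.2)
      ((p, o), y) := by
  refine tendsto_finsetSum _ fun i _ => ContinuousAt.mul ?_ (Continuous.continuousAt ?_)
  · exact ContinuousAt.comp (f := Prod.snd) (x := ((p, o), y))
      ((hX i).continuousAt (hO.mem_nhds hy)) continuousAt_snd
  · fun_prop

variable [Fintype V]

theorem exists_ball_le_norm_phaseSymbol (hX : ∀ i, ContinuousOn (X (Sum.inl i)) O)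
    (hO : IsOpen O) {p o : PSp d n} {y : PSp d n × (V → ℂ)} (hy : y ∈ O)
    (hψ : phaseSymbol X p o y ≠ 0) :
    ∃ δ > 0, ∃ c > 0, ∀ p' ∈ Metric.ball p δ, ∀ o' ∈ Metric.ball o δ, ∀ y' ∈ Metric.ball y δ,
      c ≤ ‖phaseSymbol X p' o' y'‖ := by
  obtain ⟨δ, hδ, hball⟩ := Metric.eventually_nhds_iff_ball.1 <|
    (continuousAt_phaseSymbol hX hO hy p o).norm.eventually_const_le
      (half_lt_self (norm_pos_iff.2 hψ))
  refine ⟨δ, hδ, _, half_pos (norm_pos_iff.2 hψ), fun p' hp o' ho y' hy' =>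
    hball ((p', o'), y') ?_⟩
  rw [← ball_prod_same, ← ball_prod_same]
  exact ⟨⟨hp, ho⟩, hy'⟩

variable [DecidableEq V]

theorem exists_inDCClassWith_phaseSymbol (hM : IsWeightSequence M) (hO : IsOpen O)
    (hOb : Bornology.IsBounded O)
    (hX : ∀ i, InDCClass (prodDir (stdBasis d n)) O M (X (Sum.inl i))) (D : ℝ) :
    ∃ C h : ℝ, ∀ p o, ‖p‖ ≤ D → ‖o‖ ≤ D →
      InDCClassWith (prodDir (stdBasis d n)) O M C h 0 (phaseSymbol X p o) := by
  have hcoordX : ∀ i, InDCClass (prodDir (stdBasis d n)) O M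
      fun y => (coordCLM i y.1 : ℂ) * X (Sum.inl i) y := fun i =>
    .mul hM hO (.clm hM ((Complex.ofRealCLM.comp (coordCLM i)).comp
      (ContinuousLinearMap.fst ℝ (PSp d n) (V → ℂ))) (fun z => by simp) hOb) (hX i)
  obtain ⟨C₁, h₁, hC₁⟩ :=
    InDCClass.exists_forall_inDCClassWith hM Finset.univ fun i _ => hX i
  obtain ⟨C₂, h₂, hC₂⟩ :=
    InDCClass.exists_forall_inDCClassWith hM Finset.univ fun i _ => hcoordX i
  refine ⟨Fintype.card (Fin d ⊕ Fin n) * (2 * (3 * D) * C₁ + 2 * 2 * C₂),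
    max 0 (max h₁ h₂), fun p o hp ho => ?_⟩
  have hcoeff : ∀ i, ‖-Complex.I * coordCLM i o + 2 * (coordCLM i p : ℂ)‖ ≤ 3 * D := fun i =>
    calc ‖-Complex.I * coordCLM i o + 2 * (coordCLM i p : ℂ)‖
        ≤ |coordCLM i o| + 2 * |coordCLM i p| := (norm_add_le _ _).trans_eq (by simp)
      _ ≤ 3 * D := by linarith [abs_coordCLM_le i o, abs_coordCLM_le i p]
  refine (InDCClassWith.sum hM hO Finset.univ (le_max_left _ _) fun i hi =>
    .add hO (.const_mul hM hO ((hC₁ i hi).mono hM le_rfl (by simp) le_rfl) _ (hcoeff i))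
      (.const_mul hM hO ((hC₂ i hi).mono hM le_rfl (by simp) le_rfl) (-2)
        (le_of_eq (by simp : ‖(-2 : ℂ)‖ = 2)))).congr hO fun y _ =>
    Finset.sum_congr rfl fun i _ => ?_
  push_cast [map_sub]
  ring

theorem exists_inDCClassWith_inv_phaseSymbol (hM : IsWeightSequence M) (hO : IsOpen O)
    (hOb : Bornology.IsBounded O)
    (hX : ∀ i, InDCClass (prodDir (stdBasis d n)) O M (X (Sum.inl i))) (D : ℝ) {c : ℝ}
    (hc : 0 < c) :
    ∃ C h : ℝ, ∀ p o, ‖p‖ ≤ D → ‖o‖ ≤ D → (∀ y ∈ O, c ≤ ‖phaseSymbol X p o y‖) →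
      InDCClassWith (prodDir (stdBasis d n)) O M C h 0 fun y => (phaseSymbol X p o y)⁻¹ := by
  obtain ⟨C, h, hclass⟩ := exists_inDCClassWith_phaseSymbol hM hO hOb hX D
  exact ⟨1 / c, max (2 * h) (2 * h * C / c), fun p o hp ho hlow =>
    (hclass p o hp ho).inv hM hO hc hlow (le_max_left _ _) (le_max_right _ _)⟩

end PhaseSymbol

section Microlocal

variable {d n : ℕ} {V : Type*} [Fintype V] {M : ℕ → ℝ}
  {X : (Fin d ⊕ Fin n) ⊕ V → PSp d n × (V → ℂ) → ℂ} {O : Set (PSp d n × (V → ℂ))}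
  {Ω : Set (PSp d n)} {v : PSp d n → V → ℂ}

theorem phaseIntegral_single_eq_FBIP [DecidableEq V] (χ : PSp d n → ℂ) (p w : PSp d n) (l : V) :
    phaseIntegral volume (stdBasis d n) v (fbiPhase p w) χ (Pi.single Sum.inl fun y => y.2 l) =
      FBIP (fun q => χ q * v q l) p w := by
  refine integral_congr_ae (.of_forall fun q => ?_)
  simp only [graphForm_single_inl, mul_assoc]
  rfl

/-- The function `u` is `𝓜`-microlocally regular at `(p₀, w₀)`: the F.B.I. transform of a
localization of `u` decays like `M k / ‖w‖ ^ k` for `w` in a conic neighbourhood of `w₀`. -/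
def MicrolocallyRegularAt (M : ℕ → ℝ) (Ω : Set (PSp d n)) (u : PSp d n → ℂ)
    (p₀ w₀ : PSp d n) : Prop :=
  ∃ χ : PSp d n → ℝ, ContDiff ℝ (⊤ : ℕ∞) χ ∧ HasCompactSupport χ ∧ tsupport χ ⊆ Ω ∧
    (∃ W : Set (PSp d n), IsOpen W ∧ p₀ ∈ W ∧ ∀ q ∈ W, χ q = 1) ∧
  ∃ U : Set (PSp d n), IsOpen U ∧ p₀ ∈ U ∧ IsCompact (closure U) ∧ closure U ⊆ Ω ∧
  ∃ Γ : Set (PSp d n), IsOpen Γ ∧ w₀ ∈ Γ ∧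
    (∀ w ∈ Γ, ∀ s : ℝ, 0 < s → s • w ∈ Γ) ∧ (∀ w ∈ Γ, w ≠ 0) ∧
  ∃ A > (0 : ℝ), ∀ p ∈ U, ∀ w ∈ Γ, ∀ k : ℕ,
    ‖FBIP (fun q => (χ q : ℂ) * u q) p w‖ ≤ A ^ (k + 1) * M k / enP w ^ k

theorem MicrolocallyRegularAt.mono {Ω' : Set (PSp d n)} {u : PSp d n → ℂ} {p₀ w₀ : PSp d n}
    (hu : MicrolocallyRegularAt M Ω u p₀ w₀) (hΩ : Ω ⊆ Ω') :
    MicrolocallyRegularAt M Ω' u p₀ w₀ := by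
  obtain ⟨χ, hχ, hχc, hχΩ, hχ₁, U, hU, hp₀, hUc, hUΩ, hΓ⟩ := hu
  exact ⟨χ, hχ, hχc, hχΩ.trans hΩ, hχ₁, U, hU, hp₀, hUc, hUΩ.trans hΩ, hΓ⟩

theorem sub_le_norm_sub_of_fderiv_ne_zero {E F : Type*} [NormedAddCommGroup E] [NormedSpace ℝ E]
    [NormedAddCommGroup F] [NormedSpace ℝ F] {g : E → F} {c : F} {p₀ p q : E} {R r : ℝ}
    (hg : ∀ᶠ x in 𝓝ˢ (Metric.closedBall p₀ R), g x = c) (hp : p ∈ Metric.ball p₀ r)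
    (hq : fderiv ℝ g q ≠ 0) : R - r ≤ ‖p - q‖ := by
  have hqR : q ∉ Metric.closedBall p₀ R := fun hmem => hq <| by
    have hconst : g =ᶠ[𝓝 q] fun _ => c := hg.filter_mono (nhds_le_nhdsSet hmem)
    rw [hconst.fderiv_eq, fderiv_fun_const, Pi.zero_apply]
  rw [Metric.mem_closedBall, dist_comm, not_le] at hqR
  rw [← dist_eq_norm]
  linarith [dist_triangle p₀ p q, Metric.mem_ball'.1 hp]

namespace IsTangentField

theorem restrict (S : IsTangentField (stdBasis d n) O Ω v X) {O' : Set (PSp d n × (V → ℂ))}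
    (hO' : IsOpen O') (hO : O' ⊆ O) :
    IsTangentField (stdBasis d n) O' (Ω ∩ (fun q => (q, v q)) ⁻¹' O') v X where
  isOpen_total := hO'
  isOpen_base := (continuousOn_id.prodMk S.contDiffOn_graph.continuousOn).isOpen_inter_preimage
    S.isOpen_base hO'
  contDiffOn_graph := S.contDiffOn_graph.mono Set.inter_subset_left
  mapsTo _ hq := hq.2
  contDiffOn m := (S.contDiffOn m).mono hO
  isHolSnd m := (S.isHolSnd m).mono hO
  tangent l q hq := S.tangent l q hq.1

variable [DecidableEq V]

theorem exists_norm_FBIP_le (S : IsTangentField (stdBasis d n) O Ω v X) (hM : IsWeightSequence M)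
    (hOb : Bornology.IsBounded O) (hX : ∀ m, InDCClass (prodDir (stdBasis d n)) O M (X m))
    {χ : PSp d n → ℂ} (hχ : ContDiff ℝ 1 χ) (hχc : HasCompactSupport χ) (hχΩ : tsupport χ ⊆ Ω)
    {U N : Set (PSp d n)} (hU : Bornology.IsBounded U) (hN : Bornology.IsBounded N) {c r : ℝ}
    (hc : 0 < c) (hψ : ∀ p ∈ U, ∀ o ∈ N, ∀ y ∈ O, c ≤ ‖phaseSymbol X p o y‖) (hr : 0 < r)
    (hχU : ∀ p ∈ U, ∀ q, fderiv ℝ χ q ≠ 0 → r ≤ ‖p - q‖) (l : V) :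
    ∃ A > 0, ∀ p ∈ U, ∀ w ∈ directionCone N, ∀ k : ℕ,
      ‖FBIP (fun q => χ q * v q l) p w‖ ≤ A ^ (k + 1) * M k / enP w ^ k := by
  obtain ⟨D₁, hD₁⟩ := hU.exists_norm_le
  obtain ⟨D₂, hD₂⟩ := hN.exists_norm_le
  obtain ⟨C, h, hR⟩ := exists_inDCClassWith_inv_phaseSymbol hM S.isOpen_total hOb
    (fun i => hX (Sum.inl i)) (max D₁ D₂) hc
  obtain ⟨C₀, h₀, hF⟩ := InDCClass.exists_forall_inDCClassWith
    (e := prodDir (stdBasis d n)) hM Finset.univ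
    fun (J : Fin d ⊕ Fin n → (Fin d ⊕ Fin n) ⊕ V) _ =>
      (inDCClass_fibreCoord hM hOb l).pi_single hM Sum.inl J
  have hHaar : (volume : Measure (PSp d n)).IsAddHaarMeasure :=
    Measure.prod.instIsAddHaarMeasure (volume : Measure (Fin d → ℝ)) (volume : Measure (Fin n → ℝ))
  obtain ⟨A, hA, hdecay⟩ := S.exists_norm_phaseIntegral_le_div volume hM hX hχ hχc hχΩ C₀ C
    (max h h₀) (pow_pos hr 2)
  refine ⟨A, hA, fun p hp w hw k => ?_⟩
  have hlow := hψ p hp _ hw.2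
  rw [← phaseIntegral_single_eq_FBIP]
  refine hdecay _ _ (enP w) _ (contDiff_fbiPhase p w) (enP_pos hw.1)
    ((hR p _ ((hD₁ p hp).trans (le_max_left _ _)) ((hD₂ _ hw.2).trans (le_max_right _ _)) hlow).mono
      hM le_rfl (le_max_left _ _) le_rfl)
    (fun J => (hF J (Finset.mem_univ J)).mono hM le_rfl (le_max_right _ _) le_rfl)
    (fun q hq => ?_) (fun q _ => ?_) (fun q hq => ?_) k
  · rw [fieldDeriv_fbiPhase v hw.1, mul_assoc, mul_inv_cancel₀, mul_one]
    exact norm_pos_iff.1 (hc.trans_le (hlow _ (S.mapsTo q hq)))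
  · rw [norm_cexp_fbiPhase, Real.exp_le_one_iff, neg_nonpos]
    exact mul_nonneg (enP_nonneg w) (sq_nonneg _)
  · have hq' : fderiv ℝ χ q ≠ 0 := fun h0 => hq (by simp [fieldDeriv, h0])
    rw [norm_cexp_fbiPhase, Real.exp_le_exp, neg_le_neg_iff, mul_comm]
    exact mul_le_mul_of_nonneg_left
      (pow_le_pow_left₀ hr.le ((hχU p hp q hq').trans (norm_le_enP _)) 2) (enP_nonneg w)

theorem microlocallyRegularAt_of_le (S : IsTangentField (stdBasis d n) O Ω v X)
    (hM : IsWeightSequence M) (hOb : Bornology.IsBounded O)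
    (hX : ∀ m, InDCClass (prodDir (stdBasis d n)) O M (X m)) {p₀ w₀ : PSp d n} (hp₀ : p₀ ∈ Ω)
    (hw₀ : w₀ ≠ 0) {c δ : ℝ} (hc : 0 < c) (hδ : 0 < δ)
    (hψ : ∀ p ∈ Metric.ball p₀ δ, ∀ o ∈ Metric.ball ((enP w₀)⁻¹ • w₀) δ, ∀ y ∈ O,
      c ≤ ‖phaseSymbol X p o y‖) (l : V) :
    MicrolocallyRegularAt M Ω (fun q => v q l) p₀ w₀ := by
  obtain ⟨s, hs, hsΩ⟩ := Metric.isOpen_iff.1 (S.isOpen_base.inter Metric.isOpen_ball) p₀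
    ⟨hp₀, Metric.mem_ball_self hδ⟩
  have hhalf : Metric.closedBall p₀ (s / 2) ⊆ Ω ∩ Metric.ball p₀ δ :=
    (Metric.closedBall_subset_ball (half_lt_self hs)).trans hsΩ
  obtain ⟨χ, hχ, hχ₁, hχc, hχΩ⟩ := exists_contDiff_eventually_eq_one S.isOpen_base
    (isCompact_closedBall p₀ (s / 2)) (hhalf.trans Set.inter_subset_left)
  have hquarter : Metric.ball p₀ (s / 4) ⊆ Metric.closedBall p₀ (s / 2) :=
    Metric.ball_subset_closedBall.trans (Metric.closedBall_subset_closedBall (by linarith))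
  have hclosure : closure (Metric.ball p₀ (s / 4)) ⊆ Metric.closedBall p₀ (s / 2) :=
    closure_minimal hquarter Metric.isClosed_closedBall
  have hχℂ : ∀ᶠ q in 𝓝ˢ (Metric.closedBall p₀ (s / 2)), (χ q : ℂ) = 1 :=
    hχ₁.mono fun q hq => by rw [hq, Complex.ofReal_one]
  obtain ⟨A, hA, hdecay⟩ := S.exists_norm_FBIP_le hM hOb hX
    ((Complex.ofRealCLM.contDiff.comp hχ).of_le (by simp))
    (hχc.comp_left Complex.ofReal_zero) ((closure_mono fun q => by simp).trans hχΩ)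
    Metric.isBounded_ball Metric.isBounded_ball hc
    (fun p hp => hψ p (hhalf (hquarter hp)).2) (sub_pos.2 (by linarith))
    (fun p hp q => sub_le_norm_sub_of_fderiv_ne_zero hχℂ hp) l
  exact ⟨χ, hχ, hχc, hχΩ, ⟨interior {q | χ q = 1}, isOpen_interior, mem_interior_iff_mem_nhds.2
      (hχ₁.filter_mono (nhds_le_nhdsSet (Metric.mem_closedBall_self (by positivity)))),
      fun q hq => (interior_subset hq :)⟩,
    _, Metric.isOpen_ball, Metric.mem_ball_self (by positivity),
    (isCompact_closedBall _ _).of_isClosed_subset isClosed_closure hclosure,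
    hclosure.trans (hhalf.trans Set.inter_subset_left),
    _, isOpen_directionCone Metric.isOpen_ball, ⟨hw₀, Metric.mem_ball_self hδ⟩,
    fun w hw t ht => smul_mem_directionCone hw ht, fun w hw => hw.1, A, hA, hdecay⟩

theorem microlocallyRegularAt (S : IsTangentField (stdBasis d n) O Ω v X)
    (hM : IsWeightSequence M) (hOb : Bornology.IsBounded O)
    (hX : ∀ m, InDCClass (prodDir (stdBasis d n)) O M (X m)) {p₀ w₀ : PSp d n} (hp₀ : p₀ ∈ Ω)
    (hnc : ∑ i, X (Sum.inl i) (p₀, v p₀) * coordCLM i w₀ ≠ 0) (l : V) :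
    MicrolocallyRegularAt M Ω (fun q => v q l) p₀ w₀ := by
  have hw₀ : w₀ ≠ 0 := by
    rintro rfl
    simp at hnc
  have hψ₀ : phaseSymbol X p₀ ((enP w₀)⁻¹ • w₀) (p₀, v p₀) ≠ 0 := by
    rw [phaseSymbol_self_smul]
    exact mul_ne_zero (by simp [(enP_pos hw₀).ne']) hnc
  obtain ⟨δ, hδ, c, hc, hψ⟩ := exists_ball_le_norm_phaseSymbol
    (fun i => (S.contDiffOn (Sum.inl i)).continuousOn) S.isOpen_total (S.mapsTo p₀ hp₀) hψ₀
  have hO' : IsOpen (O ∩ Metric.ball (p₀, v p₀) δ) := S.isOpen_total.inter Metric.isOpen_ball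
  have S' := S.restrict hO' Set.inter_subset_left
  exact (S'.microlocallyRegularAt_of_le hM (hOb.subset Set.inter_subset_left)
    (fun m => (hX m).subset Set.inter_subset_left) ⟨hp₀, S.mapsTo p₀ hp₀, Metric.mem_ball_self hδ⟩
    hw₀ hc hδ (fun p hp o ho y hy => hψ p hp o ho y hy.2) l).mono Set.inter_subset_left

end IsTangentField

end Microlocal

theorem sum_jetField_mul_coordCLM {d n : ℕ} {f : PSp d n → ℂ → (Fin d → ℂ) → ℂ} {p : PSp d n}
    {z : Option (Fin d) → ℂ} (hf : Differentiable ℂ fun ζ : ℂ × (Fin d → ℂ) => f p ζ.1 ζ.2)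
    (hfd : DifferentiableAt ℝ (jetFun f) (p, z)) (j : Fin n) (w : PSp d n) :
    ∑ i, jetField f j (Sum.inl i) (p, z) * coordCLM i w = (w.2 j : ℂ) -
      ∑ k, fderiv ℂ (fun ζ : ℂ × (Fin d → ℂ) => f p ζ.1 ζ.2) (z none, fun k => z (some k))
        (0, Pi.single k 1) * (w.1 k : ℂ) := by
  simp [Fintype.sum_sum_type, jetField, coordCLM_inl, coordCLM_inr,
    dirDeriv_inr_some_jetFun hf hfd, neg_add_eq_sub]

theorem stmt18_general {d n : ℕ} {M : ℕ → ℝ} (hM : IsWeightSequence M) {Ω : Set (PSp d n)}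
    (hΩ : IsOpen Ω) {u : PSp d n → ℂ} (hu : ContDiffOn ℝ 2 u Ω)
    {f : PSp d n → ℂ → (Fin d → ℂ) → ℂ}
    (hfsm : ∀ (ζ₀ : ℂ) (ζ : Fin d → ℂ), ContDiffOn ℝ ∞ (fun p => f p ζ₀ ζ) Ω)
    (hfhol : ∀ p ∈ Ω, Differentiable ℂ fun ζ : ℂ × (Fin d → ℂ) => f p ζ.1 ζ.2)
    (hfCM : ∀ K : Set (PSp d n × ℂ × (Fin d → ℂ)), IsCompact K → K ⊆ Ω ×ˢ Set.univ →
      ∃ C > (0 : ℝ), ∀ (α : Fin d → ℕ) (β : Fin n → ℕ), ∀ q ∈ K,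
        ‖PDxt α β (fun p => f p q.2.1 q.2.2) q.1‖
          ≤ C ^ ((∑ i, α i) + (∑ i, β i) + 1) * M ((∑ i, α i) + (∑ i, β i)))
    {j : Fin n} (hPDE : ∀ p ∈ Ω, fderiv ℝ u p (0, Pi.single j 1) =
      f p (u p) fun k => fderiv ℝ u p (Pi.single k 1, 0))
    {p₀ : PSp d n} (hp₀ : p₀ ∈ Ω) {w₀ : PSp d n}
    (hnc : (w₀.2 j : ℂ) ≠ ∑ k, fderiv ℂ (fun ζ : ℂ × (Fin d → ℂ) => f p₀ ζ.1 ζ.2)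
      (u p₀, fun k => fderiv ℝ u p₀ (Pi.single k 1, 0)) (0, Pi.single k 1) * (w₀.1 k : ℂ)) :
    MicrolocallyRegularAt M Ω u p₀ w₀ := by
  obtain ⟨r, hr, hf⟩ := exists_inDCClass_jetFun hM hΩ hfsm hfhol hfCM
    (y₀ := (p₀, firstJet u p₀)) hp₀
  have hy₀ := Metric.mem_ball_self (x := (p₀, firstJet u p₀)) hr
  have hfd : DifferentiableAt ℝ (jetFun f) (p₀, firstJet u p₀) := by
    obtain ⟨_, _, hf'⟩ := hf
    exact differentiableAt_of_contDiffOn Metric.isOpen_ball (by simp) hf'.contDiffOn hy₀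
  refine ((isTangentField_jetField hM hΩ hu hPDE Metric.isOpen_ball
    Metric.isBounded_ball hf).microlocallyRegularAt hM
    Metric.isBounded_ball (inDCClass_jetField hM Metric.isOpen_ball Metric.isBounded_ball hf j)
    ⟨hp₀, hy₀⟩ ?_ none).mono Set.inter_subset_left
  rw [sum_jetField_mul_coordCLM (hfhol p₀ hp₀) hfd]
  exact sub_ne_zero.2 hnc

/-- Theorem 3.3: a `C²` solution `u` of the nonlinear system `∂u/∂t_j = f_j(x,t,u,u_x)`,
with `f_j` of class `C^𝓜` in `(x,t)` and holomorphic in `(ζ_0,ζ)`, is `𝓜`-microlocally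
regular at every point `(p_0,(ξ_0,τ_0))` that is noncharacteristic for the linearized
operators `L_j^u`, in the sense of Denjoy–Carleman decay of the F.B.I. transform. -/
theorem stmt18 (d n : ℕ) (M : ℕ → ℝ) (hreg : DCRegular M)
    (Ω : Set (PSp d n)) (hΩ : IsOpen Ω) (hΩ0 : (0 : PSp d n) ∈ Ω)
    (u : PSp d n → ℂ) (hu : ContDiffOn ℝ 2 u Ω)
    (f : Fin n → PSp d n → ℂ → (Fin d → ℂ) → ℂ)
    (hfsm : ∀ (j : Fin n) (ζ0 : ℂ) (ζ : Fin d → ℂ),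
      ContDiffOn ℝ (⊤ : ℕ∞) (fun p => f j p ζ0 ζ) Ω)
    (hfhol : ∀ (j : Fin n), ∀ p ∈ Ω,
      Differentiable ℂ (fun q : ℂ × (Fin d → ℂ) => f j p q.1 q.2))
    (hfCM : ∀ (j : Fin n) (K : Set (PSp d n × ℂ × (Fin d → ℂ))), IsCompact K →
      K ⊆ Ω ×ˢ (Set.univ : Set (ℂ × (Fin d → ℂ))) →
      ∃ C > (0 : ℝ), ∀ (α : Fin d → ℕ) (β : Fin n → ℕ), ∀ q ∈ K,
        ‖PDxt α β (fun p => f j p q.2.1 q.2.2) q.1‖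
          ≤ C ^ ((∑ i, α i) + (∑ i, β i) + 1) * M ((∑ i, α i) + (∑ i, β i)))
    (hPDE : ∀ p ∈ Ω, ∀ j : Fin n,
      fderiv ℝ u p ((0, Pi.single j (1 : ℝ)) : PSp d n) =
        f j p (u p) (fun k => fderiv ℝ u p ((Pi.single k (1 : ℝ), 0) : PSp d n)))
    (p0 : PSp d n) (hp0 : p0 ∈ Ω) (ξ0 : Fin d → ℝ) (τ0 : Fin n → ℝ)
    (hξτ0 : ¬(ξ0 = 0 ∧ τ0 = 0))
    (hnc : ∃ j : Fin n, ((τ0 j : ℝ) : ℂ) ≠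
      ∑ k, fderiv ℂ (fun q : ℂ × (Fin d → ℂ) => f j p0 q.1 q.2)
          (u p0, fun k' => fderiv ℝ u p0 ((Pi.single k' (1 : ℝ), 0) : PSp d n))
          ((0 : ℂ), Pi.single k (1 : ℂ)) * ((ξ0 k : ℝ) : ℂ)) :
    ∃ χ : PSp d n → ℝ, ContDiff ℝ (⊤ : ℕ∞) χ ∧ HasCompactSupport χ ∧ tsupport χ ⊆ Ω ∧
      (∃ W : Set (PSp d n), IsOpen W ∧ p0 ∈ W ∧ ∀ q ∈ W, χ q = 1) ∧
    ∃ UU : Set (PSp d n), IsOpen UU ∧ p0 ∈ UU ∧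
      IsCompact (closure UU) ∧ closure UU ⊆ Ω ∧
    ∃ Γ : Set (PSp d n), IsOpen Γ ∧ (ξ0, τ0) ∈ Γ ∧
      (∀ w ∈ Γ, ∀ s : ℝ, 0 < s → s • w ∈ Γ) ∧ (∀ w ∈ Γ, w ≠ 0) ∧
    ∃ A > (0 : ℝ), ∀ p ∈ UU, ∀ w ∈ Γ, ∀ k : ℕ,
      ‖FBIP (fun q => (χ q : ℂ) * u q) p w‖ ≤ A ^ (k + 1) * M k / (enP w) ^ k := by
  obtain ⟨j, hj⟩ := hnc
  exact stmt18_general hreg.isWeightSequence hΩ hu (hfsm j) (hfhol j) (hfCM j)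
    (fun p hp => hPDE p hp j) hp0 hj
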